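/- arXiv:1605.01024 — 5 statements merged into one kernel-verified Lean document; each statement's English description precedes it below -/
import Mathlib

section
/- Every semifilter on ω, regarded as a subspace of the Cantor space 2^ω, is homogeneous. -/
open Set

abbrev Cantor := ℕ → Bool

def UpwardClosed (S : Set Cantor) : Prop :=
  ∀ x ∈ S, ∀ y : Cantor, (∀ n, x n = true → y n = true) → y ∈ S

def DownwardClosed (R : Set Cantor) : Prop :=
  ∀ y ∈ R, ∀ x : Cantor, (∀ n, x n = true → y n = true) → x ∈ R

def ClosedUnderFinMod (S : Set Cantor) : Prop :=
  ∀ x ∈ S, ∀ y : Cantor, {n | x n ≠ y n}.Finite → y ∈ S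

def IsSemifilter (S : Set Cantor) : Prop :=
  (fun _ => false) ∉ S ∧ (fun _ => true) ∈ S ∧ UpwardClosed S ∧ ClosedUnderFinMod S

def IsSemiideal (R : Set Cantor) : Prop :=
  (fun _ => false) ∈ R ∧ (fun _ => true) ∉ R ∧ DownwardClosed R ∧ ClosedUnderFinMod R

def ClosedUnderInter (S : Set Cantor) : Prop :=
  ∀ x ∈ S, ∀ y ∈ S, (fun n => x n && y n) ∈ S

def IsFilterOnOmega (F : Set Cantor) : Prop := IsSemifilter F ∧ ClosedUnderInter F

def IsHomogeneous (X : Type*) [TopologicalSpace X] : Prop :=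
  ∀ x y : X, ∃ h : X ≃ₜ X, h x = y

def IsFsigma (A : Set Cantor) : Prop :=
  ∃ F : ℕ → Set Cantor, (∀ n, IsClosed (F n)) ∧ A = ⋃ n, F n

def DOmegaSigmaTwo (X : Set Cantor) : Prop :=
  ∃ A : ℕ → Set Cantor, (∀ n, IsFsigma (A n)) ∧ Monotone A ∧
    X = ⋃ n ∈ {n : ℕ | Odd n}, (A n \ ⋃ m < n, A m)

def InDelta (X : Set Cantor) : Prop := DOmegaSigmaTwo X ∧ DOmegaSigmaTwo Xᶜ

def WadgeLe (A B : Set Cantor) : Prop :=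
  ∃ f : Cantor → Cantor, Continuous f ∧ A = f ⁻¹' B

def WadgeEquiv (A B : Set Cantor) : Prop := WadgeLe A B ∧ WadgeLe B A

def CompletelyMetrizable (X : Type*) [t : TopologicalSpace X] : Prop :=
  ∃ m : MetricSpace X, m.toUniformSpace.toTopologicalSpace = t ∧
    @CompleteSpace X m.toUniformSpace

def FirstCategory (X : Type*) [TopologicalSpace X] : Prop :=
  ∃ f : ℕ → Set X, (∀ n, interior (closure (f n)) = ∅) ∧ (Set.univ : Set X) = ⋃ n, f n

def CantorFin : Set Cantor := {x | {n | x n = true}.Finite}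

def BorelSet (X : Set Cantor) : Prop := @MeasurableSet Cantor (borel Cantor) X

/-- Swap the branch `x` for the branch `y`, keeping the tail after leaving the branch. -/
def branchSwap (x y z : Cantor) : Cantor := fun k =>
  if (∀ j < k, z j = x j) then xor (z k) (xor (x k) (y k)) else z k

theorem branchSwap_agree (x y z : Cantor) (k : ℕ) :
    (∀ j < k, branchSwap x y z j = y j) ↔ (∀ j < k, z j = x j) := by
  induction k with
  | zero => simp
  | succ k ih =>
    rw [Nat.forall_lt_succ_right, Nat.forall_lt_succ_right, ih]
    refine and_congr_right fun h => ?_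
    unfold branchSwap
    rw [if_pos h]
    cases z k <;> cases x k <;> cases y k <;> simp

theorem branchSwap_inv (x y z : Cantor) : branchSwap y x (branchSwap x y z) = z := by
  funext k
  rw [branchSwap]
  simp only [branchSwap_agree]
  by_cases h : ∀ j < k, z j = x j
  · rw [if_pos h, branchSwap, if_pos h]
    cases z k <;> cases x k <;> cases y k <;> simp
  · rw [if_neg h, branchSwap, if_neg h]

theorem branchSwap_self (x y : Cantor) : branchSwap x y x = y := by
  funext k
  simp [branchSwap]

theorem branchSwap_continuous (x y : Cantor) : Continuous (branchSwap x y) := by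
  refine continuous_pi fun k => ?_
  rw [← IsLocallyConstant.iff_continuous, IsLocallyConstant.iff_eventually_eq]
  intro z
  have h : ∀ᶠ w in nhds z, ∀ j ∈ Finset.range (k + 1), w j = z j := by
    rw [Filter.eventually_all_finset]
    intro j _
    exact (continuous_apply j).continuousAt.eventually_mem
      ((isOpen_discrete ({z j} : Set Bool)).mem_nhds rfl)
  filter_upwards [h] with w hw
  have hk : w k = z k := hw k (by simp)
  have hj : (∀ j < k, w j = x j) ↔ (∀ j < k, z j = x j) :=
    forall₂_congr fun j hjk => by rw [hw j (by simp; omega)]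
  simp only [branchSwap, hj, hk]

theorem branchSwap_mem {S : Set Cantor} (hS : ClosedUnderFinMod S) {x y z : Cantor}
    (hy : y ∈ S) (hz : z ∈ S) : branchSwap x y z ∈ S := by
  by_cases h : z = x
  · rw [h, branchSwap_self]; exact hy
  · obtain ⟨n, hn⟩ := Function.ne_iff.mp h
    refine hS z hz _ ((Set.finite_Iic n).subset fun k hk => ?_)
    by_contra hkn
    refine hk ?_
    have : ¬ ∀ j < k, z j = x j := fun hh => hn (hh n (by simpa using hkn))
    rw [branchSwap, if_neg this]

/-- Every semifilter is homogeneous. -/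
theorem semifilter_homogeneous (S : Set Cantor) (hS : IsSemifilter S) :
    IsHomogeneous S := by
  intro x y
  have hF := hS.2.2.2
  refine ⟨{ toFun := fun z => ⟨branchSwap x y z, branchSwap_mem hF y.2 z.2⟩
            invFun := fun z => ⟨branchSwap y x z, branchSwap_mem hF x.2 z.2⟩
            left_inv := fun z => Subtype.ext (branchSwap_inv _ _ _)
            right_inv := fun z => Subtype.ext (branchSwap_inv _ _ _)
            continuous_toFun :=
              ((branchSwap_continuous _ _).comp continuous_subtype_val).subtype_mk _
            continuous_invFun :=
              ((branchSwap_continuous _ _).comp continuous_subtype_val).subtype_mk _ }, ?_⟩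
  exact Subtype.ext (branchSwap_self _ _)
end

section
/- Every Borel semifilter on ω, regarded as a subspace of the Cantor space 2^ω, is strongly homogeneous, i.e., every nonempty clopen subspace of it is homeomorphic to it. -/
open Set

/-- A game arena: a pruned tree of positions. -/
structure Arena where
  Pos : Type
  len : Pos → ℕ
  par : Pos → Pos
  len_par : ∀ p, len (par p) = len p - 1
  root : Pos
  len_root : len root = 0
  root_unique : ∀ p, len p = 0 → p = root
  ch : Pos → Pos
  par_ch : ∀ p, par (ch p) = p
  len_ch : ∀ p, len (ch p) = len p + 1

namespace Arena

variable {T S R : Arena}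

/-- `q` is a child of `p`. -/
def Child (T : Arena) (q p : T.Pos) : Prop := T.par q = p ∧ T.len q = T.len p + 1

theorem child_ch (p : T.Pos) : T.Child (T.ch p) p := ⟨T.par_ch p, T.len_ch p⟩

theorem child_par (q : T.Pos) (h : 0 < T.len q) : T.Child q (T.par q) :=
  ⟨rfl, by rw [T.len_par]; omega⟩

/-- The restriction of `p` to length `m`. -/
def res (T : Arena) (m : ℕ) (p : T.Pos) : T.Pos := T.par^[T.len p - m] p

theorem len_iter (n : ℕ) (p : T.Pos) : T.len (T.par^[n] p) = T.len p - n := by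
  induction n generalizing p with
  | zero => simp
  | succ n ih => rw [Function.iterate_succ_apply, ih, T.len_par]; omega

theorem len_res (m : ℕ) (p : T.Pos) : T.len (T.res m p) = min m (T.len p) := by
  rw [res, len_iter]; omega

theorem len_res_of_le {m : ℕ} {p : T.Pos} (h : m ≤ T.len p) : T.len (T.res m p) = m := by
  rw [len_res]; omega

theorem res_of_le {m : ℕ} {p : T.Pos} (h : T.len p ≤ m) : T.res m p = p := by
  rw [res, Nat.sub_eq_zero_of_le h]; rfl

theorem res_self (p : T.Pos) : T.res (T.len p) p = p := res_of_le le_rfl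

theorem res_res {m n : ℕ} (p : T.Pos) (h : m ≤ n) : T.res m (T.res n p) = T.res m p := by
  rcases le_total (T.len p) n with h1 | h1
  · rw [res_of_le h1]
  · rw [res, len_res_of_le h1, res, ← Function.iterate_add_apply, res]
    congr 1; omega

theorem res_par {m : ℕ} {p : T.Pos} (h : m < T.len p) : T.res m (T.par p) = T.res m p := by
  rw [res, res, T.len_par, ← Function.iterate_succ_apply]
  congr 1; omega

theorem par_res {m : ℕ} {p : T.Pos} (h : m < T.len p) : T.par (T.res (m+1) p) = T.res m p := by
  rw [res, res, ← Function.iterate_succ_apply' T.par]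
  congr 1; omega

theorem child_res {m : ℕ} {p : T.Pos} (h : m < T.len p) :
    T.Child (T.res (m+1) p) (T.res m p) :=
  ⟨par_res h, by rw [len_res_of_le h, len_res_of_le h.le]⟩

theorem Child.res {m : ℕ} {p q : T.Pos} (h : T.Child q p) (hm : m ≤ T.len p) :
    T.res m q = T.res m p := by
  have := h.2
  rw [← res_par (by omega), h.1]

theorem Child.len {p q : T.Pos} (h : T.Child q p) : T.len q = T.len p + 1 := h.2

/-- `q` extends `p`. -/
def Ext (T : Arena) (p q : T.Pos) : Prop := T.len p ≤ T.len q ∧ T.res (T.len p) q = p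

theorem Ext.refl (p : T.Pos) : T.Ext p p := ⟨le_rfl, res_self p⟩

theorem Ext.child {p q r : T.Pos} (h : T.Ext p q) (hr : T.Child r q) : T.Ext p r :=
  ⟨by have := h.1; have := hr.2; omega, by rw [hr.res h.1, h.2]⟩

theorem Ext.eq {p q : T.Pos} (h : T.Ext p q) (hr : T.len q ≤ T.len p) : q = p := by
  rw [← h.2, res_of_le hr]

theorem Ext.res {p q : T.Pos} {m : ℕ} (h : T.Ext p q) (hm : m ≤ T.len p) :
    T.res m p = T.res m q := by
  conv_lhs => rw [← h.2]
  exact res_res _ hm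

theorem ext_res {p : T.Pos} {m : ℕ} (hm : m ≤ T.len p) : T.Ext (T.res m p) p :=
  ⟨by rw [len_res_of_le hm]; exact hm, by rw [len_res_of_le hm]⟩

theorem ext_res_right {p q : T.Pos} {m : ℕ} (h : T.Ext p q) (hm : T.len p ≤ m) :
    T.Ext p (T.res m q) :=
  ⟨by rw [len_res]; have := h.1; omega, by rw [res_res _ hm, h.2]⟩

theorem Ext.par_right {p q : T.Pos} (h : T.Ext p q) (hl : T.len p < T.len q) :
    T.Ext p (T.par q) :=
  ⟨by rw [T.len_par]; omega, by rw [res_par hl, h.2]⟩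

theorem Ext.par_left {p q : T.Pos} (h : T.Ext p q) : T.Ext (T.par p) q := by
  rcases Nat.eq_zero_or_pos (T.len p) with h0 | h0
  · have h1 : T.par p = p := by
      rw [T.root_unique p h0]; apply T.root_unique; rw [T.len_par, T.len_root]
    rwa [h1]
  · refine ⟨by rw [T.len_par]; have := h.1; omega, ?_⟩
    rw [← h.res (by rw [T.len_par]; omega), T.len_par, ← res_par (by omega),
      res_of_le (by rw [T.len_par])]

theorem Ext.trans {p q r : T.Pos} (h : T.Ext p q) (h' : T.Ext q r) : T.Ext p r :=
  ⟨h.1.trans h'.1, by rw [← h'.res h.1, h.2]⟩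

/-- Infinite plays. -/
structure Play (T : Arena) where
  pos : ℕ → T.Pos
  len_pos : ∀ n, T.len (pos n) = n
  par_pos : ∀ n, T.par (pos (n+1)) = pos n

instance : CoeFun (Play T) (fun _ => ℕ → T.Pos) := ⟨Play.pos⟩

@[ext] theorem Play.ext {x y : Play T} (h : ∀ n, x n = y n) : x = y := by
  cases x; cases y; congr; funext n; exact h n

theorem Play.child (x : Play T) (n : ℕ) : T.Child (x (n+1)) (x n) :=
  ⟨x.par_pos n, by rw [x.len_pos, x.len_pos]⟩

theorem Play.res (x : Play T) {m n : ℕ} (h : m ≤ n) : T.res m (x n) = x m := by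
  induction n, h using Nat.le_induction with
  | base => exact res_of_le (by rw [x.len_pos])
  | succ n hn ih => rw [(x.child n).res (by rw [x.len_pos]; exact hn), ih]

theorem Play.ext_pos (x : Play T) {m n : ℕ} (h : m ≤ n) : T.Ext (x m) (x n) :=
  ⟨by simpa [x.len_pos] using h, by rw [x.len_pos, x.res h]⟩

/-- A strategy chooses a child of each position. -/
structure Strat (T : Arena) where
  mv : T.Pos → T.Pos
  child : ∀ p, T.Child (mv p) p

instance : CoeFun (Strat T) (fun _ => T.Pos → T.Pos) := ⟨Strat.mv⟩

/-- The player to move at length `n`. -/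
def mover (n : ℕ) : Bool := decide (Even n)

/-- The play follows the strategy of player `pl`. -/
def Play.Cons (x : Play T) (pl : Bool) (s : T.Pos → T.Pos) : Prop :=
  ∀ n, mover n = pl → x (n+1) = s (x n)

/-- Maps of arenas. -/
structure Hom (S T : Arena) where
  map : S.Pos → T.Pos
  len_map : ∀ p, T.len (map p) = S.len p
  par_map : ∀ p, T.par (map p) = map (S.par p)

instance : CoeFun (Hom S T) (fun _ => S.Pos → T.Pos) := ⟨Hom.map⟩

theorem Hom.child (f : Hom S T) {p q : S.Pos} (h : S.Child q p) : T.Child (f q) (f p) :=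
  ⟨by rw [f.par_map, h.1], by rw [f.len_map, f.len_map, h.2]⟩

/-- Image of a play. -/
def Hom.play (f : Hom S T) (x : Play S) : Play T where
  pos n := f (x n)
  len_pos n := by rw [f.len_map, x.len_pos]
  par_pos n := by rw [f.par_map, x.par_pos]

@[simp] theorem Hom.play_apply (f : Hom S T) (x : Play S) (n : ℕ) : f.play x n = f (x n) := rfl

/-- Identity. -/
def Hom.id (T : Arena) : Hom T T := ⟨fun p => p, fun _ => rfl, fun _ => rfl⟩

/-- Composition. -/
def Hom.comp (f : Hom S T) (g : Hom R S) : Hom R T where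
  map p := f (g p)
  len_map p := by rw [f.len_map, g.len_map]
  par_map p := by rw [f.par_map, g.par_map]

/-- Coverings. -/
structure Cov (k : ℕ) (S T : Arena) where
  f : Hom S T
  bij : ∀ q : T.Pos, T.len q ≤ k → ∃! p, f p = q
  phi : Bool → Strat S → Strat T
  phi_local : ∀ (pl : Bool) (s s' : Strat S) (n : ℕ), (∀ p, S.len p < n → s p = s' p) →
    ∀ p, T.len p < n → phi pl s p = phi pl s' p
  phi_agree : ∀ (pl : Bool) (s : Strat S) (p : S.Pos), S.len p + 1 ≤ k →
    phi pl s (f p) = f (s p)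
  lift : ∀ (pl : Bool) (s : Strat S) (x : Play T), x.Cons pl (phi pl s) →
    ∃ y : Play S, y.Cons pl s ∧ f.play y = x

/-- Identity covering. -/
def Cov.id (k : ℕ) (T : Arena) : Cov k T T where
  f := Hom.id T
  bij q _ := ⟨q, rfl, fun _ h => h⟩
  phi _ s := s
  phi_local _ _ _ _ h := h
  phi_agree _ _ _ _ := rfl
  lift _ _ x hx := ⟨x, hx, rfl⟩

/-- Composition of coverings. -/
def Cov.comp {k : ℕ} (C : Cov k S T) (D : Cov k R S) : Cov k R T where
  f := C.f.comp D.f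
  bij q hq := by
    obtain ⟨p, hp, hu⟩ := C.bij q hq
    obtain ⟨r, hr, hv⟩ := D.bij p (by rw [← C.f.len_map, hp]; exact hq)
    refine ⟨r, ?_, ?_⟩
    · change C.f (D.f r) = q
      rw [hr, hp]
    · intro r' h'
      exact hv _ (hu _ h')
  phi pl s := C.phi pl (D.phi pl s)
  phi_local pl s s' n h := C.phi_local pl _ _ n (D.phi_local pl s s' n h)
  phi_agree pl s p hp := by
    change C.phi pl (D.phi pl s) (C.f (D.f p)) = C.f (D.f (s p))
    rw [C.phi_agree _ _ _ (by rw [D.f.len_map]; exact hp), D.phi_agree _ _ _ hp]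
  lift pl s x hx := by
    obtain ⟨y, hy, rfl⟩ := C.lift pl _ x hx
    obtain ⟨z, hz, rfl⟩ := D.lift pl _ y hy
    exact ⟨z, hz, rfl⟩

/-- Weakening of coverings. -/
def Cov.mono {k k' : ℕ} (h : k ≤ k') (C : Cov k' S T) : Cov k S T where
  f := C.f
  bij q hq := C.bij q (hq.trans h)
  phi := C.phi
  phi_local := C.phi_local
  phi_agree pl s p hp := C.phi_agree pl s p (hp.trans h)
  lift := C.lift

/-- Combinatorially open sets of plays. -/
def POpen (A : Set (Play T)) : Prop := ∃ O : Set T.Pos, ∀ x : Play T, x ∈ A ↔ ∃ n, x n ∈ O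

/-- Combinatorially clopen sets of plays. -/
def PClopen (A : Set (Play T)) : Prop := POpen A ∧ POpen Aᶜ

theorem POpen.preimage (f : Hom S T) {A : Set (Play T)} (h : POpen A) :
    POpen (f.play ⁻¹' A) := by
  obtain ⟨O, hO⟩ := h
  exact ⟨f.map ⁻¹' O, fun x => by rw [mem_preimage, hO]; rfl⟩

theorem PClopen.preimage (f : Hom S T) {A : Set (Play T)} (h : PClopen A) :
    PClopen (f.play ⁻¹' A) := ⟨h.1.preimage f, h.2.preimage f⟩

theorem POpen.iUnion {ι : Type*} {A : ι → Set (Play T)} (h : ∀ i, POpen (A i)) :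
    POpen (⋃ i, A i) := by
  choose O hO using h
  refine ⟨⋃ i, O i, fun x => ?_⟩
  simp only [mem_iUnion, hO]
  exact exists_comm

/-- Witnesses for winning regions. -/
def WinWit (T : Arena) (pl : Bool) (Z Tg D : Set T.Pos) (r : T.Pos → Ordinal.{0}) : Prop :=
  D ⊆ Z ∧ ∀ q ∈ D, q ∉ Tg →
    (mover (T.len q) = pl → ∃ c ∈ D, T.Child c q ∧ r c < r q) ∧
    (mover (T.len q) ≠ pl → ∀ c, T.Child c q → c ∈ D ∧ r c < r q)

theorem exists_winWit (T : Arena) (pl : Bool) (Z Tg : Set T.Pos) :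
    ∃ D r, WinWit T pl Z Tg D r ∧ ∀ D' r', WinWit T pl Z Tg D' r' → D' ⊆ D := by
  classical
  let D : Set T.Pos := {p | ∃ D' r', WinWit T pl Z Tg D' r' ∧ p ∈ D'}
  let rk : T.Pos → Ordinal.{0} := fun p => sInf {o | ∃ D' r', WinWit T pl Z Tg D' r' ∧ p ∈ D' ∧ r' p = o}
  have hle : ∀ D' r', WinWit T pl Z Tg D' r' → ∀ p ∈ D', rk p ≤ r' p :=
    fun D' r' h p hp => csInf_le' ⟨D', r', h, hp, rfl⟩
  refine ⟨D, rk, ⟨?_, ?_⟩, fun D' r' h p hp => ⟨D', r', h, hp⟩⟩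
  · rintro p ⟨D', r', h, hp⟩
    exact h.1 hp
  · rintro q ⟨D₀, r₀, h₀, hq₀⟩ hqT
    have hne : {o | ∃ D' r', WinWit T pl Z Tg D' r' ∧ q ∈ D' ∧ r' q = o}.Nonempty :=
      ⟨_, D₀, r₀, h₀, hq₀, rfl⟩
    obtain ⟨D', r', h, hq, hr⟩ := csInf_mem hne
    change r' q = rk q at hr
    refine ⟨fun hm => ?_, fun hm c hc => ?_⟩
    · obtain ⟨c, hc, hcq, hlt⟩ := (h.2 q hq hqT).1 hm
      exact ⟨c, ⟨D', r', h, hc⟩, hcq, (hle D' r' h c hc).trans_lt (hr ▸ hlt)⟩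
    · obtain ⟨hcD, hlt⟩ := (h.2 q hq hqT).2 hm c hc
      exact ⟨⟨D', r', h, hcD⟩, (hle D' r' h c hcD).trans_lt (hr ▸ hlt)⟩

theorem exists_win (T : Arena) (pl : Bool) (Z Tg : Set T.Pos) :
    ∃ (W : Set T.Pos) (s : Strat T), W ⊆ Z ∧ (∀ p ∈ Z, p ∈ Tg → p ∈ W) ∧
      (∀ p ∈ Z, mover (T.len p) = pl → ∀ c, T.Child c p → c ∈ W → p ∈ W) ∧
      (∀ p ∈ Z, mover (T.len p) ≠ pl → (∀ c, T.Child c p → c ∈ W) → p ∈ W) ∧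
      (∀ p ∈ W, p ∉ Tg → mover (T.len p) = pl → s p ∈ W) ∧
      (∀ p ∈ W, p ∉ Tg → mover (T.len p) ≠ pl → ∀ c, T.Child c p → c ∈ W) ∧
      (∀ (x : Play T) (n : ℕ), x n ∈ W →
        (∀ m, n ≤ m → x m ∈ W → x m ∉ Tg → mover m = pl → x (m+1) = s (x m)) →
        ∃ m, n ≤ m ∧ x m ∈ Tg) := by
  classical
  obtain ⟨D, r, ⟨hDZ, hD⟩, hmax⟩ := exists_winWit T pl Z Tg
  have hbd : BddAbove (range r) := Ordinal.bddAbove_of_small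
  let r' (p : T.Pos) : T.Pos → Ordinal.{0} := Function.update r p (sSup (range r) + 1)
  have hadd : ∀ p ∈ Z, (p ∉ Tg → (mover (T.len p) = pl → ∃ c ∈ D, T.Child c p) ∧
      (mover (T.len p) ≠ pl → ∀ c, T.Child c p → c ∈ D)) → p ∈ D := by
    intro p hpZ h
    by_contra hpD
    have hrr : ∀ c ∈ D, r' p c = r c := fun c hc => by
      simp only [r']; rw [Function.update_of_ne]; rintro rfl; exact hpD hc
    have hrp : ∀ c ∈ D, r' p c < r' p p := fun c hc => by
      rw [hrr c hc]
      simp only [r', Function.update_self]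
      exact Order.lt_add_one_iff.2 (le_csSup hbd ⟨c, rfl⟩)
    refine hpD (hmax (insert p D) (r' p) ⟨insert_subset hpZ hDZ, ?_⟩ (mem_insert _ _))
    rintro q (rfl | hq) hqT
    · refine ⟨fun hm => ?_, fun hm c hc => ?_⟩
      · obtain ⟨c, hc, hcq⟩ := (h hqT).1 hm
        exact ⟨c, Or.inr hc, hcq, hrp c hc⟩
      · have := (h hqT).2 hm c hc
        exact ⟨Or.inr this, hrp c this⟩
    · refine ⟨fun hm => ?_, fun hm c hc => ?_⟩
      · obtain ⟨c, hc, hcq, hlt⟩ := (hD q hq hqT).1 hm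
        exact ⟨c, Or.inr hc, hcq, by rwa [hrr c hc, hrr q hq]⟩
      · obtain ⟨hc, hlt⟩ := (hD q hq hqT).2 hm c hc
        exact ⟨Or.inr hc, by rwa [hrr c hc, hrr q hq]⟩
  have hs : ∀ p, ∃ c, T.Child c p ∧ (p ∈ D → p ∉ Tg → mover (T.len p) = pl → c ∈ D ∧ r c < r p) := by
    intro p
    by_cases h : p ∈ D ∧ p ∉ Tg ∧ mover (T.len p) = pl
    · obtain ⟨c, hc, hcq, hlt⟩ := (hD p h.1 h.2.1).1 h.2.2
      exact ⟨c, hcq, fun _ _ _ => ⟨hc, hlt⟩⟩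
    · exact ⟨T.ch p, child_ch p, fun h1 h2 h3 => absurd ⟨h1, h2, h3⟩ h⟩
  choose s hsc hs using hs
  refine ⟨D, ⟨s, hsc⟩, hDZ, fun p hp hT => hadd p hp (fun h => absurd hT h),
    fun p hp hm c hc hcD => hadd p hp (fun _ => ⟨fun _ => ⟨c, hcD, hc⟩, fun h => absurd hm h⟩),
    fun p hp hm hc => hadd p hp (fun _ => ⟨fun h => absurd h hm, fun _ => hc⟩),
    fun p hp hT hm => (hs p hp hT hm).1, fun p hp hT hm c hc => ((hD p hp hT).2 hm c hc).1, ?_⟩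
  intro x n hn hx
  by_contra! hcon
  have key : ∀ m, n ≤ m → x m ∈ D → x (m+1) ∈ D ∧ r (x (m+1)) < r (x m) := by
    intro m hm hmD
    by_cases hmv : mover m = pl
    · rw [hx m hm hmD (hcon m hm) hmv]
      exact hs _ hmD (hcon m hm) (by rw [x.len_pos]; exact hmv)
    · exact (hD _ hmD (hcon m hm)).2 (by rw [x.len_pos]; exact hmv) _ (x.child m)
  have hall : ∀ j, x (n + j) ∈ D := by
    intro j
    induction j with
    | zero => exact hn
    | succ j ih => exact (key (n+j) (by omega) ih).1
  have hanti : StrictAnti (fun j => r (x (n + j))) :=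
    strictAnti_nat_of_succ_lt (fun j => (key (n+j) (by omega) (hall j)).2)
  exact (RelEmbedding.natGT _ (fun j => hanti (Nat.lt_succ_self j))).not_wellFounded wellFounded_lt

/-- The winning region. -/
noncomputable def winSet (T : Arena) (pl : Bool) (Z Tg : Set T.Pos) : Set T.Pos :=
  (exists_win T pl Z Tg).choose

/-- The strategy on the winning region. -/
noncomputable def winStrat (T : Arena) (pl : Bool) (Z Tg : Set T.Pos) : Strat T :=
  (exists_win T pl Z Tg).choose_spec.choose

section
variable (pl : Bool) (Z Tg : Set T.Pos)

theorem win_sub : winSet T pl Z Tg ⊆ Z := (exists_win T pl Z Tg).choose_spec.choose_spec.1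

theorem win_tg {p : T.Pos} (hp : p ∈ Z) (h : p ∈ Tg) : p ∈ winSet T pl Z Tg :=
  (exists_win T pl Z Tg).choose_spec.choose_spec.2.1 p hp h

theorem win_mine {p c : T.Pos} (hp : p ∈ Z) (hm : mover (T.len p) = pl) (hc : T.Child c p)
    (h : c ∈ winSet T pl Z Tg) : p ∈ winSet T pl Z Tg :=
  (exists_win T pl Z Tg).choose_spec.choose_spec.2.2.1 p hp hm c hc h

theorem win_opp {p : T.Pos} (hp : p ∈ Z) (hm : mover (T.len p) ≠ pl)
    (h : ∀ c, T.Child c p → c ∈ winSet T pl Z Tg) : p ∈ winSet T pl Z Tg :=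
  (exists_win T pl Z Tg).choose_spec.choose_spec.2.2.2.1 p hp hm h

theorem win_stay_mine {p : T.Pos} (hp : p ∈ winSet T pl Z Tg) (hT : p ∉ Tg)
    (hm : mover (T.len p) = pl) : winStrat T pl Z Tg p ∈ winSet T pl Z Tg :=
  (exists_win T pl Z Tg).choose_spec.choose_spec.2.2.2.2.1 p hp hT hm

theorem win_stay_opp {p c : T.Pos} (hp : p ∈ winSet T pl Z Tg) (hT : p ∉ Tg)
    (hm : mover (T.len p) ≠ pl) (hc : T.Child c p) : c ∈ winSet T pl Z Tg :=
  (exists_win T pl Z Tg).choose_spec.choose_spec.2.2.2.2.2.1 p hp hT hm c hc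

theorem win_reach (x : Play T) (n : ℕ) (hx : x n ∈ winSet T pl Z Tg)
    (hs : ∀ m, n ≤ m → x m ∈ winSet T pl Z Tg → x m ∉ Tg → mover m = pl →
      x (m+1) = winStrat T pl Z Tg (x m)) : ∃ m, n ≤ m ∧ x m ∈ Tg :=
  (exists_win T pl Z Tg).choose_spec.choose_spec.2.2.2.2.2.2 x n hx hs

end

/-- Determinacy of a set of plays: `true` wants to get into `A`. -/
def Det (A : Set (Play T)) : Prop :=
  (∃ s : Strat T, ∀ x : Play T, x.Cons true s → x ∈ A) ∨
  (∃ s : Strat T, ∀ x : Play T, x.Cons false s → x ∉ A)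

theorem gale_stewart {A : Set (Play T)} (h : POpen A) : Det A := by
  classical
  obtain ⟨O, hO⟩ := h
  by_cases hr : T.root ∈ winSet T true univ O
  · left
    refine ⟨winStrat T true univ O, fun x hx => ?_⟩
    rw [hO]
    obtain ⟨m, -, hm⟩ := win_reach true univ O x 0
      (by rwa [T.root_unique (x 0) (x.len_pos 0)]) (fun m _ _ _ hm => hx m hm)
    exact ⟨m, hm⟩
  · right
    have hs : ∀ p, ∃ c, T.Child c p ∧ (p ∉ winSet T true univ O → mover (T.len p) = false →
        c ∉ winSet T true univ O) := by
      intro p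
      by_cases h : ∃ c, T.Child c p ∧ c ∉ winSet T true univ O
      · obtain ⟨c, h1, h2⟩ := h
        exact ⟨c, h1, fun _ _ => h2⟩
      · push Not at h
        refine ⟨T.ch p, child_ch p, fun h1 h2 => ?_⟩
        exact absurd (win_opp true univ O (mem_univ p) (by simp [h2]) h) h1
    choose s hsc hs using hs
    refine ⟨⟨s, hsc⟩, fun x hx => ?_⟩
    rw [hO]
    rintro ⟨n, hn⟩
    have : ∀ m, x m ∉ winSet T true univ O := by
      intro m
      induction m with
      | zero => rwa [T.root_unique (x 0) (x.len_pos 0)]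
      | succ m ih =>
        cases hm : mover m with
        | true =>
          intro h
          exact ih (win_mine true univ O (mem_univ _) (by rw [x.len_pos, hm]) (x.child m) h)
        | false =>
          rw [hx m hm]
          exact hs _ ih (by rw [x.len_pos, hm])
    exact this n (win_tg true univ O (mem_univ _) hn)

theorem Det.of_cov {k : ℕ} (C : Cov k S T) {A : Set (Play T)} (h : Det (C.f.play ⁻¹' A)) :
    Det A := by
  rcases h with ⟨s, hs⟩ | ⟨s, hs⟩
  · left
    refine ⟨C.phi true s, fun x hx => ?_⟩
    obtain ⟨y, hy, rfl⟩ := C.lift true s x hx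
    exact hs y hy
  · right
    refine ⟨C.phi false s, fun x hx => ?_⟩
    obtain ⟨y, hy, rfl⟩ := C.lift false s x hx
    exact hs y hy

end Arena

namespace Arena
variable {T : Arena}

/-- Auxiliary data of the unravelled tree. -/
inductive CData (P : Type) where
  | zero : CData P
  | one (Z : Set P) : CData P
  | two (Z : Set P) (q : P) : CData P
  | three (Z Z' : Set P) : CData P

namespace CData
/-- First quasistrategy. -/
def sig {P : Type} : CData P → Set P
  | zero => ∅
  | one Z => Z
  | two Z _ => Z
  | three Z _ => Z

/-- Second quasistrategy. -/
def sig2 {P : Type} : CData P → Set P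
  | three _ Z' => Z'
  | _ => ∅

/-- Is it of the third type. -/
def isThree {P : Type} : CData P → Prop
  | three _ _ => True
  | _ => False
end CData

/-- Legal quasistrategies for player `true`. -/
structure LI (T : Arena) (p : T.Pos) (Z : Set T.Pos) : Prop where
  mem : p ∈ Z
  ext : ∀ q ∈ Z, T.Ext p q
  pre : ∀ q ∈ Z, T.len p < T.len q → T.par q ∈ Z
  two : ∀ q ∈ Z, mover (T.len q) = false → ∀ c, T.Child c q → c ∈ Z
  one : ∀ q ∈ Z, mover (T.len q) = true → ∃ c ∈ Z, T.Child c q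

/-- Legal quasistrategies for player `false`. -/
structure LII (T : Arena) (bad : Set T.Pos) (r : T.Pos) (Z Z' : Set T.Pos) : Prop where
  mem : r ∈ Z'
  sub : Z' ⊆ Z
  nb : ∀ q ∈ Z', q ∉ bad
  ext : ∀ q ∈ Z', T.Ext r q
  pre : ∀ q ∈ Z', T.len r < T.len q → T.par q ∈ Z'
  one : ∀ q ∈ Z', mover (T.len q) = true → ∀ c ∈ Z, T.Child c q → c ∈ Z'
  two : ∀ q ∈ Z', mover (T.len q) = false → ∃ c ∈ Z', T.Child c q

theorem LI.pre' {p : T.Pos} {Z : Set T.Pos} (h : LI T p Z) {q : T.Pos} (hq : q ∈ Z) (m : ℕ)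
    (hm : T.len p ≤ m) : T.res m q ∈ Z := by
  rcases le_total (T.len q) m with h1 | h1
  · rwa [res_of_le h1]
  · obtain ⟨j, hj⟩ := Nat.exists_eq_add_of_le h1
    induction j generalizing m with
    | zero => rwa [res_of_le (by omega)]
    | succ j ih =>
      have h2 := ih (m+1) (by omega) (by omega) (by omega)
      rw [← par_res (by omega)]
      exact h.pre _ h2 (by rw [len_res_of_le (by omega)]; omega)

/-- Legal positions in the unravelled tree. -/
def Legal (bad : Set T.Pos) (k : ℕ) (p : T.Pos) : CData T.Pos → Prop
  | .zero => T.len p ≤ k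
  | .one Z => T.len p = k + 1 ∧ LI T p Z
  | .two Z q => k + 2 ≤ T.len p ∧ LI T (T.res (k+1) p) Z ∧ q ∈ Z ∧ q ∈ bad ∧ k + 2 ≤ T.len q ∧
      (T.Ext p q ∨ T.Ext q p)
  | .three Z Z' => k + 2 ≤ T.len p ∧ LI T (T.res (k+1) p) Z ∧ LII T bad (T.res (k+2) p) Z Z' ∧
      p ∈ Z'

open Classical in
/-- Parent data. -/
noncomputable def pd (k n : ℕ) (d : CData T.Pos) : CData T.Pos :=
  if n ≤ k + 1 then .zero else if n = k + 2 then .one d.sig else d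

section
variable {bad : Set T.Pos} {k : ℕ} {p : T.Pos} {d : CData T.Pos}

theorem legal_le (h : Legal bad k p d) (hk : T.len p ≤ k) : d = .zero := by
  cases d with
  | zero => rfl
  | one Z => have := h.1; omega
  | two Z q => have := h.1; omega
  | three Z Z' => have := h.1; omega

theorem legal_k1 (h : Legal bad k p d) (hk : T.len p = k + 1) : d = .one d.sig ∧ LI T p d.sig := by
  cases d with
  | zero => have : T.len p ≤ k := h
            omega
  | one Z => exact ⟨rfl, h.2⟩
  | two Z q => have := h.1; omega
  | three Z Z' => have := h.1; omega

theorem legal_par (h : Legal bad k p d) : Legal bad k (T.par p) (pd k (T.len p) d) := by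
  unfold pd
  split_ifs with h1 h2
  · change T.len (T.par p) ≤ k
    rw [T.len_par]; omega
  · have h3 : T.par p = T.res (k+1) p := by
      rw [← par_res (by omega), res_of_le (by omega)]
    have h4 : T.len (T.par p) = k + 1 := by rw [T.len_par]; omega
    refine ⟨h4, ?_⟩
    rw [h3]
    cases d with
    | zero => have : T.len p ≤ k := h
              omega
    | one Z => have := h.1; omega
    | two Z q => exact h.2.1
    | three Z Z' => exact h.2.1
  · have h4 : k + 2 ≤ T.len (T.par p) := by rw [T.len_par]; omega
    have e1 : T.res (k+1) (T.par p) = T.res (k+1) p := res_par (by omega)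
    have e2 : T.res (k+2) (T.par p) = T.res (k+2) p := res_par (by omega)
    cases d with
    | zero => have : T.len p ≤ k := h
              omega
    | one Z => have := h.1; omega
    | two Z q =>
      obtain ⟨_, h6, h7, h8, h9, h10⟩ := h
      refine ⟨h4, by rwa [e1], h7, h8, h9, ?_⟩
      rcases h10 with h10 | h10
      · exact Or.inl h10.par_left
      · rcases h10.1.lt_or_eq with h11 | h11
        · exact Or.inr (h10.par_right h11)
        · left
          rw [← h10.eq (by omega)]
          exact (Ext.refl p).par_left
    | three Z Z' =>
      obtain ⟨_, h6, h7, h8⟩ := h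
      refine ⟨h4, by rwa [e1], by rwa [e2], h7.pre _ h8 ?_⟩
      rw [len_res_of_le] <;> omega

theorem legal_child (hk : Even k) (h : Legal bad k p d) :
    ∃ p' d', T.Child p' p ∧ Legal bad k p' d' ∧ pd k (T.len p') d' = d := by
  cases d with
  | zero =>
    have h0 : T.len p ≤ k := h
    rcases h0.lt_or_eq with h1 | h1
    · refine ⟨T.ch p, .zero, child_ch p, ?_, ?_⟩
      · change T.len _ ≤ k
        rw [T.len_ch]; omega
      · rw [pd, if_pos]; rw [T.len_ch]; omega
    · refine ⟨T.ch p, .one {q | T.Ext (T.ch p) q}, child_ch p, ⟨by rw [T.len_ch]; omega, ?_⟩, ?_⟩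
      · refine ⟨Ext.refl _, fun q hq => hq, fun q hq hl => Ext.par_right hq hl,
          fun q hq _ c hc => Ext.child hq hc, fun q hq _ => ⟨T.ch q, Ext.child hq (child_ch q), child_ch q⟩⟩
      · rw [pd, if_pos]; rw [T.len_ch]; omega
  | one Z =>
    obtain ⟨h1, h2⟩ := h
    have hc := child_ch p
    have hl : T.len (T.ch p) = k + 2 := by rw [T.len_ch]; omega
    have hm : mover (T.len p) = false := by
      rw [h1, mover]; simp [Nat.even_add_one, hk]
    have e1 : T.res (k+1) (T.ch p) = p := by rw [hc.res (by omega), res_of_le (by omega)]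
    have e2 : T.res (k+2) (T.ch p) = T.ch p := res_of_le (by omega)
    have hcZ : T.ch p ∈ Z := h2.two p h2.mem hm _ hc
    by_cases hb : ∃ q ∈ Z, q ∈ bad ∧ T.Ext (T.ch p) q
    · obtain ⟨q, hq, hqb, hqe⟩ := hb
      refine ⟨T.ch p, .two Z q, hc, ⟨hl.ge, by rwa [e1], hq, hqb, by rw [← hl]; exact hqe.1, Or.inl hqe⟩, ?_⟩
      rw [pd, if_neg (by omega), if_pos hl]; rfl
    · push Not at hb
      refine ⟨T.ch p, .three Z {q | q ∈ Z ∧ T.Ext (T.ch p) q}, hc,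
        ⟨hl.ge, by rwa [e1], ?_, hcZ, Ext.refl _⟩, ?_⟩
      · rw [e2]
        refine ⟨⟨hcZ, Ext.refl _⟩, fun q hq => hq.1, fun q hq hqb => hb q hq.1 hqb hq.2,
          fun q hq => hq.2, fun q hq hlt => ⟨h2.pre q hq.1 (by omega), Ext.par_right hq.2 hlt⟩,
          fun q hq _ c hc hcq => ⟨hc, hq.2.child hcq⟩,
          fun q hq hmq => ⟨T.ch q, ⟨h2.two q hq.1 hmq _ (child_ch q), hq.2.child (child_ch q)⟩, child_ch q⟩⟩
      · rw [pd, if_neg (by omega), if_pos hl]; rfl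
  | two Z q =>
    obtain ⟨h1, h2, h3, h4, h5, h6⟩ := h
    have : ∃ p', T.Child p' p ∧ (T.Ext p' q ∨ T.Ext q p') := by
      by_cases h7 : T.len p < T.len q
      · have h8 : T.Ext p q := h6.resolve_right (fun h => by have := h.1; omega)
        refine ⟨T.res (T.len p + 1) q, ?_, Or.inl (ext_res h7)⟩
        have := child_res h7
        rwa [h8.2] at this
      · refine ⟨T.ch p, child_ch p, Or.inr (Ext.child ?_ (child_ch p))⟩
        rcases h6 with h6 | h6
        · rw [h6.eq (by omega)]; exact Ext.refl _
        · exact h6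
    obtain ⟨p', hp', he⟩ := this
    have hl := hp'.len
    refine ⟨p', .two Z q, hp', ⟨by omega, ?_, h3, h4, h5, he⟩, ?_⟩
    · rwa [hp'.res (by omega)]
    · rw [pd, if_neg (by omega), if_neg (by omega)]
  | three Z Z' =>
    obtain ⟨h1, h2, h3, h4⟩ := h
    have hp : p ∈ Z := h3.sub h4
    have : ∃ p' ∈ Z', T.Child p' p := by
      cases hm : mover (T.len p) with
      | false => exact h3.two p h4 hm
      | true =>
        obtain ⟨c, hc, hcp⟩ := h2.one p hp hm
        exact ⟨c, h3.one p h4 hm c hc hcp, hcp⟩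
    obtain ⟨p', hm', hp'⟩ := this
    have hl := hp'.len
    refine ⟨p', .three Z Z', hp', ⟨by omega, ?_, ?_, hm'⟩, ?_⟩
    · rwa [hp'.res (by omega)]
    · rwa [hp'.res (by omega)]
    · rw [pd, if_neg (by omega), if_neg (by omega)]
end

/-- The unravelled tree. -/
noncomputable def CT (bad : Set T.Pos) (k : ℕ) (hk : Even k) : Arena where
  Pos := {c : T.Pos × CData T.Pos // Legal bad k c.1 c.2}
  len c := T.len c.1.1
  par c := ⟨(T.par c.1.1, pd k (T.len c.1.1) c.1.2), legal_par c.2⟩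
  len_par c := T.len_par _
  root := ⟨(T.root, .zero), by change T.len _ ≤ k; rw [T.len_root]; omega⟩
  len_root := T.len_root
  root_unique c hc := by
    have h1 := T.root_unique _ hc
    have h2 := legal_le c.2 (by omega)
    exact Subtype.ext (Prod.ext h1 h2)
  ch c := ⟨((legal_child hk c.2).choose, (legal_child hk c.2).choose_spec.choose),
    (legal_child hk c.2).choose_spec.choose_spec.2.1⟩
  par_ch c := by
    have h := (legal_child hk c.2).choose_spec.choose_spec
    exact Subtype.ext (Prod.ext h.1.1 h.2.2)
  len_ch c := (legal_child hk c.2).choose_spec.choose_spec.1.2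

section
variable {bad : Set T.Pos} {k : ℕ} {hk : Even k}

/-- Projection. -/
noncomputable def CTproj (bad : Set T.Pos) (k : ℕ) (hk : Even k) : Hom (CT bad k hk) T where
  map c := c.1.1
  len_map _ := rfl
  par_map _ := rfl

open Classical in
/-- Raw evaluation of a strategy in the unravelled tree. -/
noncomputable def ev (s : Strat (CT bad k hk)) (p : T.Pos) (d : CData T.Pos) :
    T.Pos × CData T.Pos :=
  if h : Legal bad k p d then (s ⟨(p, d), h⟩).1 else (T.ch p, .zero)

theorem ev_child (s : Strat (CT bad k hk)) (p : T.Pos) (d : CData T.Pos) :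
    T.Child (ev s p d).1 p := by
  unfold ev
  split_ifs with h
  · exact (CTproj bad k hk).child (s.child ⟨(p, d), h⟩)
  · exact child_ch p

theorem ev_legal (s : Strat (CT bad k hk)) {p : T.Pos} {d : CData T.Pos} (h : Legal bad k p d) :
    Legal bad k (ev s p d).1 (ev s p d).2 ∧ pd k (T.len p + 1) (ev s p d).2 = d := by
  unfold ev
  rw [dif_pos h]
  refine ⟨(s ⟨(p, d), h⟩).2, ?_⟩
  have h1 := (s.child ⟨(p, d), h⟩)
  have h2 := congrArg (fun c => c.1.2) h1.1
  have h3 : T.len (s ⟨(p, d), h⟩).1.1 = T.len p + 1 := h1.2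
  rw [← h3]
  exact h2

theorem ev_congr (s s' : Strat (CT bad k hk)) (n : ℕ)
    (h : ∀ c, (CT bad k hk).len c < n → s c = s' c) (p : T.Pos) (hp : T.len p < n)
    (d : CData T.Pos) : ev s p d = ev s' p d := by
  unfold ev
  split_ifs with hl
  · rw [h ⟨(p, d), hl⟩ hp]
  · rfl

open Classical in
/-- Data along a lifted play. -/
noncomputable def DD (k : ℕ) (Z : Set T.Pos) (dd : CData T.Pos) (n : ℕ) : CData T.Pos :=
  if n ≤ k then .zero else if n = k + 1 then .one Z else dd

theorem lift_build (s : Strat (CT bad k hk)) (pl : Bool) (x : Play T) (Z : Set T.Pos)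
    (dd : CData T.Pos) (hsig : dd.sig = Z) (hL1 : LI T (x (k+1)) Z)
    (hL : ∀ n, k + 2 ≤ n → Legal bad k (x n) dd)
    (hc1 : ∀ n, mover n = pl → x (n+1) = (ev s (x n) (DD k Z dd n)).1)
    (hck : mover k = pl → (ev s (x k) .zero).2 = .one Z)
    (hck1 : mover (k+1) = pl → (ev s (x (k+1)) (.one Z)).2 = dd) :
    ∃ y : Play (CT bad k hk), y.Cons pl s ∧ (CTproj bad k hk).play y = x := by
  have hleg : ∀ n, Legal bad k (x n) (DD k Z dd n) := by
    intro n
    unfold DD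
    split_ifs with h1 h2
    · change T.len _ ≤ k
      rwa [x.len_pos]
    · subst h2
      exact ⟨x.len_pos _, hL1⟩
    · exact hL n (by omega)
  have hpd : ∀ n, pd k (n+1) (DD k Z dd (n+1)) = DD k Z dd n := by
    intro n
    unfold pd DD
    split_ifs <;> first | rfl | omega | skip
    · rw [hsig]
  let y : Play (CT bad k hk) :=
    { pos := fun n => ⟨(x n, DD k Z dd n), hleg n⟩
      len_pos := fun n => x.len_pos n
      par_pos := fun n => by
        apply Subtype.ext
        apply Prod.ext
        · exact x.par_pos n
        · change pd k (T.len (x (n+1))) _ = _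
          rw [x.len_pos]
          exact hpd n }
  refine ⟨y, fun n hn => ?_, rfl⟩
  have hev : (s (y n)).1 = ev s (x n) (DD k Z dd n) := by
    unfold ev
    rw [dif_pos (hleg n)]
  apply Subtype.ext
  rw [hev]
  have h1 := ev_legal s (hleg n)
  have h2 := hc1 n hn
  refine Prod.ext h2 ?_
  change DD k Z dd (n+1) = _
  rw [x.len_pos] at h1
  rw [← h2] at h1
  have hlen := x.len_pos (n+1)
  rcases lt_trichotomy n k with h3 | h3 | h3
  · rw [legal_le h1.1 (by omega), DD, if_pos (by omega)]
  · subst h3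
    have := hck hn
    rw [DD, if_neg (by omega), if_pos rfl, DD, if_pos le_rfl, this]
  · rcases (show n = k + 1 ∨ k + 2 ≤ n by omega) with h4 | h4
    · subst h4
      have := hck1 hn
      rw [DD, if_neg (by omega), if_neg (by omega), DD, if_neg (by omega), if_pos rfl, this]
    · have h5 := h1.2
      rw [pd, if_neg (by omega), if_neg (by omega)] at h5
      rw [h5, DD, DD, if_neg (by omega), if_neg (by omega), if_neg (by omega), if_neg (by omega)]

/-- The forced moves towards `q`. -/
theorem ev_forced (s : Strat (CT bad k hk)) (x : Play T) (Z : Set T.Pos) (m n : ℕ)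
    (hnm : n < m) (hn : k + 1 ≤ n) (hl : Legal bad k (x n) (DD k Z (.two Z (x m)) n))
    (hd : (ev s (x n) (DD k Z (.two Z (x m)) n)).2 = .two Z (x m)) :
    x (n+1) = (ev s (x n) (DD k Z (.two Z (x m)) n)).1 := by
  have h1 := (ev_legal s hl).1
  have h2 := ev_child s (x n) (DD k Z (.two Z (x m)) n)
  have h3 := h2.len
  rw [x.len_pos] at h3
  rw [hd] at h1
  obtain ⟨h4, h5, h6, h7, h8, h9⟩ := h1
  have : T.Ext (ev s (x n) (DD k Z (.two Z (x m)) n)).1 (x m) := by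
    rcases h9 with h9 | h9
    · exact h9
    · have h10 := h9.1
      rw [x.len_pos] at h10
      rw [h9.eq (by rw [x.len_pos]; omega)]
      exact Ext.refl _
  rw [← this.2, h3, x.res (by omega)]

/-- First hit. -/
noncomputable def fst (T : Arena) (Tg : Set T.Pos) (p : T.Pos) : T.Pos :=
  T.res (sInf {m | m ≤ T.len p ∧ T.res m p ∈ Tg}) p

/-- Some prefix lies in the target. -/
def hit (T : Arena) (Tg : Set T.Pos) (p : T.Pos) : Prop := ∃ m, m ≤ T.len p ∧ T.res m p ∈ Tg

theorem hit_play (x : Play T) (Tg : Set T.Pos) (n : ℕ) :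
    hit T Tg (x n) ↔ ∃ m ≤ n, x m ∈ Tg := by
  unfold hit
  rw [x.len_pos]
  constructor
  · rintro ⟨m, hm, h⟩; rw [x.res hm] at h; exact ⟨m, hm, h⟩
  · rintro ⟨m, hm, h⟩; exact ⟨m, hm, by rwa [x.res hm]⟩

theorem fst_play (x : Play T) (Tg : Set T.Pos) (m n : ℕ) (hmn : m ≤ n) (hm : x m ∈ Tg)
    (hlt : ∀ j < m, x j ∉ Tg) : fst T Tg (x n) = x m := by
  have : sInf {m | m ≤ T.len (x n) ∧ T.res m (x n) ∈ Tg} = m := by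
    apply le_antisymm
    · apply Nat.sInf_le
      rw [mem_setOf_eq, x.len_pos, x.res hmn]
      exact ⟨hmn, hm⟩
    · apply le_csInf
      · exact ⟨m, by rw [mem_setOf_eq, x.len_pos, x.res hmn]; exact ⟨hmn, hm⟩⟩
      · rintro j ⟨h1, h2⟩
        rw [x.len_pos] at h1
        rw [x.res h1] at h2
        by_contra! h3
        exact hlt j h3 h2
  rw [fst, this, x.res hmn]

end
end Arena

namespace Arena
variable {T : Arena} {bad : Set T.Pos} {k : ℕ} {hk : Even k}

theorem mover_even {n : ℕ} (h : Even n) : mover n = true := by simp [mover, h]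

theorem mover_succ (n : ℕ) : mover (n+1) = !mover n := by
  by_cases h : Even n <;> simp [mover, Nat.even_add_one, h]

/-- Late bad positions. -/
def bad2 (bad : Set T.Pos) (k : ℕ) : Set T.Pos := {q | q ∈ bad ∧ k + 2 ≤ T.len q}

/-- Player `true` has not lost. -/
def SII (bad : Set T.Pos) (k : ℕ) (Z : Set T.Pos) (r : T.Pos) : Set T.Pos :=
  {q | q ∈ Z ∧ T.Ext r q ∧ ∀ m, k + 2 ≤ m → m ≤ T.len q → T.res m q ∉ winSet T true Z (bad2 bad k)}

open Classical in
/-- Transported strategy for player `true`. -/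
noncomputable def FI (bad : Set T.Pos) (k : ℕ) (e : T.Pos → CData T.Pos → T.Pos × CData T.Pos)
    (p : T.Pos) : T.Pos :=
  if T.len p ≤ k then (e p .zero).1 else if T.len p = k + 1 then T.ch p else
  if hit T (bad2 bad k) p then
    (e p (.two (e (T.res k p) .zero).2.sig (fst T (bad2 bad k) p))).1
  else if p ∈ winSet T true (e (T.res k p) .zero).2.sig (bad2 bad k) then
    winStrat T true (e (T.res k p) .zero).2.sig (bad2 bad k) p
  else (e p (.three (e (T.res k p) .zero).2.sig
    (SII bad k (e (T.res k p) .zero).2.sig (T.res (k+2) p)))).1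

theorem FI_child (s : Strat (CT bad k hk)) (p : T.Pos) : T.Child (FI bad k (ev s) p) p := by
  unfold FI
  split_ifs
  · exact ev_child _ _ _
  · exact child_ch p
  · exact ev_child _ _ _
  · exact (winStrat T true _ _).child p
  · exact ev_child _ _ _

theorem FI_congr (s s' : Strat (CT bad k hk)) (n : ℕ)
    (h : ∀ c, (CT bad k hk).len c < n → s c = s' c) (p : T.Pos) (hp : T.len p < n) :
    FI bad k (ev s) p = FI bad k (ev s') p := by
  have h1 : ∀ d, ev s p d = ev s' p d := ev_congr s s' n h p hp
  have h2 : ev s (T.res k p) .zero = ev s' (T.res k p) .zero :=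
    ev_congr s s' n h _ (by rw [len_res]; omega) _
  unfold FI
  rw [h2]
  simp only [h1]

theorem LII_SII {p r : T.Pos} {Z : Set T.Pos} (hp : T.len p = k + 1) (hZ : LI T p Z)
    (hr : T.Child r p) (hrZ : r ∈ Z) (hrW : r ∉ winSet T true Z (bad2 bad k)) :
    LII T bad r Z (SII bad k Z r) := by
  have hl := hr.len
  refine ⟨⟨hrZ, Ext.refl _, fun m h1 h2 => ?_⟩, fun q hq => hq.1, fun q hq hb => ?_,
    fun q hq => hq.2.1, fun q hq hlt => ⟨hZ.pre q hq.1 (by omega), hq.2.1.par_right hlt,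
      fun m h1 h2 => ?_⟩, fun q hq hm c hc hcq => ⟨hc, hq.2.1.child hcq, fun m h1 h2 => ?_⟩,
      fun q hq hm => ?_⟩
  · rwa [res_of_le (by omega)]
  · have h1 := hq.2.1.1
    have h2 := hq.2.2 (T.len q) (by omega) le_rfl
    rw [res_self] at h2
    exact h2 (win_tg _ _ _ hq.1 ⟨hb, by omega⟩)
  · rw [T.len_par] at h2
    rw [res_par (by omega)]
    exact hq.2.2 m h1 (by omega)
  · have h3 := hcq.len
    rcases h2.lt_or_eq with h4 | h4
    · rw [hcq.res (by omega)]
      exact hq.2.2 m h1 (by omega)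
    · rw [res_of_le (by omega)]
      intro hcW
      have h5 := hq.2.2 (T.len q) (by have := hq.2.1.1; omega) le_rfl
      rw [res_self] at h5
      exact h5 (win_mine _ _ _ hq.1 hm hcq hcW)
  · have h5 := hq.2.2 (T.len q) (by have := hq.2.1.1; omega) le_rfl
    rw [res_self] at h5
    by_contra! hcon
    apply h5
    apply win_opp _ _ _ hq.1 (by simp [hm])
    intro c hcq
    by_contra hcW
    have h3 := hcq.len
    refine hcon c ⟨hZ.two q hq.1 hm c hcq, hq.2.1.child hcq, fun m h1 h2 => ?_⟩ hcq
    rcases h2.lt_or_eq with h4 | h4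
    · rw [hcq.res (by omega)]
      exact hq.2.2 m h1 (by omega)
    · rwa [res_of_le (by omega)]

theorem lift_true (s : Strat (CT bad k hk)) (x : Play T)
    (hx : x.Cons true (FI bad k (ev s))) :
    ∃ y : Play (CT bad k hk), y.Cons true s ∧ (CTproj bad k hk).play y = x := by
  classical
  have hmk : mover k = true := mover_even hk
  have hmk1 : mover (k+1) = false := by rw [mover_succ, hmk]; rfl
  set Z := (ev s (x k) .zero).2.sig with hZdef
  have hz0 : Legal bad k (x k) .zero := (x.len_pos k).le
  have hxk1 : x (k+1) = (ev s (x k) .zero).1 := by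
    rw [hx k hmk, FI, if_pos (x.len_pos k).le]
  have hl1 := ev_legal s hz0
  rw [← hxk1] at hl1
  obtain ⟨hdat, hLI⟩ := legal_k1 hl1.1 (x.len_pos _)
  rw [← hZdef] at hdat hLI
  set B := bad2 bad k with hB
  set W := winSet T true Z B with hW
  have hBk : ∀ n, x n ∈ B → k + 2 ≤ n := fun n hn => by
    have := hn.2; rwa [x.len_pos] at this
  have hF : ∀ n, k + 2 ≤ n → FI bad k (ev s) (x n) =
      if hit T B (x n) then (ev s (x n) (.two Z (fst T B (x n)))).1
      else if x n ∈ W then winStrat T true Z B (x n)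
      else (ev s (x n) (.three Z (SII bad k Z (x (k+2))))).1 := by
    intro n hn
    have hlen := x.len_pos n
    rw [FI, if_neg (by omega), if_neg (by omega), x.res (show k ≤ n by omega), x.res hn]
  -- staying in the winning region
  have hstay : ∀ n, k + 2 ≤ n → (∀ m ≤ n, x m ∉ B) → x n ∈ W → x (n+1) ∈ W := by
    intro n hn hb hnW
    by_cases hm : mover n = true
    · rw [hx n hm, hF n hn, if_neg (by rw [hit_play]; push Not; exact hb), if_pos hnW]
      exact win_stay_mine _ _ _ hnW (hb n le_rfl) (by rw [x.len_pos]; exact hm)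
    · exact win_stay_opp _ _ _ hnW (hb n le_rfl) (by rw [x.len_pos]; exact hm) (x.child n)
  have hstay' : ∀ j n, k + 2 ≤ j → j ≤ n → (∀ m ≤ n, x m ∉ B) → x j ∈ W → x n ∈ W := by
    intro j n hj hjn
    induction n, hjn using Nat.le_induction with
    | base => exact fun _ h => h
    | succ n hn ih =>
      intro hb hjW
      exact hstay n (by omega) (fun m hm => hb m (by omega)) (ih (fun m hm => hb m (by omega)) hjW)
  have hxk2 : x (k+2) ∈ Z := hLI.two _ hLI.mem (by rw [x.len_pos]; exact hmk1) _ (x.child (k+1))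
  have hthree : ∀ n, k + 2 ≤ n → (∀ m ≤ n, x m ∉ B) → x n ∈ Z → x n ∉ W →
      Legal bad k (x n) (.three Z (SII bad k Z (x (k+2)))) := by
    intro n hn hb hnZ hnW
    have hW' : ∀ m, k + 2 ≤ m → m ≤ n → x m ∉ W := fun m h1 h2 h3 =>
      hnW (hstay' m n h1 h2 hb h3)
    refine ⟨by rw [x.len_pos]; exact hn, by rwa [x.res (by omega)], ?_, hnZ, x.ext_pos hn, ?_⟩
    · rw [x.res hn]
      exact LII_SII (x.len_pos _) hLI (x.child (k+1)) hxk2 (hW' _ le_rfl hn)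
    · intro m h1 h2
      rw [x.len_pos] at h2
      rw [x.res h2]
      exact hW' m h1 h2
  have hxZ : ∀ n, k + 1 ≤ n → (∀ m < n, x m ∉ B) → x n ∈ Z := by
    intro n hn
    induction n, hn using Nat.le_induction with
    | base => exact fun _ => hLI.mem
    | succ n hn ih =>
      intro hb
      have hnZ := ih (fun m hm => hb m (by omega))
      have hb' : ∀ m ≤ n, x m ∉ B := fun m hm => hb m (by omega)
      cases hm : mover n with
      | false => exact hLI.two _ hnZ (by rw [x.len_pos]; exact hm) _ (x.child n)
      | true =>
        have hn2 : k + 2 ≤ n := by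
          rcases (show n = k + 1 ∨ k + 2 ≤ n by omega) with h | h
          · subst h; simp [hmk1] at hm
          · exact h
        have h1 := hx n hm
        rw [hF n hn2, if_neg (by rw [hit_play]; push Not; exact hb')] at h1
        by_cases hnW : x n ∈ W
        · exact win_sub _ _ _ (hstay n hn2 hb' hnW)
        · rw [if_neg hnW] at h1
          have h2 := ev_legal s (hthree n hn2 hb' hnZ hnW)
          rw [x.len_pos, pd, if_neg (by omega), if_neg (by omega)] at h2
          rw [h1]
          have h3 := h2.1
          rw [h2.2] at h3
          exact h3.2.2.2.1
  by_cases hbad : ∃ m, x m ∈ B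
  · -- some bad position
    let m := Nat.find hbad
    have hm : x m ∈ B := Nat.find_spec hbad
    have hlt : ∀ j < m, x j ∉ B := fun j hj => Nat.find_min hbad hj
    have hkm := hBk m hm
    have hmZ : x m ∈ Z := hxZ m (by omega) hlt
    have hL : ∀ n, k + 2 ≤ n → Legal bad k (x n) (.two Z (x m)) := by
      intro n hn
      refine ⟨by rwa [x.len_pos], by rwa [x.res (by omega)], hmZ, hm.1, hm.2, ?_⟩
      rcases le_total n m with h | h
      · exact Or.inl (x.ext_pos h)
      · exact Or.inr (x.ext_pos h)
    refine lift_build s true x Z (.two Z (x m)) rfl hLI hL ?_ (fun _ => hdat) (by simp [hmk1])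
    intro n hn
    rcases le_or_gt n k with h | h
    · rw [hx n hn, FI, if_pos (by rwa [x.len_pos]), DD, if_pos h]
    have hn2 : k + 2 ≤ n := by
      rcases (show n = k + 1 ∨ k + 2 ≤ n by omega) with h | h
      · subst h; simp [hmk1] at hn
      · exact h
    have hDD : DD k Z (.two Z (x m)) n = .two Z (x m) := by
      rw [DD, if_neg (by omega), if_neg (by omega)]
    rcases lt_or_ge n m with h1 | h1
    · apply ev_forced s x Z m n h1 (by omega)
      · rw [hDD]; exact hL n hn2
      · have h2 := (ev_legal s (hL n hn2)).2
        rw [x.len_pos, pd, if_neg (by omega), if_neg (by omega)] at h2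
        rw [hDD, h2]
    · rw [hx n hn, hF n hn2, if_pos ((hit_play x B n).2 ⟨m, h1, hm⟩),
        fst_play x B m n h1 hm hlt, hDD]
  · push Not at hbad
    have hnW : ∀ n, k + 2 ≤ n → x n ∉ W := by
      intro n hn hnW
      obtain ⟨m, -, hm⟩ := win_reach true Z B x n hnW (fun m h1 h2 h3 h4 => by
        rw [hx m h4, hF m (by omega), if_neg (by rw [hit_play]; push Not; exact fun m _ => hbad m),
          if_pos h2])
      exact hbad m hm
    have hL : ∀ n, k + 2 ≤ n → Legal bad k (x n) (.three Z (SII bad k Z (x (k+2)))) := fun n hn =>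
      hthree n hn (fun m _ => hbad m) (hxZ n (by omega) (fun m _ => hbad m)) (hnW n hn)
    refine lift_build s true x Z (.three Z (SII bad k Z (x (k+2)))) rfl hLI hL ?_ (fun _ => hdat)
      (by simp [hmk1])
    intro n hn
    rcases le_or_gt n k with h | h
    · rw [hx n hn, FI, if_pos (by rwa [x.len_pos]), DD, if_pos h]
    have hn2 : k + 2 ≤ n := by
      rcases (show n = k + 1 ∨ k + 2 ≤ n by omega) with h | h
      · subst h; simp [hmk1] at hn
      · exact h
    rw [hx n hn, hF n hn2, if_neg (by rw [hit_play]; push Not; exact fun m _ => hbad m),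
      if_neg (hnW n hn2), DD, if_neg (by omega), if_neg (by omega)]

/-- Positions that `s` is willing to aim at. -/
def Qs (e : T.Pos → CData T.Pos → T.Pos × CData T.Pos) (p : T.Pos) : Set T.Pos :=
  {q | ∃ Z, LI T p Z ∧ (e p (.one Z)).2 = .two Z q}

open Classical in
/-- Witness quasistrategy. -/
noncomputable def Zq (e : T.Pos → CData T.Pos → T.Pos × CData T.Pos) (p q : T.Pos) : Set T.Pos :=
  if h : q ∈ Qs e p then h.choose else ∅

theorem Zq_spec {e : T.Pos → CData T.Pos → T.Pos × CData T.Pos} {p q : T.Pos} (h : q ∈ Qs e p) :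
    LI T p (Zq e p q) ∧ (e p (.one (Zq e p q))).2 = .two (Zq e p q) q := by
  unfold Zq
  rw [dif_pos h]
  exact h.choose_spec

/-- The canonical quasistrategy for player `true`. -/
def Zs (k : ℕ) (p : T.Pos) (Q : Set T.Pos) : Set T.Pos :=
  {q | T.Ext p q ∧ ∀ m, k + 1 ≤ m → m ≤ T.len q → T.res m q ∉ winSet T false {q | T.Ext p q} Q}

open Classical in
/-- Transported strategy for player `false`. -/
noncomputable def FII (k : ℕ) (e : T.Pos → CData T.Pos → T.Pos × CData T.Pos)
    (p : T.Pos) : T.Pos :=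
  if T.len p ≤ k then (e p .zero).1 else
  if hit T (Qs e (T.res (k+1) p)) p then
    (e p (.two (Zq e (T.res (k+1) p) (fst T (Qs e (T.res (k+1) p)) p))
      (fst T (Qs e (T.res (k+1) p)) p))).1
  else if p ∈ winSet T false {q | T.Ext (T.res (k+1) p) q} (Qs e (T.res (k+1) p)) then
    winStrat T false {q | T.Ext (T.res (k+1) p) q} (Qs e (T.res (k+1) p)) p
  else if T.len p = k + 1 then (e p (.one (Zs k (T.res (k+1) p) (Qs e (T.res (k+1) p))))).1
  else (e p (.three (Zs k (T.res (k+1) p) (Qs e (T.res (k+1) p)))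
    (e (T.res (k+1) p) (.one (Zs k (T.res (k+1) p) (Qs e (T.res (k+1) p))))).2.sig2)).1

theorem FII_child (s : Strat (CT bad k hk)) (p : T.Pos) : T.Child (FII k (ev s) p) p := by
  unfold FII
  split_ifs
  · exact ev_child _ _ _
  · exact ev_child _ _ _
  · exact (winStrat T false _ _).child p
  · exact ev_child _ _ _
  · exact ev_child _ _ _

theorem FII_congr (s s' : Strat (CT bad k hk)) (n : ℕ)
    (h : ∀ c, (CT bad k hk).len c < n → s c = s' c) (p : T.Pos) (hp : T.len p < n) :
    FII k (ev s) p = FII k (ev s') p := by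
  have h1 : ∀ d, ev s p d = ev s' p d := ev_congr s s' n h p hp
  have h2 : ∀ d, ev s (T.res (k+1) p) d = ev s' (T.res (k+1) p) d :=
    fun d => ev_congr s s' n h _ (by rw [len_res]; omega) _
  have h3 : Qs (ev s) (T.res (k+1) p) = Qs (ev s') (T.res (k+1) p) := by
    unfold Qs; simp only [h2]
  have h4 : Zq (ev s) (T.res (k+1) p) = Zq (ev s') (T.res (k+1) p) := by
    funext q
    have h5 : ev s (T.res (k+1) p) = ev s' (T.res (k+1) p) := funext h2
    unfold Zq Qs
    rw [h5]
  unfold FII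
  rw [h3, h4]
  simp only [h1, h2]

theorem LI_Zs {p : T.Pos} {Q : Set T.Pos} (hp : T.len p = k + 1)
    (hW : p ∉ winSet T false {q | T.Ext p q} Q) : LI T p (Zs k p Q) := by
  have hself : ∀ q ∈ Zs k p Q, q ∉ winSet T false {q | T.Ext p q} Q := by
    intro q hq
    have h5 := hq.2 (T.len q) (by have := hq.1.1; omega) le_rfl
    rwa [res_self] at h5
  have hch : ∀ q ∈ Zs k p Q, ∀ c, T.Child c q → c ∉ winSet T false {q | T.Ext p q} Q →
      c ∈ Zs k p Q := by
    intro q hq c hcq hcW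
    refine ⟨hq.1.child hcq, fun m h1 h2 => ?_⟩
    have h3 := hcq.len
    rcases h2.lt_or_eq with h4 | h4
    · rw [hcq.res (by omega)]
      exact hq.2 m h1 (by omega)
    · rwa [res_of_le (by omega)]
  refine ⟨⟨Ext.refl _, fun m h1 h2 => by rwa [res_of_le (by omega)]⟩, fun q hq => hq.1,
    fun q hq hlt => ⟨hq.1.par_right hlt, fun m h1 h2 => ?_⟩, fun q hq hm c hcq => ?_,
    fun q hq hm => ?_⟩
  · rw [T.len_par] at h2
    rw [res_par (by omega)]
    exact hq.2 m h1 (by omega)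
  · exact hch q hq c hcq (fun hcW => hself q hq (win_mine _ _ _ hq.1 hm hcq hcW))
  · by_contra! hcon
    apply hself q hq
    apply win_opp _ _ _ hq.1 (by simp [hm])
    intro c hcq
    by_contra hcW
    exact hcon c (hch q hq c hcq hcW) hcq

theorem lift_false (s : Strat (CT bad k hk)) (x : Play T)
    (hx : x.Cons false (FII k (ev s))) :
    ∃ y : Play (CT bad k hk), y.Cons false s ∧ (CTproj bad k hk).play y = x := by
  classical
  have hmk : mover k = true := mover_even hk
  have hmk1 : mover (k+1) = false := by rw [mover_succ, hmk]; rfl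
  set p := x (k+1) with hp
  have hpl : T.len p = k + 1 := x.len_pos _
  set Q := Qs (ev s) p with hQ
  set W := winSet T false {q | T.Ext p q} Q with hW
  have hQleg : ∀ q ∈ Q, q ∈ Zq (ev s) p q ∧ q ∈ bad ∧ k + 2 ≤ T.len q := by
    intro q hq
    obtain ⟨h1, h2⟩ := Zq_spec hq
    have h3 : Legal bad k p (.one (Zq (ev s) p q)) := ⟨hpl, h1⟩
    have h4 := (ev_legal s h3).1
    rw [h2] at h4
    exact ⟨h4.2.2.1, h4.2.2.2.1, h4.2.2.2.2.1⟩
  have hQk : ∀ n, x n ∈ Q → k + 2 ≤ n := fun n hn => by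
    have := (hQleg _ hn).2.2; rwa [x.len_pos] at this
  have hF : ∀ n, k + 1 ≤ n → FII k (ev s) (x n) =
      if hit T Q (x n) then (ev s (x n) (.two (Zq (ev s) p (fst T Q (x n))) (fst T Q (x n)))).1
      else if x n ∈ W then winStrat T false {q | T.Ext p q} Q (x n)
      else if n = k + 1 then (ev s (x n) (.one (Zs k p Q))).1
      else (ev s (x n) (.three (Zs k p Q) (ev s p (.one (Zs k p Q))).2.sig2)).1 := by
    intro n hn
    have hlen := x.len_pos n
    rw [FII, if_neg (by omega), x.res (show k + 1 ≤ n by omega), hlen]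
  have hlow : ∀ n, mover n = false → n ≤ k → x (n+1) = (ev s (x n) .zero).1 := by
    intro n hn h
    rw [hx n hn, FII, if_pos (by rwa [x.len_pos])]
  by_cases hbad : ∃ m, x m ∈ Q
  · let m := Nat.find hbad
    have hm : x m ∈ Q := Nat.find_spec hbad
    have hlt : ∀ j < m, x j ∉ Q := fun j hj => Nat.find_min hbad hj
    have hkm := hQk m hm
    obtain ⟨hLI, hdat⟩ := Zq_spec hm
    set Z := Zq (ev s) p (x m) with hZ
    obtain ⟨hmZ, hmb, hml⟩ := hQleg _ hm
    have hL : ∀ n, k + 2 ≤ n → Legal bad k (x n) (.two Z (x m)) := by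
      intro n hn
      refine ⟨by rwa [x.len_pos], by rwa [x.res (by omega)], hmZ, hmb, hml, ?_⟩
      rcases le_total n m with h | h
      · exact Or.inl (x.ext_pos h)
      · exact Or.inr (x.ext_pos h)
    refine lift_build s false x Z (.two Z (x m)) rfl hLI hL ?_ (by simp [hmk]) (fun _ => hdat)
    intro n hn
    rcases le_or_gt n k with h | h
    · rw [hlow n hn h, DD, if_pos h]
    rcases lt_or_ge n m with h1 | h1
    · rcases (show n = k + 1 ∨ k + 2 ≤ n by omega) with h2 | h2
      · have hDD : DD k Z (.two Z (x m)) n = .one Z := by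
          rw [DD, if_neg (by omega), if_pos h2]
        apply ev_forced s x Z m n h1 (by omega)
        · rw [hDD, h2]; exact ⟨hpl, hLI⟩
        · rw [hDD, h2]; exact hdat
      · have hDD : DD k Z (.two Z (x m)) n = .two Z (x m) := by
          rw [DD, if_neg (by omega), if_neg (by omega)]
        apply ev_forced s x Z m n h1 (by omega)
        · rw [hDD]; exact hL n h2
        · have h3 := (ev_legal s (hL n h2)).2
          rw [x.len_pos, pd, if_neg (by omega), if_neg (by omega)] at h3
          rw [hDD, h3]
    · rw [hx n hn, hF n (by omega), if_pos ((hit_play x Q n).2 ⟨m, h1, hm⟩),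
        fst_play x Q m n h1 hm hlt, DD, if_neg (by omega), if_neg (by omega)]
  · push Not at hbad
    have hnh : ∀ n, ¬ hit T Q (x n) := by
      intro n; rw [hit_play]; push Not; exact fun m _ => hbad m
    have hnW : ∀ n, k + 1 ≤ n → x n ∉ W := by
      intro n hn hnW
      obtain ⟨m, -, hm⟩ := win_reach false {q | T.Ext p q} Q x n hnW (fun m h1 h2 h3 h4 => by
        rw [hx m h4, hF m (by omega), if_neg (hnh m), if_pos h2])
      exact hbad m hm
    have hLI : LI T p (Zs k p Q) := LI_Zs hpl (hnW (k+1) le_rfl)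
    set Z := Zs k p Q with hZ
    have hxZ : ∀ n, k + 1 ≤ n → x n ∈ Z := by
      intro n hn
      refine ⟨x.ext_pos hn, fun m h1 h2 => ?_⟩
      rw [x.len_pos] at h2
      rw [x.res h2]
      exact hnW m h1
    have hl1 : Legal bad k p (.one Z) := ⟨hpl, hLI⟩
    have hev := ev_legal s hl1
    have hk2 : x (k+2) = (ev s p (.one Z)).1 := by
      rw [hx (k+1) hmk1, hF (k+1) le_rfl, if_neg (hnh _), if_neg (hnW _ le_rfl), if_pos rfl]
    rw [← hk2, hpl, pd, if_neg (by omega), if_pos rfl] at hev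
    have hthree : ∃ Z', (ev s p (.one Z)).2 = .three Z Z' := by
      obtain ⟨h1, h2⟩ := hev
      have hlen := x.len_pos (k+2)
      cases hd : (ev s p (.one Z)).2 with
      | zero =>
        rw [hd] at h1
        have : T.len (x (k+2)) ≤ k := h1
        omega
      | one Z₀ => rw [hd] at h1; have := h1.1; omega
      | two Z₀ q =>
        rw [hd] at h1 h2
        have h3 : Z₀ = Z := by injection h2
        subst h3
        have hq : q ∈ Q := ⟨_, hLI, hd⟩
        have hqZ : q ∈ Z := h1.2.2.1
        have h4 := hqZ.2 (T.len q) (by have := hqZ.1.1; omega) le_rfl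
        rw [res_self] at h4
        exact absurd (win_tg _ _ _ hqZ.1 hq) h4
      | three Z₀ Z' =>
        rw [hd] at h2
        have h3 : Z₀ = Z := by injection h2
        subst h3
        exact ⟨Z', rfl⟩
    obtain ⟨Z', hd⟩ := hthree
    have hev1 := hev.1
    rw [hd] at hev1
    obtain ⟨-, -, hLII, hmem⟩ := hev1
    rw [x.res le_rfl] at hLII
    have hL' : ∀ n, k + 2 ≤ n → x n ∈ Z' → Legal bad k (x n) (.three Z Z') := by
      intro n hn h
      exact ⟨by rwa [x.len_pos], by rwa [x.res (by omega)], by rwa [x.res hn], h⟩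
    have hmv : ∀ n, k + 2 ≤ n → mover n = false → x (n+1) = (ev s (x n) (.three Z Z')).1 := by
      intro n hn hm
      rw [hx n hm, hF n (by omega), if_neg (hnh n), if_neg (hnW n (by omega)), if_neg (by omega), hd]
      rfl
    have hZ' : ∀ n, k + 2 ≤ n → x n ∈ Z' := by
      intro n hn
      induction n, hn using Nat.le_induction with
      | base => exact hmem
      | succ n hn ih =>
        cases hm : mover n with
        | true => exact hLII.one _ ih (by rw [x.len_pos]; exact hm) _ (hxZ (n+1) (by omega)) (x.child n)
        | false =>
          have h1 := ev_legal s (hL' n hn ih)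
          rw [← hmv n hn hm, x.len_pos, pd, if_neg (by omega), if_neg (by omega)] at h1
          have h2 := h1.1
          rw [h1.2] at h2
          exact h2.2.2.2
    refine lift_build s false x Z (.three Z Z') rfl hLI (fun n hn => hL' n hn (hZ' n hn)) ?_
      (by simp [hmk]) (fun _ => hd)
    intro n hn
    rcases le_or_gt n k with h | h
    · rw [hlow n hn h, DD, if_pos h]
    rcases (show n = k + 1 ∨ k + 2 ≤ n by omega) with h2 | h2
    · subst h2
      rw [DD, if_neg (by omega), if_pos rfl]
      exact hk2
    · rw [DD, if_neg (by omega), if_neg (by omega)]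
      exact hmv n h2 hn

/-- The covering of Martin unravelling a closed set. -/
noncomputable def closedCov (bad : Set T.Pos) (k : ℕ) (hk : Even k) : Cov k (CT bad k hk) T where
  f := CTproj bad k hk
  bij q hq := by
    refine ⟨⟨(q, .zero), hq⟩, rfl, ?_⟩
    rintro c hc
    have hc' : c.1.1 = q := hc
    exact Subtype.ext (Prod.ext hc' (legal_le c.2 (by rw [hc']; exact hq)))
  phi pl s := if pl = true then ⟨FI bad k (ev s), FI_child s⟩ else ⟨FII k (ev s), FII_child s⟩
  phi_local pl s s' n h p hp := by
    cases pl
    · exact FII_congr s s' n h p hp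
    · exact FI_congr s s' n h p hp
  phi_agree pl s c hc := by
    have hc' : T.len c.1.1 ≤ k := by
      have : T.len c.1.1 + 1 ≤ k := hc
      omega
    have h0 := legal_le c.2 hc'
    have h1 : ev s c.1.1 .zero = (s c).1 := by
      have hl : Legal bad k c.1.1 .zero := by rw [← h0]; exact c.2
      rw [ev, dif_pos hl]
      have : (⟨(c.1.1, .zero), hl⟩ : (CT bad k hk).Pos) = c := Subtype.ext (Prod.ext rfl h0.symm)
      rw [this]
    cases pl
    · change FII k (ev s) c.1.1 = (s c).1.1
      rw [FII, if_pos hc', h1]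
    · change FI bad k (ev s) c.1.1 = (s c).1.1
      rw [FI, if_pos hc', h1]
  lift pl s x hx := by
    cases pl
    · exact lift_false s x hx
    · exact lift_true s x hx

theorem closedCov_spec (bad : Set T.Pos) (hup : ∀ p q, T.Child q p → p ∈ bad → q ∈ bad) (k : ℕ)
    (hk : Even k) (y : Play (CT bad k hk)) :
    (∀ n, ((closedCov bad k hk).f.play y) n ∉ bad) ↔ (y (k+2)).1.2.isThree := by
  have hlen : ∀ n, T.len (y n).1.1 = n := fun n => y.len_pos n
  have hpar : ∀ n, k + 2 ≤ n → (y (n+1)).1.2 = (y n).1.2 := by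
    intro n hn
    have h1 := congrArg (fun c => c.1.2) (y.par_pos n)
    change pd k (T.len (y (n+1)).1.1) (y (n+1)).1.2 = (y n).1.2 at h1
    rwa [hlen, pd, if_neg (by omega), if_neg (by omega)] at h1
  have hdat : ∀ n, k + 2 ≤ n → (y n).1.2 = (y (k+2)).1.2 := by
    intro n hn
    induction n, hn using Nat.le_induction with
    | base => rfl
    | succ n hn ih => rw [hpar n hn, ih]
  set x := (closedCov bad k hk).f.play y with hx
  have hxy : ∀ n, x n = (y n).1.1 := fun n => rfl
  have hupx : ∀ m n, m ≤ n → x m ∈ bad → x n ∈ bad := by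
    intro m n hmn hm
    induction n, hmn using Nat.le_induction with
    | base => exact hm
    | succ n hn ih => exact hup _ _ (x.child n) ih
  cases hd : (y (k+2)).1.2 with
  | zero =>
    have h1 := (y (k+2)).2
    rw [hd] at h1
    have h2 : T.len (y (k+2)).1.1 ≤ k := h1
    rw [hlen] at h2; omega
  | one Z =>
    have h1 := (y (k+2)).2
    rw [hd] at h1
    have h2 := h1.1
    rw [hlen] at h2; omega
  | two Z q =>
    simp only [CData.isThree, iff_false]
    push Not
    have h1 := (y (max (k+2) (T.len q))).2
    rw [hdat _ (le_max_left _ _), hd] at h1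
    obtain ⟨-, -, -, h2, -, h3⟩ := h1
    refine ⟨max (k+2) (T.len q), ?_⟩
    have h4 : T.Ext q (x (max (k+2) (T.len q))) := by
      rcases h3 with h3 | h3
      · have h5 := h3.eq (by rw [hlen]; exact le_max_right _ _)
        rw [hxy, ← h5]; exact Ext.refl _
      · exact h3
    have h5 : x (T.len q) = q := by
      rw [← x.res (le_max_right (k+2) (T.len q))]; exact h4.2
    exact hupx _ _ (le_max_right _ _) (by rw [h5]; exact h2)
  | three Z Z' =>
    simp only [CData.isThree, iff_true]
    intro n hn
    have h1 := (y (max (k+2) n)).2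
    rw [hdat _ (le_max_left _ _), hd] at h1
    exact h1.2.2.1.nb _ h1.2.2.2 (hupx n _ (le_max_right _ _) hn)

/-- Every open set of plays can be unravelled. -/
theorem exists_cov_of_open {A : Set (Play T)} (hA : POpen A) (k : ℕ) :
    ∃ (S : Arena) (C : Cov k S T), PClopen (C.f.play ⁻¹' A) := by
  obtain ⟨O, hO⟩ := hA
  let bad : Set T.Pos := {p | ∃ m ≤ T.len p, T.res m p ∈ O}
  have hup : ∀ p q, T.Child q p → p ∈ bad → q ∈ bad := by
    rintro p q hqp ⟨m, hm, h⟩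
    exact ⟨m, by have := hqp.len; omega, by rwa [hqp.res hm]⟩
  have hbad : ∀ x : Play T, x ∈ A ↔ ∃ n, x n ∈ bad := by
    intro x
    rw [hO]
    constructor
    · rintro ⟨n, hn⟩
      exact ⟨n, n, (x.len_pos n).ge, by rwa [x.res le_rfl]⟩
    · rintro ⟨n, m, hm, h⟩
      rw [x.len_pos] at hm
      rw [x.res hm] at h
      exact ⟨m, h⟩
  have hk : Even (2 * k) := even_two_mul k
  have key : ∀ y, y ∈ (closedCov bad (2*k) hk).f.play ⁻¹' A ↔ ¬ (y (2*k+2)).1.2.isThree := by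
    intro y
    rw [← closedCov_spec bad hup (2*k) hk y, mem_preimage, hbad]
    push Not
    rfl
  refine ⟨CT bad (2*k) hk, (closedCov bad (2*k) hk).mono (by omega), ?_, ?_⟩
  · refine ⟨{c | (CT bad (2*k) hk).len c = 2*k+2 ∧ ¬ c.1.2.isThree}, fun y => ?_⟩
    refine (key y).trans ⟨fun h => ⟨_, y.len_pos _, h⟩, ?_⟩
    rintro ⟨n, h1, h2⟩
    have : n = 2*k+2 := (y.len_pos n).symm.trans h1
    subst this
    exact h2
  · refine ⟨{c | (CT bad (2*k) hk).len c = 2*k+2 ∧ c.1.2.isThree}, fun y => ?_⟩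
    refine ((key y).not.trans not_not).trans ⟨fun h => ⟨_, y.len_pos _, h⟩, ?_⟩
    rintro ⟨n, h1, h2⟩
    have : n = 2*k+2 := (y.len_pos n).symm.trans h1
    subst this
    exact h2

end Arena

namespace Arena

theorem lim_bij (i₀ : ℕ) : ∀ (X : ℕ → Type) (f : ∀ i, X (i+1) → X i) (G : ∀ i, Set (X i)),
    (∀ i p, f i p ∈ G i ↔ p ∈ G (i+1)) → (∀ i, i₀ ≤ i → ∀ q ∈ G i, ∃! p, f i p = q) →
    ∀ p ∈ G i₀, ∃! y : ∀ i, X i, (∀ i, f i (y (i+1)) = y i) ∧ y i₀ = p := by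
  induction i₀ with
  | zero =>
    intro X f G hG hb p hp
    have hb' : ∀ i, ∀ q : G i, ∃ p : G (i+1), f i p = q := by
      rintro i ⟨q, hq⟩
      obtain ⟨p, h1, -⟩ := hb i (Nat.zero_le _) q hq
      exact ⟨⟨p, (hG i p).1 (by rw [h1]; exact hq)⟩, h1⟩
    choose g hg using hb'
    let y : ∀ i, G i := fun i => Nat.rec (motive := fun i => G i) ⟨p, hp⟩ (fun i z => g i z) i
    have hy : ∀ i, f i (y (i+1)).1 = (y i).1 := fun i => hg i (y i)
    refine ⟨fun i => (y i).1, ⟨hy, rfl⟩, ?_⟩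
    rintro z ⟨hz1, hz2⟩
    funext i
    induction i with
    | zero => exact hz2
    | succ i ih =>
      exact (hb i (Nat.zero_le _) _ (y i).2).unique ((hz1 i).trans ih) (hy i)
  | succ i₀ ih =>
    intro X f G hG hb p hp
    obtain ⟨y, ⟨hy1, hy2⟩, hu⟩ := ih (fun i => X (i+1)) (fun i => f (i+1)) (fun i => G (i+1))
      (fun i => hG (i+1)) (fun i hi => hb (i+1) (by omega)) p hp
    let z : ∀ i, X i := fun i => match i with
      | 0 => f 0 (y 0)
      | i+1 => y i
    refine ⟨z, ⟨fun i => ?_, hy2⟩, ?_⟩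
    · cases i with
      | zero => rfl
      | succ i => exact hy1 i
    · rintro w ⟨hw1, hw2⟩
      have h := hu (fun i => w (i+1)) ⟨fun i => hw1 (i+1), hw2⟩
      funext i
      cases i with
      | zero =>
        rw [← hw1 0, congrFun h 0]
      | succ i => exact congrFun h i

section lim
variable {k : ℕ} {X : ℕ → Arena} (C : ∀ i, Cov (k+i) (X (i+1)) (X i))

/-- Threads. -/
def Thread : Type := {y : ∀ i, (X i).Pos // ∀ i, (C i).f (y (i+1)) = y i}

variable {C}

theorem Thread.len (y : Thread C) (i : ℕ) : (X i).len (y.1 i) = (X 0).len (y.1 0) := by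
  induction i with
  | zero => rfl
  | succ i ih => rw [← ih, ← y.2 i, (C i).f.len_map]

theorem Thread.ext {y z : Thread C} (i : ℕ) (hi : (X i).len (y.1 i) ≤ k + i) (h : y.1 i = z.1 i) :
    y = z := by
  have := lim_bij i (fun i => (X i).Pos) (fun i => (C i).f) (fun i => {p | (X i).len p = (X i).len p ∧ (X i).len p = (X 0).len (y.1 0)})
    (fun i p => by simp [(C i).f.len_map]) (fun j hj q hq => (C j).bij q (by
      have h1 := hq.2
      have h2 := y.len i
      omega)) (y.1 i) ⟨rfl, y.len i⟩
  exact Subtype.ext (this.unique ⟨y.2, rfl⟩ ⟨z.2, h.symm⟩)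

theorem Thread.exists (i : ℕ) (p : (X i).Pos) (hp : (X i).len p ≤ k + i) :
    ∃ y : Thread C, y.1 i = p := by
  obtain ⟨y, ⟨h1, h2⟩, -⟩ := lim_bij i (fun i => (X i).Pos) (fun i => (C i).f) (fun j => {q | (X j).len q = (X i).len p})
    (fun i p => by simp [(C i).f.len_map]) (fun j hj q hq => (C j).bij q (by
      have h1 : (X j).len q = (X i).len p := hq
      omega)) p rfl
  exact ⟨⟨y, h1⟩, h2⟩

/-- Parent of a thread. -/
def Thread.par (y : Thread C) : Thread C :=
  ⟨fun i => (X i).par (y.1 i), fun i => by rw [← (C i).f.par_map, y.2]⟩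

theorem Thread.exists_child (y : Thread C) :
    ∃ z : Thread C, z.par = y ∧ (X 0).len (z.1 0) = (X 0).len (y.1 0) + 1 := by
  let i := (X 0).len (y.1 0) + 1
  have hl := y.len i
  obtain ⟨z, hz⟩ := Thread.exists (C := C) i ((X i).ch (y.1 i)) (by rw [(X i).len_ch]; omega)
  have hc : (X i).par ((X i).ch (y.1 i)) = y.1 i := (X i).par_ch _
  have hz' : z.par.1 i = y.1 i := by
    change (X i).par (z.1 i) = _
    rw [hz, hc]
  refine ⟨z, Thread.ext i ?_ hz', ?_⟩
  · rw [hz']; omega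
  · rw [← z.len i, hz, (X i).len_ch, hl]

variable (C)

/-- The inverse limit arena. -/
noncomputable def Lim : Arena where
  Pos := Thread C
  len y := (X 0).len (y.1 0)
  par := Thread.par
  len_par y := (X 0).len_par _
  root := ⟨fun i => (X i).root, fun i => (X i).root_unique _ (by
    rw [(C i).f.len_map, (X (i+1)).len_root])⟩
  len_root := (X 0).len_root
  root_unique y hy := Subtype.ext (funext fun i => (X i).root_unique _ (by rw [y.len]; exact hy))
  ch y := (y.exists_child).choose
  par_ch y := (y.exists_child).choose_spec.1
  len_ch y := (y.exists_child).choose_spec.2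

/-- Projections. -/
noncomputable def Lim.proj (i : ℕ) : Hom (Lim C) (X i) where
  map y := y.1 i
  len_map y := y.len i
  par_map _ := rfl

theorem Lim.proj_succ (i : ℕ) : (C i).f.comp (Lim.proj C (i+1)) = Lim.proj C i := by
  have : ((C i).f.comp (Lim.proj C (i+1))).map = (Lim.proj C i).map := funext fun y => y.2 i
  generalize (C i).f.comp (Lim.proj C (i+1)) = g at *
  cases g
  simp only at this
  subst this
  rfl

open Classical in
/-- The induced strategies on the stages. -/
noncomputable def sStrat (σ : Strat (Lim C)) (j : ℕ) : Strat (X j) where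
  mv p := if h : (X j).len p + 1 ≤ k + j then
      (σ (Thread.exists (C := C) j p (by omega)).choose).1 j else (X j).ch p
  child p := by
    split_ifs with h
    · have h1 := (Lim.proj C j).child (σ.child (Thread.exists (C := C) j p (by omega)).choose)
      have h2 := (Thread.exists (C := C) j p (by omega)).choose_spec
      have h3 : (Lim.proj C j) (Thread.exists (C := C) j p (by omega)).choose = p := h2
      rw [h3] at h1
      exact h1
    · exact child_ch p

theorem sStrat_apply (σ : Strat (Lim C)) (j : ℕ) (y : Thread C)
    (h : (X j).len (y.1 j) + 1 ≤ k + j) : sStrat C σ j (y.1 j) = (σ y).1 j := by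
  have h2 := (Thread.exists (C := C) j (y.1 j) (by omega)).choose_spec
  have h3 : (Thread.exists (C := C) j (y.1 j) (by omega)).choose = y :=
    Thread.ext j (by rw [h2]; omega) h2
  change (if h : _ then _ else _) = _
  rw [dif_pos h, h3]

theorem sStrat_congr (σ σ' : Strat (Lim C)) (n : ℕ)
    (h : ∀ y, (Lim C).len y < n → σ y = σ' y) (j : ℕ) (p : (X j).Pos) (hp : (X j).len p < n) :
    sStrat C σ j p = sStrat C σ' j p := by
  by_cases h1 : (X j).len p + 1 ≤ k + j
  · obtain ⟨y, rfl⟩ := Thread.exists (C := C) j p (by omega)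
    rw [sStrat_apply C σ j y h1, sStrat_apply C σ' j y h1, h y ((y.len j).symm.trans_lt hp)]
  · change (if h : _ then _ else _) = (if h : _ then _ else _)
    rw [dif_neg h1, dif_neg h1]

/-- Iterated transport. -/
noncomputable def sIter (pl : Bool) (σ : Strat (Lim C)) : ℕ → ∀ i, Strat (X i)
  | 0 => sStrat C σ
  | m+1 => fun i => (C i).phi pl (sIter pl σ m (i+1))

theorem sIter_succ (pl : Bool) (σ : Strat (Lim C)) (m : ℕ) : ∀ i (p : (X i).Pos),
    (X i).len p + 1 ≤ k + i + m → sIter C pl σ (m+1) i p = sIter C pl σ m i p := by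
  induction m with
  | zero =>
    intro i p hp
    obtain ⟨y, rfl⟩ := Thread.exists (C := C) i p (by omega)
    change (C i).phi pl (sStrat C σ (i+1)) (y.1 i) = sStrat C σ i (y.1 i)
    rw [sStrat_apply C σ i y (by omega)]
    have hl : (X (i+1)).len (y.1 (i+1)) = (X i).len (y.1 i) :=
      (y.len (i+1)).trans (y.len i).symm
    conv_lhs => rw [← y.2 i]
    rw [(C i).phi_agree pl _ _ (by omega), sStrat_apply C σ (i+1) y (by omega)]
    exact (σ y).2 i
  | succ m ih =>
    intro i p hp
    exact (C i).phi_local pl _ _ ((X i).len p + 1) (fun q hq => ih (i+1) q (by omega)) p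
      (Nat.lt_succ_self _)

theorem sIter_stable (pl : Bool) (σ : Strat (Lim C)) (i : ℕ) (p : (X i).Pos) (m m' : ℕ)
    (hm : (X i).len p + 1 ≤ k + i + m) (hmm : m ≤ m') :
    sIter C pl σ m' i p = sIter C pl σ m i p := by
  induction m', hmm using Nat.le_induction with
  | base => rfl
  | succ m' h ih => rw [sIter_succ C pl σ m' i p (by omega), ih]

/-- The limit of the iterated transports. -/
noncomputable def tStrat (pl : Bool) (σ : Strat (Lim C)) (i : ℕ) : Strat (X i) where
  mv p := sIter C pl σ ((X i).len p + 1) i p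
  child p := (sIter C pl σ ((X i).len p + 1) i).child p

theorem tStrat_eq (pl : Bool) (σ : Strat (Lim C)) (i : ℕ) (p : (X i).Pos) (m : ℕ)
    (hm : (X i).len p + 1 ≤ k + i + m) : tStrat C pl σ i p = sIter C pl σ m i p := by
  change sIter C pl σ ((X i).len p + 1) i p = _
  rcases le_total m ((X i).len p + 1) with h | h
  · exact sIter_stable C pl σ i p _ _ hm h
  · exact (sIter_stable C pl σ i p _ _ (by omega) h).symm

theorem tStrat_phi (pl : Bool) (σ : Strat (Lim C)) (i : ℕ) (p : (X i).Pos) :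
    tStrat C pl σ i p = (C i).phi pl (tStrat C pl σ (i+1)) p := by
  rw [tStrat_eq C pl σ i p ((X i).len p + 2) (by omega)]
  exact (C i).phi_local pl _ _ ((X i).len p + 1)
    (fun q hq => (tStrat_eq C pl σ (i+1) q _ (by omega)).symm) p (Nat.lt_succ_self _)

/-- The limit covering. -/
noncomputable def limCov : Cov k (Lim C) (X 0) where
  f := Lim.proj C 0
  bij q hq := by
    obtain ⟨y, hy⟩ := Thread.exists (C := C) 0 q hq
    refine ⟨y, hy, fun z hz => ?_⟩
    have hz' : z.1 0 = q := hz
    exact Thread.ext 0 (by rw [hz']; exact hq) (hz'.trans hy.symm)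
  phi pl σ := tStrat C pl σ 0
  phi_local pl σ σ' n h p hp := by
    have : ∀ m i (p : (X i).Pos), (X i).len p < n → sIter C pl σ m i p = sIter C pl σ' m i p := by
      intro m
      induction m with
      | zero => exact fun i p hp => sStrat_congr C σ σ' n h i p hp
      | succ m ih => exact fun i p hp => (C i).phi_local pl _ _ n (ih (i+1)) p hp
    exact this _ 0 p hp
  phi_agree pl σ y hy := by
    change tStrat C pl σ 0 (y.1 0) = (σ y).1 0
    have hy' : (X 0).len (y.1 0) + 1 ≤ k := hy
    rw [tStrat_eq C pl σ 0 _ 0 (by omega)]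
    exact sStrat_apply C σ 0 y (by omega)
  lift pl σ x hx := by
    have hstep : ∀ i (x : {x : Play (X i) // x.Cons pl (tStrat C pl σ i)}),
        ∃ y : {y : Play (X (i+1)) // y.Cons pl (tStrat C pl σ (i+1))}, (C i).f.play y.1 = x.1 := by
      rintro i ⟨x, hx⟩
      obtain ⟨y, hy, h⟩ := (C i).lift pl (tStrat C pl σ (i+1)) x (fun n hn => by
        rw [hx n hn, tStrat_phi])
      exact ⟨⟨y, hy⟩, h⟩
    choose g hg using hstep
    let z : ∀ i, {x : Play (X i) // x.Cons pl (tStrat C pl σ i)} := fun i =>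
      Nat.rec (motive := fun i => {x : Play (X i) // x.Cons pl (tStrat C pl σ i)}) ⟨x, hx⟩
        (fun i w => g i w) i
    have hz : ∀ i, (C i).f.play (z (i+1)).1 = (z i).1 := fun i => hg i (z i)
    let y : Play (Lim C) :=
      { pos := fun n => ⟨fun i => (z i).1 n, fun i =>
          congrArg (fun w : Play (X i) => w.pos n) (hz i)⟩
        len_pos := fun n => x.len_pos n
        par_pos := fun n => Subtype.ext (funext fun i => (z i).1.par_pos n) }
    refine ⟨y, fun n hn => ?_, rfl⟩
    have h1 := (z (n+1)).2 n hn
    have hl := (z (n+1)).1.len_pos n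
    rw [tStrat_eq C pl σ (n+1) _ 0 (by omega)] at h1
    have h2 := sStrat_apply C σ (n+1) (y n) (by
      change (X (n+1)).len ((z (n+1)).1 n) + 1 ≤ _
      omega)
    refine Thread.ext (n+1) ?_ (h1.trans h2)
    change (X (n+1)).len ((z (n+1)).1 (n+1)) ≤ _
    rw [Play.len_pos]
    omega

end lim

variable {T : Arena}

/-- Sets of plays that can be unravelled, hereditarily. -/
def Unr (A : Set (Play T)) : Prop :=
  ∀ (S : Arena) (f : Hom S T) (k : ℕ), ∃ (S' : Arena) (C : Cov k S' S),
    PClopen ((f.comp C.f).play ⁻¹' A)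

theorem Unr.of_clopen {A : Set (Play T)} (h : PClopen A) : Unr A := fun S _ k =>
  ⟨S, Cov.id k S, h.preimage _⟩

theorem PClopen.compl {A : Set (Play T)} (h : PClopen A) : PClopen Aᶜ :=
  ⟨h.2, by rw [compl_compl]; exact h.1⟩

theorem Unr.compl {A : Set (Play T)} (h : Unr A) : Unr Aᶜ := fun S f k => by
  obtain ⟨S', C, hC⟩ := h S f k
  exact ⟨S', C, hC.compl⟩

theorem Unr.iUnion {A : ℕ → Set (Play T)} (h : ∀ i, Unr (A i)) : Unr (⋃ i, A i) := by
  intro S f k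
  have hstep : ∀ (i : ℕ) (R : Σ R : Arena, Hom R S), ∃ (R' : Arena) (C : Cov (k+i) R' R.1),
      PClopen ((f.comp (R.2.comp C.f)).play ⁻¹' A i) := by
    intro i R
    exact h i R.1 (f.comp R.2) (k+i)
  choose g gC hg using hstep
  let Y : ℕ → Σ R : Arena, Hom R S := fun i => Nat.rec (motive := fun _ => Σ R : Arena, Hom R S)
    ⟨S, Hom.id S⟩ (fun i R => ⟨g i R, R.2.comp (gC i R).f⟩) i
  let C : ∀ i, Cov (k+i) (Y (i+1)).1 (Y i).1 := fun i => gC i (Y i)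
  have hh : ∀ i, (Y i).2.comp (Lim.proj (X := fun i => (Y i).1) C i) =
      Lim.proj (X := fun i => (Y i).1) C 0 := by
    intro i
    induction i with
    | zero => rfl
    | succ i ih =>
      rw [← ih, ← Lim.proj_succ (X := fun i => (Y i).1) C i]
      rfl
  have hcl : ∀ i, PClopen ((f.comp (limCov (X := fun i => (Y i).1) C).f).play ⁻¹' A i) := by
    intro i
    have h1 := hg i (Y i)
    have h2 := h1.preimage (Lim.proj (X := fun i => (Y i).1) C (i+1))
    have h3 := hh (i+1)
    have h4 : (f.comp (limCov (X := fun i => (Y i).1) C).f) =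
        f.comp ((Y (i+1)).2.comp (Lim.proj (X := fun i => (Y i).1) C (i+1))) := by
      rw [h3]; rfl
    rw [h4]
    exact h2
  have hop : POpen ((f.comp (limCov (X := fun i => (Y i).1) C).f).play ⁻¹' ⋃ i, A i) := by
    rw [preimage_iUnion]
    exact POpen.iUnion fun i => (hcl i).1
  obtain ⟨S'', D, hD⟩ := exists_cov_of_open hop k
  exact ⟨S'', (limCov (X := fun i => (Y i).1) C).comp D, hD⟩

/-- Borel determinacy. -/
theorem borel_det {A : Set (Play T)}
    (hA : @MeasurableSet _ (MeasurableSpace.generateFrom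
      {s : Set (Play T) | ∃ (n : ℕ) (B : Set T.Pos), s = {x : Play T | x n ∈ B}}) A) : Det A := by
  have : Unr A := by
    induction A, hA using MeasurableSpace.generateFrom_induction with
    | hC t ht _ =>
      obtain ⟨n, B, rfl⟩ := ht
      apply Unr.of_clopen
      constructor
      · refine ⟨{p | T.len p = n ∧ p ∈ B}, fun x => ⟨fun h => ⟨n, x.len_pos n, h⟩, ?_⟩⟩
        rintro ⟨m, h1, h2⟩
        have : m = n := (x.len_pos m).symm.trans h1
        subst this; exact h2
      · refine ⟨{p | T.len p = n ∧ p ∉ B}, fun x => ⟨fun h => ⟨n, x.len_pos n, h⟩, ?_⟩⟩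
        rintro ⟨m, h1, h2⟩
        have : m = n := (x.len_pos m).symm.trans h1
        subst this; exact h2
    | empty =>
      exact Unr.of_clopen ⟨⟨∅, by simp⟩, ⟨univ, by simp⟩⟩
    | compl t _ ih => exact ih.compl
    | iUnion s _ ih => exact Unr.iUnion ih
  obtain ⟨S, C, hC⟩ := this T (Hom.id T) 0
  exact Det.of_cov C (gale_stewart hC.1)

/-- The arena of finite sequences (most recent move first). -/
def listArena (A : Type) [Inhabited A] : Arena where
  Pos := List A
  len := List.length
  par := List.tail
  len_par := fun _ => List.length_tail
  root := []
  len_root := rfl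
  root_unique _ h := List.eq_nil_of_length_eq_zero h
  ch p := default :: p
  par_ch _ := rfl
  len_ch _ := rfl

/-- The history of a sequence of moves. -/
def hist {A : Type} (x : ℕ → A) : ℕ → List A
  | 0 => []
  | n+1 => x n :: hist x n

theorem length_hist {A : Type} (x : ℕ → A) (n : ℕ) : (hist x n).length = n := by
  induction n with
  | zero => rfl
  | succ n ih => simp [hist, ih]

theorem eq_headI_cons {A : Type} [Inhabited A] (l m : List A) (h1 : l.tail = m)
    (h2 : l.length = m.length + 1) : l.headI :: m = l := by
  cases l with
  | nil => simp at h2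
  | cons a l => simp at h1; simp [h1]

/-- Borel determinacy for sequences. -/
theorem borel_det_list {A : Type} [Inhabited A] {W : Set (ℕ → A)}
    (hW : @MeasurableSet _ (MeasurableSpace.generateFrom
      {s : Set (ℕ → A) | ∃ (n : ℕ) (B : Set (List A)), s = {x | hist x n ∈ B}}) W) :
    (∃ s : List A → A, ∀ x : ℕ → A, (∀ n, Even n → x n = s (hist x n)) → x ∈ W) ∨
    (∃ s : List A → A, ∀ x : ℕ → A, (∀ n, ¬ Even n → x n = s (hist x n)) → x ∉ W) := by
  let T := listArena A
  let mv : Play T → ℕ → A := fun y n => List.headI (α := A) (y.pos (n+1))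
  let pl : (ℕ → A) → Play T := fun x =>
    { pos := hist x, len_pos := length_hist x, par_pos := fun _ => rfl }
  have hhist : ∀ (y : Play T) n, hist (mv y) n = y.pos n := by
    intro y n
    induction n with
    | zero => exact (T.root_unique _ (y.len_pos 0)).symm
    | succ n ih =>
      have h1 := y.len_pos (n+1)
      have h2 := y.len_pos n
      refine (congrArg (fun l => mv y n :: l) ih).trans
        (eq_headI_cons (A := A) (y.pos (n+1)) (y.pos n) (y.par_pos n) ?_)
      exact h1.trans (congrArg (· + 1) h2.symm)
  have hmv : ∀ x, mv (pl x) = x := fun x => rfl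
  have hmeas : @MeasurableSet _ (MeasurableSpace.generateFrom
      {s : Set (Play T) | ∃ (n : ℕ) (B : Set T.Pos), s = {x : Play T | x n ∈ B}}) (mv ⁻¹' W) := by
    have hm : @Measurable _ _ (MeasurableSpace.generateFrom
      {s : Set (Play T) | ∃ (n : ℕ) (B : Set T.Pos), s = {x : Play T | x n ∈ B}})
      (MeasurableSpace.generateFrom
      {s : Set (ℕ → A) | ∃ (n : ℕ) (B : Set (List A)), s = {x | hist x n ∈ B}}) mv := by
      refine @measurable_generateFrom _ _ (_) _ _ ?_
      rintro t ⟨n, B, rfl⟩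
      apply MeasurableSpace.measurableSet_generateFrom
      refine ⟨n, B, ?_⟩
      ext y
      simp only [mem_preimage, mem_setOf_eq, hhist]; rfl
    exact hm hW
  rcases borel_det hmeas with ⟨s, hs⟩ | ⟨s, hs⟩
  · left
    refine ⟨fun p => List.headI (α := A) (s.mv p), fun x hx => ?_⟩
    have := hs (pl x) (fun n hn => ?_)
    · exact this
    · have h1 := s.child (pl x n)
      have h2 := hx n (by simpa [mover] using hn)
      refine (congrArg (fun a => a :: hist x n) h2).trans ?_
      exact eq_headI_cons (A := A) (s.mv (hist x n)) (hist x n) h1.1 h1.2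
  · right
    refine ⟨fun p => List.headI (α := A) (s.mv p), fun x hx => ?_⟩
    have := hs (pl x) (fun n hn => ?_)
    · exact this
    · have h1 := s.child (pl x n)
      have h2 := hx n (by simpa [mover] using hn)
      refine (congrArg (fun a => a :: hist x n) h2).trans ?_
      exact eq_headI_cons (A := A) (s.mv (hist x n)) (hist x n) h1.1 h1.2

end Arena

namespace SFG
open Arena

abbrev X := ℕ → Bool
abbrev Offer := Bool → X → ℕ
abbrev Mv := Offer × ℕ
abbrev St := Bool → Set X

def piece (st : St) (o : Offer) (b : Bool) (i : ℕ) : Set X := {z | z ∈ st b ∧ o b z = i}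

def ValidO (st : St) (o : Offer) : Prop :=
  (∀ b i, IsClopen (piece st o b i)) ∧
    ∀ i b c, (piece st o b i).Nonempty → (piece st o c i).Nonempty

open Classical in
noncomputable def fixO (st : St) (o : Offer) : Offer := if ValidO st o then o else fun _ _ => 0

def GoodI (st : St) (o : Offer) (i : ℕ) : Prop := ∀ b, (piece st o b i).Nonempty

open Classical in
noncomputable def fixI (st : St) (o : Offer) (i : ℕ) : ℕ :=
  if GoodI st o i then i else if h : ∃ j, GoodI st o j then h.choose else 0

noncomputable def upd (st : St) (o : Offer) (i : ℕ) : St :=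
  fun b => piece st (fixO st o) b (fixI st (fixO st o) i)

def Good (st : St) : Prop := ∀ b, IsClopen (st b) ∧ (st b).Nonempty

theorem fixO_valid {st : St} (h : Good st) (o : Offer) : ValidO st (fixO st o) := by
  unfold fixO
  split_ifs with h1
  · exact h1
  · have h0 : ∀ b, piece st (fun _ _ => 0) b 0 = st b := by intro b; ext z; simp [piece]
    have h2 : ∀ b i, i ≠ 0 → piece st (fun _ _ => 0) b i = ∅ := by
      intro b i hi; ext z; simp [piece, hi.symm]
    constructor
    · intro b i
      by_cases hi : i = 0
      · subst hi; rw [h0]; exact (h b).1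
      · rw [h2 b i hi]; exact isClopen_empty
    · intro i b c hb
      by_cases hi : i = 0
      · subst hi; rw [h0]; exact (h c).2
      · rw [h2 b i hi] at hb; exact absurd hb (by simp)

theorem fixI_good {st : St} (h : Good st) (o : Offer) (i : ℕ) :
    GoodI st (fixO st o) (fixI st (fixO st o) i) := by
  unfold fixI
  split_ifs with h1 h2
  · exact h1
  · exact h2.choose_spec
  · exfalso
    obtain ⟨z, hz⟩ := (h false).2
    exact h2 ⟨_, fun b => (fixO_valid h o).2 _ false b ⟨z, hz, rfl⟩⟩

theorem upd_good {st : St} (h : Good st) (o : Offer) (i : ℕ) : Good (upd st o i) := fun b =>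
  ⟨(fixO_valid h o).1 _ _, fixI_good h o i b⟩

theorem upd_sub (st : St) (o : Offer) (i : ℕ) (b : Bool) : upd st o i b ⊆ st b := fun _ h => h.1

theorem upd_valid {st : St} {o : Offer} (ho : ValidO st o) (h : Good st) (i : ℕ) :
    ∃ j, GoodI st o j ∧ ∀ b, upd st o i b = piece st o b j := by
  have h1 : fixO st o = o := if_pos ho
  have := fixI_good h o i
  refine ⟨fixI st (fixO st o) i, ?_, fun b => ?_⟩
  · rw [h1] at this ⊢; exact this
  · unfold upd; rw [h1]

/-- The state after a (even length) history. -/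
noncomputable def stL (st0 : St) : List Mv → St
  | [] => st0
  | [_] => st0
  | i :: o :: l => upd (stL st0 l) o.1 i.2

noncomputable def run (st0 : St) (x : ℕ → Mv) (n : ℕ) : St := stL st0 (hist x (2 * n))

theorem run_zero (st0 : St) (x : ℕ → Mv) : run st0 x 0 = st0 := rfl

theorem run_succ (st0 : St) (x : ℕ → Mv) (n : ℕ) :
    run st0 x (n+1) = upd (run st0 x n) (x (2*n)).1 (x (2*n+1)).2 := rfl

theorem hist_two (x : ℕ → Mv) (n : ℕ) :
    hist x (2 * (n+1)) = x (2*n+1) :: x (2*n) :: hist x (2*n) := rfl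

theorem run_good {st0 : St} (h : Good st0) (x : ℕ → Mv) (n : ℕ) : Good (run st0 x n) := by
  induction n with
  | zero => exact h
  | succ n ih => rw [run_succ]; exact upd_good ih _ _

theorem run_anti (st0 : St) (x : ℕ → Mv) (b : Bool) : Antitone fun n => run st0 x n b :=
  antitone_nat_of_succ_le fun n => by rw [run_succ]; exact upd_sub _ _ _ _

open Classical in
noncomputable def lim (st0 : St) (x : ℕ → Mv) (b : Bool) : X := fun k =>
  decide (∃ n, ∀ z ∈ run st0 x n b, z k = true)

def Shrink (V : ℕ → Set X) : Prop := ∀ k, ∃ n, ∃ c, ∀ z ∈ V n, z k = c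

def W (S : Set X) (st0 : St) : Set (ℕ → Mv) :=
  {x | (∀ b, Shrink fun n => run st0 x n b) ∧ (lim st0 x false ∈ S ↔ lim st0 x true ∈ S)}

theorem lim_eq {st0 : St} {x : ℕ → Mv} {b : Bool} (h : Shrink fun n => run st0 x n b) {p : X}
    (hp : ∀ n, p ∈ run st0 x n b) : lim st0 x b = p := by
  classical
  funext k
  obtain ⟨n, c, hc⟩ := h k
  have h1 := hc p (hp n)
  unfold lim
  cases hpk : p k with
  | true =>
    refine decide_eq_true ?_
    exact ⟨n, fun z hz => by rw [hc z hz, ← h1, hpk]⟩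
  | false =>
    refine decide_eq_false ?_
    rintro ⟨m, hm⟩
    rw [hm p (hp m)] at hpk
    exact absurd hpk (by simp)

theorem exists_mem_all {V : ℕ → Set X} (ha : Antitone V) (hc : ∀ n, IsClosed (V n))
    (hn : ∀ n, (V n).Nonempty) : ∃ p, ∀ n, p ∈ V n := by
  have := IsCompact.nonempty_iInter_of_sequence_nonempty_isCompact_isClosed V
    (fun n => ha (Nat.le_succ n)) hn (hc 0).isCompact hc
  obtain ⟨p, hp⟩ := this
  exact ⟨p, fun n => mem_iInter.1 hp n⟩

theorem lim_mem {st0 : St} (hg : Good st0) {x : ℕ → Mv} {b : Bool}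
    (h : Shrink fun n => run st0 x n b) (n : ℕ) : lim st0 x b ∈ run st0 x n b := by
  obtain ⟨p, hp⟩ := exists_mem_all (run_anti st0 x b) (fun n => (run_good hg x n b).1.1)
    (fun n => (run_good hg x n b).2)
  rw [lim_eq h hp]; exact hp n

theorem shrink_of_inter {V : ℕ → Set X} (ha : Antitone V) (hc : ∀ n, IsClosed (V n)) (p : X)
    (h : ∀ q, (∀ n, q ∈ V n) → q = p) : Shrink V := by
  intro k
  by_contra hcon
  push Not at hcon
  have hcl : IsClosed {z : X | z k ≠ p k} := by
    have : IsClopen {z : X | z k ≠ p k} :=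
      (isClopen_discrete {a : Bool | a ≠ p k}).preimage (continuous_apply k)
    exact this.1
  obtain ⟨q, hq⟩ := exists_mem_all (V := fun n => V n ∩ {z | z k ≠ p k})
    (fun m n h => inter_subset_inter_left _ (ha h)) (fun n => (hc n).inter hcl)
    (fun n => by obtain ⟨z, hz, hz2⟩ := hcon n (p k); exact ⟨z, hz, hz2⟩)
  have := h q (fun n => (hq n).1)
  exact (hq 0).2 (by rw [this])

/-- Similarity -/
def Sim (S V U : Set X) : Prop :=
  ∃ f g : X → X, MapsTo f V U ∧ MapsTo g U V ∧ (∀ x ∈ V, g (f x) = x) ∧ (∀ y ∈ U, f (g y) = y) ∧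
    ContinuousOn f V ∧ ContinuousOn g U ∧ ∀ x ∈ V, (f x ∈ S ↔ x ∈ S)

def OffWins (S : Set X) (st0 : St) : Prop :=
  ∃ s : List Mv → Mv, ∀ x : ℕ → Mv, (∀ n, Even n → x n = s (hist x n)) → x ∈ W S st0
def ChWins (S : Set X) (st0 : St) : Prop :=
  ∃ s : List Mv → Mv, ∀ x : ℕ → Mv, (∀ n, ¬ Even n → x n = s (hist x n)) → x ∉ W S st0

theorem det {S : Set X} (hS : @MeasurableSet X (borel X) S) (st0 : St) :
    OffWins S st0 ∨ ChWins S st0 := by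
  letI : Inhabited Mv := ⟨(fun _ _ => 0, 0)⟩
  apply borel_det_list
  letI m : MeasurableSpace (ℕ → Mv) := MeasurableSpace.generateFrom
      {s : Set (ℕ → Mv) | ∃ (n : ℕ) (B : Set (List Mv)), s = {x | hist x n ∈ B}}
  have hb : ∀ (n : ℕ) (P : St → Prop), MeasurableSet {x | P (run st0 x n)} := fun n P =>
    MeasurableSpace.measurableSet_generateFrom ⟨2*n, {l | P (stL st0 l)}, rfl⟩
  have hlim : ∀ b, Measurable fun x => lim st0 x b := by
    intro b
    rw [measurable_pi_iff]
    intro k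
    apply measurable_to_bool
    have : (fun x => lim st0 x b k) ⁻¹' {true} = ⋃ n, {x | ∀ z ∈ run st0 x n b, z k = true} := by
      ext x; simp [lim]
    rw [this]
    exact MeasurableSet.iUnion fun n => hb n fun st => ∀ z ∈ st b, z k = true
  have hS' : MeasurableSet S := by
    rw [← BorelSpace.measurable_eq (α := X)] at hS; exact hS
  have e : W S st0 = (⋂ b, ⋂ k, ⋃ n, {x | ∃ c, ∀ z ∈ run st0 x n b, z k = c}) ∩
      {x | lim st0 x false ∈ S ↔ lim st0 x true ∈ S} := by
    ext x; simp [W, Shrink]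
  change MeasurableSet (W S st0)
  rw [e]
  refine MeasurableSet.inter ?_ ?_
  · exact MeasurableSet.iInter fun b => MeasurableSet.iInter fun k => MeasurableSet.iUnion fun n =>
      hb n fun st => ∃ c, ∀ z ∈ st b, z k = c
  · exact MeasurableSet.iff (hlim false hS') (hlim true hS')

/-- The play generated by a rule. -/
noncomputable def playL {A : Type} (s : List A → A) : ℕ → List A
  | 0 => []
  | n+1 => s (playL s n) :: playL s n

theorem exists_play {A : Type} (s : List A → A) : ∃ x : ℕ → A, ∀ n, x n = s (hist x n) := by
  refine ⟨fun n => s (playL s n), fun n => ?_⟩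
  have : ∀ n, hist (fun n => s (playL s n)) n = playL s n := by
    intro n
    induction n with
    | zero => rfl
    | succ n ih => rw [hist, ih]; rfl
  rw [this]

theorem offWins_sim {S : Set X} {st0 : St} (hg : Good st0) (h : OffWins S st0) :
    Sim S (st0 false) (st0 true) := by
  classical
  obtain ⟨σ, hσ⟩ := h
  let rule : Bool → X → List Mv → Mv := fun b p l =>
    if Even l.length then σ l else
      match l with
      | [] => (fun _ _ => 0, 0)
      | o :: l => (fun _ _ => 0, fixO (stL st0 l) o.1 b p)
  choose P hP using fun b p => exists_play (rule b p)
  have hev : ∀ b p n, Even n → P b p n = σ (hist (P b p) n) := by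
    intro b p n hn
    rw [hP b p n]
    simp [rule, length_hist, hn]
  have hodd : ∀ b p n, P b p (2*n+1) =
      (fun _ _ => 0, fixO (run st0 (P b p) n) (P b p (2*n)).1 b p) := by
    intro b p n
    have hn : ¬ Even (2*n+1) := by simp
    rw [hP b p (2*n+1)]
    simp only [rule, length_hist, if_neg hn]
    rfl
  have hW : ∀ b p, P b p ∈ W S st0 := fun b p => hσ _ (hev b p)
  have hmem : ∀ b p, p ∈ st0 b → ∀ n, p ∈ run st0 (P b p) n b := by
    intro b p hp n
    induction n with
    | zero => exact hp
    | succ n ih =>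
      rw [run_succ, hodd]
      have hg' := run_good hg (P b p) n
      have : GoodI (run st0 (P b p) n) (fixO (run st0 (P b p) n) (P b p (2*n)).1)
        (fixO (run st0 (P b p) n) (P b p (2*n)).1 b p) := fun c =>
          (fixO_valid hg' _).2 _ b c ⟨p, ih, rfl⟩
      refine ⟨ih, ?_⟩
      unfold fixI
      rw [if_pos this]
  have hcompat : ∀ b p c q, p ∈ st0 b → ∀ n, q ∈ run st0 (P b p) n c →
      hist (P c q) (2*n) = hist (P b p) (2*n) := by
    intro b p c q hp n
    induction n with
    | zero => intro _; rfl
    | succ n ih =>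
      intro hq
      have hq1 := run_anti st0 (P b p) c (Nat.le_succ n) hq
      have hi := ih hq1
      have ho : P c q (2*n) = P b p (2*n) := by
        rw [hev _ _ _ (by simp), hev b p _ (by simp), hi]
      have hr : run st0 (P c q) n = run st0 (P b p) n := by unfold run; rw [hi]
      have hlab : fixO (run st0 (P b p) n) (P b p (2*n)).1 c q =
          fixO (run st0 (P b p) n) (P b p (2*n)).1 b p := by
        have h1 := hmem b p hp (n+1)
        rw [run_succ] at h1 hq
        exact hq.2.trans h1.2.symm
      rw [hist_two, hist_two, hodd, hodd, hr, ho, hi, hlab]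
  let F : Bool → X → X := fun b p => lim st0 (P b p) (!b)
  have hF : ∀ b p n, F b p ∈ run st0 (P b p) n (!b) := fun b p n =>
    lim_mem hg ((hW b p).1 (!b)) n
  have hlim : ∀ b p, p ∈ st0 b → lim st0 (P b p) b = p := fun b p hp =>
    lim_eq ((hW b p).1 b) (hmem b p hp)
  have hinv : ∀ b p, p ∈ st0 b → F (!b) (F b p) = p := by
    intro b p hp
    rw [← hlim b p hp]
    have hr : ∀ n, run st0 (P (!b) (F b p)) n = run st0 (P b p) n := by
      intro n; unfold run; rw [hcompat b p (!b) (F b p) hp n (hF b p n)]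
    have : F (!b) (F b p) = lim st0 (P b p) b := by
      change lim st0 (P (!b) (F b p)) (!!b) = _
      unfold lim
      simp only [hr, Bool.not_not]
    rw [hlim b p hp] at this ⊢
    exact this
  have hcont : ∀ b, ContinuousOn (F b) (st0 b) := by
    intro b
    rw [continuousOn_pi]
    intro k p hp
    obtain ⟨n, c, hc⟩ := (hW b p).1 (!b) k
    have hnb : run st0 (P b p) n b ∈ nhdsWithin p (st0 b) :=
      mem_nhdsWithin_of_mem_nhds ((run_good hg (P b p) n b).1.2.mem_nhds (hmem b p hp n))
    refine (tendsto_const_nhds (x := F b p k)).congr' ?_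
    filter_upwards [hnb] with q hq
    have hr : run st0 (P b q) n = run st0 (P b p) n := by
      unfold run; rw [hcompat b p b q hp n hq]
    have h2 := hF b q n
    rw [hr] at h2
    rw [hc _ h2, hc _ (hF b p n)]
  refine ⟨F false, F true, fun p _ => hF false p 0, fun p _ => hF true p 0, hinv false, hinv true,
    hcont false, hcont true, fun p hp => ?_⟩
  have := (hW false p).2
  rw [hlim false p hp] at this
  exact this.symm

theorem chWins_run {S : Set X} {st0 : St} (hg : Good st0) (h : ChWins S st0) (F : ℕ → St → Offer) :
    ∃ x : ℕ → Mv, (∀ n, (x (2*n)).1 = F n (run st0 x n)) ∧ x ∉ W S st0 ∧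
      ∀ n, ¬ Sim S (run st0 x n false) (run st0 x n true) := by
  classical
  obtain ⟨τ, hτ⟩ := h
  let rule : (ℕ → St → Offer) → List Mv → Mv := fun F l =>
    if Even l.length then (F (l.length/2) (stL st0 l), 0) else τ l
  choose P hP using fun F => exists_play (rule F)
  have hev : ∀ F n, P F (2*n) = (F n (run st0 (P F) n), 0) := by
    intro F n
    rw [hP F (2*n)]
    simp [rule, length_hist, run]
  have hodd : ∀ F n, ¬ Even n → P F n = τ (hist (P F) n) := by
    intro F n hn
    rw [hP F n]
    simp only [rule, length_hist, if_neg hn]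
  have hW : ∀ F, P F ∉ W S st0 := fun F => hτ _ (hodd F)
  refine ⟨P F, fun n => by rw [hev], hW F, fun m hsim => ?_⟩
  obtain ⟨f, g, hf, hgm, hgf, hfg, hfc, hgc, hfS⟩ := hsim
  let F' : ℕ → St → Offer := fun n st => if n < m then F n st else fun b z =>
    if b then (g z (n-m)).toNat else (z (n-m)).toNat
  have hagree : ∀ n ≤ m, hist (P F') (2*n) = hist (P F) (2*n) := by
    intro n hn
    induction n with
    | zero => rfl
    | succ n ih =>
      have hi := ih (by omega)
      have hr : run st0 (P F') n = run st0 (P F) n := by unfold run; rw [hi]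
      have ho : P F' (2*n) = P F (2*n) := by
        rw [hev, hev, hr]; simp [F', show n < m by omega]
      have h1 : P F' (2*n+1) = P F (2*n+1) := by
        rw [hodd F' _ (by simp), hodd F _ (by simp)]
        change τ (P F' (2*n) :: hist (P F') (2*n)) = τ (P F (2*n) :: hist (P F) (2*n))
        rw [ho, hi]
      rw [hist_two, hist_two, h1, ho, hi]
  have hrm : run st0 (P F') m = run st0 (P F) m := by unfold run; rw [hagree m le_rfl]
  rw [← hrm] at hf hgm hgf hfg hfc hgc hfS
  set R := run st0 (P F') with hR
  have hanti : ∀ b, Antitone fun n => R n b := run_anti st0 (P F')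
  have hgood : ∀ n, Good (R n) := run_good hg (P F')
  have key : ∀ j, (∀ y, y ∈ R (m+j) true ↔ y ∈ R m true ∧ g y ∈ R (m+j) false) ∧
      ∀ k < j, ∃ c, ∀ z ∈ R (m+j) false, z k = c := by
    intro j
    induction j with
    | zero => exact ⟨fun y => ⟨fun h => ⟨h, hgm h⟩, fun h => h.1⟩, fun k hk => by omega⟩
    | succ j ih =>
      have hsub : ∀ b, R (m+j) b ⊆ R m b := fun b => hanti b (by omega)
      set o : Offer := fun b z => if b then (g z j).toNat else (z j).toNat with ho
      have hF' : (P F' (2*(m+j))).1 = o := by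
        rw [hev]; simp [F', ho]
      have pT : ∀ i, piece (R (m+j)) o true i = {y | y ∈ R (m+j) true ∧ (g y j).toNat = i} := by
        intro i; ext; simp [piece, ho]
      have pF : ∀ i, piece (R (m+j)) o false i = {y | y ∈ R (m+j) false ∧ (y j).toNat = i} := by
        intro i; ext; simp [piece, ho]
      have hv : ValidO (R (m+j)) o := by
        have hcl : ∀ i, IsClopen {z : X | (z j).toNat = i} := fun i =>
          (isClopen_discrete {a : Bool | a.toNat = i}).preimage (continuous_apply j)
        constructor
        · intro b i
          cases b with
          | false =>
            rw [pF]
            exact (hgood (m+j) false).1.inter (hcl i)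
          | true =>
            rw [pT]
            have hc' := hgc.mono (hsub true)
            have h0 := (hgood (m+j) true).1
            exact ⟨hc'.preimage_isClosed_of_isClosed h0.1 (hcl i).1,
              hc'.isOpen_inter_preimage h0.2 (hcl i).2⟩
        · have hTF : ∀ i, (piece (R (m+j)) o true i).Nonempty ↔ (piece (R (m+j)) o false i).Nonempty := by
            intro i
            rw [pT, pF]
            constructor
            · rintro ⟨y, hy, hi⟩
              exact ⟨g y, ((ih.1 y).1 hy).2, hi⟩
            · rintro ⟨z, hz, hi⟩
              have hz' := hgf z (hsub _ hz)
              exact ⟨f z, (ih.1 _).2 ⟨hf (hsub _ hz), by rw [hz']; exact hz⟩, by rw [hz']; exact hi⟩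
          intro i b c
          cases b <;> cases c <;> simp [hTF]
      obtain ⟨i, hi, hu⟩ := upd_valid hv (hgood (m+j)) (P F' (2*(m+j)+1)).2
      have hs : ∀ b, R (m+(j+1)) b = piece (R (m+j)) o b i := by
        intro b
        rw [← hu b, ← hF']
        rfl
      constructor
      · intro y
        rw [hs, hs, pT, pF]
        simp only [mem_setOf_eq, ih.1 y]
        tauto
      · intro k hk
        rw [hs, pF]
        by_cases hkj : k < j
        · obtain ⟨c, hc⟩ := ih.2 k hkj
          exact ⟨c, fun z hz => hc z hz.1⟩
        · have : k = j := by omega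
          subst this
          refine ⟨decide (i = 1), fun z hz => ?_⟩
          rw [← hz.2]
          cases z k <;> simp
  have hsF : Shrink fun n => R n false := fun k => ⟨m+(k+1), (key (k+1)).2 k (by omega)⟩
  have hlF : ∀ n, lim st0 (P F') false ∈ R n false := lim_mem hg hsF
  set p := lim st0 (P F') false with hp
  have hfp : ∀ n, f p ∈ R n true := by
    intro n
    have h1 : f p ∈ R (m+n) true := ((key n).1 _).2 ⟨hf (hlF m), by rw [hgf _ (hlF m)]; exact hlF _⟩
    exact hanti true (by omega) h1
  have hsT : Shrink fun n => R n true := by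
    refine shrink_of_inter (hanti true) (fun n => (hgood n true).1.1) (f p) fun q hq => ?_
    have h1 : p = g q := lim_eq hsF fun n => by
      have := (((key n).1 q).1 (hq _)).2
      exact hanti false (by omega : n ≤ m + n) this
    rw [h1, hfg q (hq m)]
  apply hW F'
  refine ⟨fun b => by cases b; exacts [hsF, hsT], ?_⟩
  rw [lim_eq hsT hfp]
  exact (hfS p (hlF m)).symm

end SFG

namespace SFG
open Arena MeasureTheory

def pre (M : ℕ) (x : X) : Fin M → Bool := fun i => x i

theorem continuous_pre (M : ℕ) : Continuous (pre M) :=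
  continuous_pi fun i => continuous_apply (i : ℕ)

theorem pre_eq_iff {M : ℕ} {x y : X} : pre M x = pre M y ↔ ∀ i < M, x i = y i :=
  ⟨fun h i hi => congrFun h ⟨i, hi⟩, fun h => funext fun i => h i i.2⟩

theorem isClopen_pre (M : ℕ) (F : Set (Fin M → Bool)) : IsClopen {x | pre M x ∈ F} :=
  (isClopen_discrete F).preimage (continuous_pre M)

theorem open_pre {V : Set X} (hV : IsOpen V) {x : X} (hx : x ∈ V) :
    ∃ M, ∀ y, pre M y = pre M x → y ∈ V := by
  obtain ⟨I, u, h1, h2⟩ := isOpen_pi_iff.1 hV x hx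
  refine ⟨I.sup id + 1, fun y hy => h2 fun i hi => ?_⟩
  rw [pre_eq_iff] at hy
  rw [hy i (Nat.lt_succ_of_le (Finset.le_sup (f := id) hi))]
  exact (h1 i hi).2

def cylS (M : ℕ) (F : Finset (Fin M → Bool)) : Set X := {x | pre M x ∈ F}

theorem clopen_eq {V : Set X} (hV : IsClopen V) : ∃ M0, ∀ M ≥ M0, ∃ F, V = cylS M F := by
  classical
  let A : ℕ → Set X := fun M => {x | ∀ y, pre M y = pre M x → (y ∈ V ↔ x ∈ V)}
  have hmono : Monotone A := by
    intro M N h x hx y hy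
    exact hx y (pre_eq_iff.2 fun i hi => pre_eq_iff.1 hy i (by omega))
  have hop : ∀ M, IsOpen (A M) := by
    intro M
    have : A M = {x | pre M x ∈ {w | ∀ y z, pre M y = w → pre M z = w → (y ∈ V ↔ z ∈ V)}} := by
      ext x
      constructor
      · intro hx y z hy hz
        rw [hx y hy, hx z hz]
      · intro hx y hy
        exact hx y x hy rfl
    rw [this]
    exact (isClopen_pre M _).2
  have hcov : univ ⊆ ⋃ M, A M := by
    intro x _
    rw [mem_iUnion]
    by_cases hx : x ∈ V
    · obtain ⟨M, hM⟩ := open_pre hV.2 hx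
      exact ⟨M, fun y hy => ⟨fun _ => hx, fun _ => hM y hy⟩⟩
    · obtain ⟨M, hM⟩ := open_pre hV.1.isOpen_compl hx
      exact ⟨M, fun y hy => ⟨fun h => absurd h (hM y hy), fun h => absurd h hx⟩⟩
  obtain ⟨M0, h0⟩ := isCompact_univ.elim_directed_cover A hop hcov hmono.directed_le
  refine ⟨M0, fun M hM => ⟨Finset.univ.filter fun w => ∃ x ∈ V, pre M x = w, ?_⟩⟩
  ext x
  simp only [cylS, Finset.mem_filter, Finset.mem_univ, true_and, mem_setOf_eq]
  constructor
  · exact fun h => ⟨x, h, rfl⟩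
  · rintro ⟨y, hy, h⟩
    exact (hmono hM (h0 (mem_univ y)) x h.symm).2 hy

noncomputable def coin : Measure Bool := (PMF.uniformOfFintype Bool).toMeasure

instance : IsProbabilityMeasure coin := by unfold coin; infer_instance

noncomputable def mu : Measure X := Measure.infinitePi fun _ : ℕ => coin

instance : IsProbabilityMeasure mu := by unfold mu; infer_instance

theorem coin_singleton (c : Bool) : coin {c} = 2⁻¹ := by
  unfold coin
  rw [PMF.toMeasure_apply_singleton _ _ (measurableSet_singleton c)]
  simp

theorem mu_word (M : ℕ) (w : Fin M → Bool) : mu.real {x | pre M x = w} = 1 / 2 ^ M := by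
  have h : {x : X | pre M x = w} =
      Set.pi (Finset.range M : Set ℕ) fun i => {if h : i < M then w ⟨i, h⟩ else false} := by
    ext x
    simp only [mem_setOf_eq, Set.mem_pi, Finset.coe_range, mem_Iio, mem_singleton_iff]
    constructor
    · rintro rfl i hi
      simp [hi, pre]
    · intro h
      funext i
      have := h i i.2
      simpa [pre] using this
  unfold Measure.real mu
  rw [h, Measure.infinitePi_pi _ (fun i _ => measurableSet_singleton _)]
  simp [coin_singleton]

theorem IsClopen.meas {V : Set X} (h : IsClopen V) : MeasurableSet V := h.1.measurableSet

theorem mu_cyl (M : ℕ) (F : Finset (Fin M → Bool)) : mu.real (cylS M F) = F.card / 2 ^ M := by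
  have : cylS M F = ⋃ w ∈ F, {x | pre M x = w} := by
    ext x; simp [cylS]
  rw [this, measureReal_biUnion_finset]
  · simp [mu_word, div_eq_mul_inv]
  · intro a _ b _ hab
    rw [Function.onFun, Set.disjoint_left]
    intro x hx hx'
    exact hab (hx.symm.trans hx')
  · intro w _
    exact IsClopen.meas (isClopen_pre M {w})

theorem mu_pos {V : Set X} (h : IsClopen V) : 0 < mu.real V ↔ V.Nonempty := by
  constructor
  · intro h1
    by_contra hc
    rw [not_nonempty_iff_eq_empty.1 hc] at h1
    simp at h1
  · rintro ⟨x, hx⟩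
    obtain ⟨M, hM⟩ := open_pre h.2 hx
    have h1 : mu.real {y | pre M y = pre M x} ≤ mu.real V := measureReal_mono hM
    rw [mu_word] at h1
    exact lt_of_lt_of_le (by positivity) h1

/-- Dyadic numbers -/
def Dy (r : ℝ) : Prop := ∃ M a : ℕ, r = a / 2 ^ M

theorem Dy.of_clopen {V : Set X} (h : IsClopen V) : Dy (mu.real V) := by
  obtain ⟨M, hM⟩ := clopen_eq h
  obtain ⟨F, rfl⟩ := hM M le_rfl
  exact ⟨M, F.card, mu_cyl M F⟩

theorem Dy.half {r : ℝ} (h : Dy r) : Dy (r / 2) := by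
  obtain ⟨M, a, rfl⟩ := h
  exact ⟨M+1, a, by rw [pow_succ, div_div]⟩

theorem Dy.min {r s : ℝ} (h : Dy r) (h' : Dy s) : Dy (min r s) := by
  rcases min_choice r s with e | e <;> rw [e] <;> assumption

theorem exists_sub {U : Set X} (hU : IsClopen U) {r : ℝ} (hr : Dy r) (hle : r ≤ mu.real U) :
    ∃ V ⊆ U, IsClopen V ∧ mu.real V = r := by
  obtain ⟨M0, h0⟩ := clopen_eq hU
  obtain ⟨N, a, rfl⟩ := hr
  obtain ⟨F, rfl⟩ := h0 (M0 + N) (by omega)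
  rw [mu_cyl] at hle
  have e : (a : ℝ) / 2 ^ N = ((a * 2 ^ M0 : ℕ) : ℝ) / 2 ^ (M0 + N) := by
    push_cast
    rw [pow_add, mul_comm (2 ^ M0 : ℝ) (2 ^ N), mul_div_mul_right _ _ (by positivity)]
  rw [e] at hle ⊢
  have hc : a * 2 ^ M0 ≤ F.card := by
    have := (div_le_div_iff_of_pos_right (by positivity : (0:ℝ) < 2 ^ (M0 + N))).1 hle
    exact_mod_cast this
  obtain ⟨G, hG, hGc⟩ := Finset.exists_subset_card_eq hc
  refine ⟨cylS (M0+N) G, fun x hx => hG hx, isClopen_pre (M0+N) (G : Set (Fin (M0+N) → Bool)), ?_⟩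
  rw [mu_cyl, hGc]

theorem sim_of_eq {S : Set X} (hS : ∀ x ∈ S, ∀ y : X, {n | x n ≠ y n}.Finite → y ∈ S)
    {V U : Set X} (hV : IsClopen V) (hU : IsClopen U) (h : mu.real V = mu.real U) : Sim S V U := by
  classical
  obtain ⟨M1, h1⟩ := clopen_eq hV
  obtain ⟨M2, h2⟩ := clopen_eq hU
  obtain ⟨F, rfl⟩ := h1 (max M1 M2) (le_max_left _ _)
  obtain ⟨G, rfl⟩ := h2 (max M1 M2) (le_max_right _ _)
  generalize max M1 M2 = M at F G h
  rw [mu_cyl, mu_cyl] at h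
  have hc : F.card = G.card := by
    have := (div_left_inj' (by positivity : (2:ℝ) ^ M ≠ 0)).1 h
    exact_mod_cast this
  let e : Equiv.Perm (Fin M → Bool) := (Finset.equivOfCardEq hc).extendSubtype
  have heF : ∀ w ∈ F, e w ∈ G := fun w hw => Equiv.extendSubtype_mem _ w hw
  have hecl : ∀ w, w ∉ F → e w ∉ G := fun w hw => Equiv.extendSubtype_not_mem _ w hw
  let T : Equiv.Perm (Fin M → Bool) → X → X := fun e x n =>
    if h : n < M then e (pre M x) ⟨n, h⟩ else x n
  have hT : ∀ e x, pre M (T e x) = e (pre M x) := by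
    intro e x; funext i; simp [T, pre]
  have hTc : ∀ e, Continuous (T e) := by
    intro e
    refine continuous_pi fun n => ?_
    by_cases hn : n < M
    · simp only [T, dif_pos hn]
      exact (continuous_of_discreteTopology (f := fun w : Fin M → Bool => e w ⟨n, hn⟩)).comp
        (continuous_pre M)
    · simp only [T, dif_neg hn]
      exact continuous_apply n
  have hTT : ∀ (e : Equiv.Perm (Fin M → Bool)) x, T e.symm (T e x) = x := by
    intro e x
    funext n
    by_cases hn : n < M
    · have : T e.symm (T e x) n = e.symm (pre M (T e x)) ⟨n, hn⟩ := by simp only [T, dif_pos hn]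
      rw [this, hT, Equiv.symm_apply_apply]; rfl
    · simp only [T, dif_neg hn]
  have hTS : ∀ e x, x ∈ S → T e x ∈ S := by
    intro e x hx
    refine hS x hx _ ((Set.finite_Iio M).subset fun n hn => ?_)
    by_contra hc
    apply hn
    have : ¬ n < M := hc
    simp only [T, dif_neg this]
  refine ⟨T e, T e.symm, ?_, ?_, fun x _ => hTT e x, fun x _ => hTT e.symm x,
    (hTc _).continuousOn, (hTc _).continuousOn, fun x _ => ⟨fun h => ?_, hTS e x⟩⟩
  · intro x hx
    change pre M (T e x) ∈ G
    rw [hT]; exact heF _ hx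
  · intro x hx
    change pre M (T e.symm x) ∈ F
    rw [hT]
    by_contra hc
    apply hecl _ hc
    rw [Equiv.apply_symm_apply]; exact hx
  · have := hTS e.symm _ h
    rwa [hTT] at this

theorem zero_one {S : Set X} (hm : MeasurableSet S)
    (hS : ∀ x ∈ S, ∀ y : X, {n | x n ≠ y n}.Finite → y ∈ S) : mu S = 0 ∨ mu S = 1 := by
  let s : ℕ → MeasurableSpace X := fun i => MeasurableSpace.comap (fun x : X => x i) inferInstance
  have hind : ProbabilityTheory.iIndep s mu := by
    have := ProbabilityTheory.iIndepFun_infinitePi (P := fun _ : ℕ => coin)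
      (X := fun _ : ℕ => (id : Bool → Bool)) (fun i => measurable_id)
    exact this
  apply ProbabilityTheory.measure_zero_or_one_of_measurableSet_limsup_atTop (s := s)
    (fun n => (measurable_pi_apply n).comap_le) hind
  rw [Filter.limsup_eq_iInf_iSup_of_nat, MeasurableSpace.measurableSet_iInf]
  intro n
  let g : X → X := fun x i => if i < n then false else x i
  have hg : @Measurable X X (⨆ i, ⨆ (_ : i ≥ n), s i) _ g := by
    refine @measurable_pi_iff _ _ _ (_) _ _ |>.2 fun i => ?_
    by_cases hi : i < n
    · simp only [g, if_pos hi]; exact @measurable_const _ _ _ (_) _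
    · simp only [g, if_neg hi]
      have h1 : s i ≤ ⨆ i, ⨆ (_ : i ≥ n), s i := le_iSup₂_of_le i (by omega) le_rfl
      exact (@comap_measurable _ _ _ (fun x : X => x i)).mono h1 le_rfl
  have e : S = g ⁻¹' S := by
    ext x
    have hd : {i | x i ≠ g x i}.Finite := (Set.finite_Iio n).subset fun i hi => by
      by_contra hc
      apply hi
      have : ¬ i < n := hc
      simp [g, this]
    refine ⟨fun h => hS x h _ hd, fun h => hS _ h x ?_⟩
    have : {i | g x i ≠ x i} = {i | x i ≠ g x i} := by ext; simp [eq_comm]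
    rw [this]; exact hd
  rw [e]
  exact hg hm

theorem exists_K {S : Set X} (hm : MeasurableSet S)
    (hS : ∀ x ∈ S, ∀ y : X, {n | x n ≠ y n}.Finite → y ∈ S) {ε : ℝ} (hε : 0 < ε) :
    ∃ K, IsClosed K ∧ mu.real Kᶜ < ε ∧ ∀ x ∈ K, ∀ y ∈ K, (x ∈ S ↔ y ∈ S) := by
  have main : ∀ T : Set X, MeasurableSet T → mu T = 1 → ∃ K ⊆ T, IsClosed K ∧ mu.real Kᶜ < ε := by
    intro T hT h1
    obtain ⟨K, hK, hKc, h⟩ := hT.exists_isClosed_lt_add (μ := mu) (ε := ENNReal.ofReal ε)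
      (by rw [h1]; simp) (by simpa using hε)
    refine ⟨K, hK, hKc, ?_⟩
    rw [h1] at h
    have h2 : 1 < mu.real K + ε := by
      have := ENNReal.toReal_strict_mono (by finiteness) h
      rw [ENNReal.toReal_add (by finiteness) (by finiteness), ENNReal.toReal_ofReal hε.le] at this
      simpa [Measure.real] using this
    rw [probReal_compl_eq_one_sub hKc.measurableSet]
    linarith
  rcases zero_one hm hS with h | h
  · have h' : mu Sᶜ = 1 := (prob_compl_eq_one_iff hm).2 h
    obtain ⟨K, h1, h2, h3⟩ := main Sᶜ hm.compl h'
    exact ⟨K, h2, h3, fun x hx y hy => ⟨fun h => absurd h (h1 hx), fun h => absurd h (h1 hy)⟩⟩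
  · obtain ⟨K, h1, h2, h3⟩ := main S hm h
    exact ⟨K, h2, h3, fun x hx y hy => ⟨fun _ => h1 hy, fun _ => h1 hx⟩⟩

theorem exists_K' {K : Set X} (hK : IsClosed K) {ζ : ℝ} (hζ : 0 < ζ) :
    ∃ K', IsClopen K' ∧ K ⊆ K' ∧ mu.real (K' \ K) < ζ := by
  obtain ⟨O, hO, hOo, h⟩ := K.exists_isOpen_lt_add (μ := mu) (ε := ENNReal.ofReal ζ)
      (by finiteness) (by simpa using hζ)
  obtain ⟨C, hC, h1, h2⟩ := exists_clopen_of_closed_subset_open hK hOo hO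
  refine ⟨C, hC, h1, ?_⟩
  rw [measureReal_diff h1 hK.measurableSet]
  have h3 : mu.real C ≤ mu.real O := measureReal_mono h2
  have h4 : mu.real O < mu.real K + ζ := by
    have := ENNReal.toReal_strict_mono (by finiteness) h
    rw [ENNReal.toReal_add (by finiteness) (by finiteness), ENNReal.toReal_ofReal hζ.le] at this
    exact this
  linarith

end SFG

namespace SFG
open Arena MeasureTheory

def sel (A B C D : Set X) : ℕ → Set X
  | 0 => A
  | 1 => B
  | 2 => C
  | 3 => D
  | _ => ∅

theorem lab4 {V A B C D : Set X} (h : ∀ z, z ∈ V ↔ z ∈ A ∨ z ∈ B ∨ z ∈ C ∨ z ∈ D)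
    (hAB : ∀ z ∈ A, z ∉ B) (hAC : ∀ z ∈ A, z ∉ C) (hAD : ∀ z ∈ A, z ∉ D) (hBC : ∀ z ∈ B, z ∉ C)
    (hBD : ∀ z ∈ B, z ∉ D) (hCD : ∀ z ∈ C, z ∉ D) :
    ∃ l : X → ℕ, ∀ i, {z | z ∈ V ∧ l z = i} = sel A B C D i := by
  classical
  refine ⟨fun z => if z ∈ A then 0 else if z ∈ B then 1 else if z ∈ C then 2 else 3, fun i => ?_⟩
  ext z
  have h0 := h z
  have h1 := hAB z
  have h2 := hAC z
  have h3 := hAD z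
  have h4 := hBC z
  have h5 := hBD z
  have h6 := hCD z
  rcases i with _ | _ | _ | _ | i <;> simp only [mem_setOf_eq, sel, mem_empty_iff_false] <;>
    by_cases hA : z ∈ A <;> by_cases hB : z ∈ B <;> by_cases hC : z ∈ C <;> by_cases hD : z ∈ D <;>
    simp_all

theorem sel_clopen {A B C D : Set X} (hA : IsClopen A) (hB : IsClopen B) (hC : IsClopen C)
    (hD : IsClopen D) (i : ℕ) : IsClopen (sel A B C D i) := by
  rcases i with _ | _ | _ | _ | i <;> simp only [sel] <;> first | assumption | exact isClopen_empty

def Inv (K V U : Set X) : Prop :=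
  mu.real (V \ K) + mu.real (U \ K) < mu.real V ∧ mu.real (V \ K) + mu.real (U \ K) < mu.real U

theorem split_meas {V C : Set X} (hC : IsClopen C) :
    mu.real (V ∩ C) + mu.real (V \ C) = mu.real V :=
  measureReal_inter_add_diff (IsClopen.meas hC)

theorem sub_meas {V C : Set X} (hC : IsClopen C) (h : C ⊆ V) :
    mu.real C + mu.real (V \ C) = mu.real V := by
  rw [← split_meas hC (V := V), inter_eq_self_of_subset_right h]

theorem step {K V U : Set X} (hK : IsClosed K) (hV : IsClopen V) (hU : IsClopen U)
    (h : Inv K V U) (k : ℕ) : ∃ lv lu : X → ℕ, (∀ i, IsClopen {z | z ∈ V ∧ lv z = i}) ∧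
      (∀ i, IsClopen {z | z ∈ U ∧ lu z = i}) ∧
      ∀ i, mu.real {z | z ∈ V ∧ lv z = i} = mu.real {z | z ∈ U ∧ lu z = i} ∨
        (Inv K {z | z ∈ V ∧ lv z = i} {z | z ∈ U ∧ lu z = i} ∧
          ∃ c : Bool, ∀ z, z ∈ V → lv z = i → z k = c) := by
  obtain ⟨h1, h2⟩ := h
  set v := mu.real V with hv
  set u := mu.real U with hu
  set e := mu.real (V \ K) + mu.real (U \ K) with he
  obtain ⟨δ, hδ, hδv, hδu⟩ : ∃ δ : ℝ, 0 < δ ∧ δ ≤ v - e ∧ δ ≤ u - e :=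
    ⟨min (v-e) (u-e), lt_min (by linarith) (by linarith), min_le_left _ _, min_le_right _ _⟩
  obtain ⟨K', hK', hKK, hζ⟩ := exists_K' hK (ζ := δ/5) (by linarith)
  have hn : ∀ A : Set X, 0 ≤ mu.real A := fun A => measureReal_nonneg
  have hα : mu.real (V \ K') ≤ mu.real (V \ K) := measureReal_mono (diff_subset_diff_right hKK)
  have hVK : IsClopen (V \ K') := hV.diff hK'
  obtain ⟨U1, hU1, hU1c, hU1m⟩ := exists_sub hU (Dy.of_clopen hVK) (by
    have := hn (U \ K); linarith)
  have hβ : mu.real ((U \ U1) \ K') ≤ mu.real (U \ K) :=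
    measureReal_mono fun z hz => ⟨hz.1.1, fun hh => hz.2 (hKK hh)⟩
  have hRc : IsClopen (U \ U1) := hU.diff hU1c
  have hRK : IsClopen ((U \ U1) \ K') := hRc.diff hK'
  have hVi : IsClopen (V ∩ K') := hV.inter hK'
  have e1 := split_meas hK' (V := V)
  have e2 := sub_meas hU1c hU1
  have e3 := split_meas hK' (V := U \ U1)
  obtain ⟨V1, hV1, hV1c, hV1m⟩ := exists_sub hVi (Dy.of_clopen hRK) (by linarith)
  have e4 := sub_meas hV1c hV1
  set V' := (V ∩ K') \ V1 with hV'
  set U' := (U \ U1) ∩ K' with hU'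
  have hV'c : IsClopen V' := hVi.diff hV1c
  have hU'c : IsClopen U' := hRc.inter hK'
  have hmV' : δ ≤ mu.real V' := by linarith
  have hmU' : δ ≤ mu.real U' := by linarith
  have hkc : ∀ s : Bool, IsClopen {z : X | z k = s} := fun s =>
    (isClopen_discrete {a : Bool | a = s}).preimage (continuous_apply k)
  have hs : ∃ s : Bool, mu.real (V' \ {z : X | z k = s}) ≤ mu.real (V' ∩ {z : X | z k = s}) := by
    have f1 : V' \ {z : X | z k = true} = V' ∩ {z : X | z k = false} := by ext z; simp
    have f2 : V' \ {z : X | z k = false} = V' ∩ {z : X | z k = true} := by ext z; simp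
    rcases le_total (mu.real (V' ∩ {z : X | z k = false})) (mu.real (V' ∩ {z : X | z k = true}))
      with h | h
    · exact ⟨true, by rw [f1]; exact h⟩
    · exact ⟨false, by rw [f2]; exact h⟩
  obtain ⟨s, hs⟩ := hs
  have e5 := split_meas (hkc s) (V := V')
  set C := V' ∩ {z : X | z k = s} with hC
  set D := V' \ {z : X | z k = s} with hD
  have hCc : IsClopen C := hV'c.inter (hkc s)
  have hDc : IsClopen D := hV'c.diff (hkc s)
  obtain ⟨Q, hQ, hQc, hQm⟩ := exists_sub hU'c ((Dy.of_clopen hDc).min (Dy.of_clopen hU'c).half)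
    ((min_le_right _ _).trans (by linarith))
  have e6 := sub_meas hQc hQ
  have hUQ : IsClopen (U' \ Q) := hU'c.diff hQc
  obtain ⟨lv, hlv⟩ := lab4 (V := V) (A := V \ K') (B := V1) (C := C) (D := D)
    (fun z => by
      have := @hV1 z
      simp only [hC, hD, hV', mem_inter_iff, mem_diff, mem_setOf_eq] at this ⊢
      tauto)
    (fun z hz hz' => hz.2 (hV1 hz').2) (fun z hz hz' => hz.2 hz'.1.1.2)
    (fun z hz hz' => hz.2 hz'.1.1.2) (fun z hz hz' => hz'.1.2 hz) (fun z hz hz' => hz'.1.2 hz)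
    (fun z hz hz' => hz'.2 hz.2)
  obtain ⟨lu, hlu⟩ := lab4 (V := U) (A := U1) (B := (U \ U1) \ K') (C := U' \ Q) (D := Q)
    (fun z => by
      have := @hU1 z
      have := @hQ z
      simp only [hU', mem_inter_iff, mem_diff] at this ⊢
      tauto)
    (fun z hz hz' => hz'.1.2 hz) (fun z hz hz' => hz'.1.1.2 hz)
    (fun z hz hz' => (hQ hz').1.2 hz) (fun z hz hz' => hz.2 hz'.1.2)
    (fun z hz hz' => hz.2 (hQ hz').2) (fun z hz hz' => hz.2 hz')
  have hclv : ∀ i, IsClopen {z | z ∈ V ∧ lv z = i} := fun i => by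
    rw [hlv]; exact sel_clopen hVK hV1c hCc hDc i
  have hclu : ∀ i, IsClopen {z | z ∈ U ∧ lu z = i} := fun i => by
    rw [hlu]; exact sel_clopen hU1c hRK hUQ hQc i
  have hsmall : ∀ A ⊆ K', mu.real (A \ K) ≤ δ/5 := fun A hA =>
    (measureReal_mono (diff_subset_diff_left hA)).trans hζ.le
  have hinv : ∀ A B : Set X, A ⊆ K' → B ⊆ K' → δ/2 ≤ mu.real A → δ/2 ≤ mu.real B → Inv K A B := by
    intro A B hA hB h1 h2
    have := hsmall A hA
    have := hsmall B hB
    constructor <;> linarith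
  refine ⟨lv, lu, hclv, hclu, fun i => ?_⟩
  have hrw : (∃ c : Bool, ∀ z, z ∈ V → lv z = i → z k = c) ↔
      ∃ c : Bool, ∀ z ∈ {z | z ∈ V ∧ lv z = i}, z k = c := by
    simp only [mem_setOf_eq, and_imp]
  rw [hrw, hlv, hlu]
  have hVK' : V' ⊆ K' := fun z hz => hz.1.2
  have hUK' : U' ⊆ K' := fun z hz => hz.2
  rcases i with _ | _ | _ | _ | i
  · left; simp only [sel]; exact hU1m.symm
  · left; simp only [sel]; exact hV1m
  · right
    simp only [sel]
    refine ⟨hinv _ _ (fun z hz => hVK' hz.1) (fun z hz => hUK' hz.1) (by linarith) ?_,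
      s, fun z hz => hz.2⟩
    have := min_le_right (mu.real D) (mu.real U' / 2)
    linarith
  · simp only [sel]
    rcases le_total (mu.real D) (mu.real U' / 2) with h | h
    · left; rw [hQm, min_eq_left h]
    · right
      rw [min_eq_right h] at hQm
      refine ⟨hinv _ _ (fun z hz => hVK' hz.1) (fun z hz => hUK' (hQ hz)) (by linarith)
        (by linarith), !s, fun z hz => ?_⟩
      have : z k ≠ s := hz.2
      revert this
      cases z k <;> cases s <;> simp
  · left; simp only [sel]

theorem inv_symm {K V U : Set X} (h : Inv K V U) : Inv K U V :=
  ⟨by rw [add_comm]; exact h.2, by rw [add_comm]; exact h.1⟩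

/-- the offer of the offerer in the measure argument -/
theorem step' {K : Set X} (hK : IsClosed K) {st : St} (hg : Good st)
    (h : Inv K (st false) (st true)) (k : ℕ) (b : Bool) : ∃ o : Offer, ValidO st o ∧ ∀ i,
      mu.real (piece st o false i) = mu.real (piece st o true i) ∨
        (Inv K (piece st o false i) (piece st o true i) ∧ ∃ c : Bool, ∀ z ∈ piece st o b i, z k = c) := by
  have hb : Inv K (st b) (st (!b)) := by
    cases b
    · exact h
    · exact inv_symm h
  obtain ⟨lv, lu, h1, h2, h3⟩ := step hK (hg b).1 (hg (!b)).1 hb k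
  let o : Offer := fun c => if c = b then lv else lu
  have pb : ∀ i, piece st o b i = {z | z ∈ st b ∧ lv z = i} := by
    intro i; ext z; simp [piece, o]
  have pb' : ∀ i, piece st o (!b) i = {z | z ∈ st (!b) ∧ lu z = i} := by
    intro i; ext z; simp [piece, o]
  have key : ∀ i, mu.real (piece st o b i) = mu.real (piece st o (!b) i) ∨
        (Inv K (piece st o b i) (piece st o (!b) i) ∧
          ∃ c : Bool, ∀ z ∈ piece st o b i, z k = c) := by
    intro i
    rw [pb, pb']
    rcases h3 i with h | ⟨h, c, hc⟩
    · exact Or.inl h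
    · exact Or.inr ⟨h, c, fun z hz => hc z hz.1 hz.2⟩
  have hcl : ∀ c i, IsClopen (piece st o c i) := by
    intro c i
    by_cases hc : c = b
    · subst hc; rw [pb]; exact h1 i
    · have : c = !b := by cases c <;> cases b <;> simp_all
      subst this; rw [pb']; exact h2 i
  have hne : ∀ i, (piece st o b i).Nonempty ↔ (piece st o (!b) i).Nonempty := by
    intro i
    rw [← mu_pos (hcl _ _), ← mu_pos (hcl _ _)]
    rcases key i with h | ⟨⟨ha, hb⟩, _⟩
    · rw [h]
    · have hn : ∀ A : Set X, 0 ≤ mu.real A := fun A => measureReal_nonneg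
      have := hn (piece st o b i \ K)
      have := hn (piece st o (!b) i \ K)
      exact ⟨fun _ => by linarith, fun _ => by linarith⟩
  refine ⟨o, ⟨hcl, fun i c d => ?_⟩, fun i => ?_⟩
  · have := hne i
    cases b <;> cases c <;> cases d <;> simp_all
  · cases b
    · exact key i
    · rcases key i with h | ⟨h, h'⟩
      · exact Or.inl h.symm
      · exact Or.inr ⟨inv_symm h, h'⟩

theorem all_sim {S : Set X} (hm : @MeasurableSet X (borel X) S)
    (hS : ∀ x ∈ S, ∀ y : X, {n | x n ≠ y n}.Finite → y ∈ S) {V U : Set X} (hV : IsClopen V)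
    (hU : IsClopen U) (hVn : V.Nonempty) (hUn : U.Nonempty) : Sim S V U := by
  classical
  let st0 : St := fun b => if b then U else V
  have hg : Good st0 := by
    intro b
    cases b
    · exact ⟨hV, hVn⟩
    · exact ⟨hU, hUn⟩
  rcases det hm st0 with h | h
  · exact offWins_sim hg h
  exfalso
  have hm' : MeasurableSet S := by
    rw [← BorelSpace.measurable_eq (α := X)] at hm; exact hm
  have pV := (mu_pos hV).2 hVn
  have pU := (mu_pos hU).2 hUn
  obtain ⟨K, hK, hKe, hKS⟩ := exists_K hm' hS (ε := min (mu.real V) (mu.real U) / 2)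
    (by have := lt_min pV pU; linarith)
  have hinv0 : Inv K V U := by
    have h1 : mu.real (V \ K) ≤ mu.real Kᶜ := measureReal_mono fun z hz => hz.2
    have h2 : mu.real (U \ K) ≤ mu.real Kᶜ := measureReal_mono fun z hz => hz.2
    have h3 := min_le_left (mu.real V) (mu.real U)
    have h4 := min_le_right (mu.real V) (mu.real U)
    constructor <;> linarith
  let F : ℕ → St → Offer := fun n st =>
    if h : Good st ∧ Inv K (st false) (st true) then
      (step' hK h.1 h.2 (n/2) (decide (n % 2 = 1))).choose else fun _ _ => 0
  obtain ⟨x, hx, hxW, hns⟩ := chWins_run hg h F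
  have hgood := run_good hg x
  have hstep : ∀ n, Inv K (run st0 x n false) (run st0 x n true) →
      Inv K (run st0 x (n+1) false) (run st0 x (n+1) true) ∧
      ∃ c : Bool, ∀ z ∈ run st0 x (n+1) (decide (n % 2 = 1)), z (n/2) = c := by
    intro n hn
    have hcond : Good (run st0 x n) ∧ Inv K (run st0 x n false) (run st0 x n true) := ⟨hgood n, hn⟩
    have ho : (x (2*n)).1 = (step' hK hcond.1 hcond.2 (n/2) (decide (n % 2 = 1))).choose := by
      rw [hx]; exact dif_pos hcond
    have hspec := (step' hK hcond.1 hcond.2 (n/2) (decide (n % 2 = 1))).choose_spec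
    rw [← ho] at hspec
    obtain ⟨j, hj, hu⟩ := upd_valid hspec.1 (hgood n) (x (2*n+1)).2
    have hr : ∀ b, run st0 x (n+1) b = piece (run st0 x n) (x (2*n)).1 b j := hu
    rcases hspec.2 j with h | ⟨h, h'⟩
    · exfalso
      rw [← hr, ← hr] at h
      exact hns (n+1) (sim_of_eq hS (hgood (n+1) false).1 (hgood (n+1) true).1 h)
    · rw [hr, hr, hr]; exact ⟨h, h'⟩
  have hinv : ∀ n, Inv K (run st0 x n false) (run st0 x n true) := by
    intro n
    induction n with
    | zero => exact hinv0
    | succ n ih => exact (hstep n ih).1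
  have hshrink : ∀ b, Shrink fun n => run st0 x n b := by
    intro b k
    refine ⟨2*k + b.toNat + 1, ?_⟩
    obtain ⟨c, hc⟩ := (hstep (2*k + b.toNat) (hinv _)).2
    have e1 : (2*k + b.toNat) / 2 = k := by cases b <;> simp; omega
    have e2 : decide ((2*k + b.toNat) % 2 = 1) = b := by cases b <;> simp
    rw [e1, e2] at hc
    exact ⟨c, hc⟩
  have hlimK : ∀ b, lim st0 x b ∈ K := by
    intro b
    obtain ⟨p, hp⟩ := exists_mem_all (V := fun n => run st0 x n b ∩ K)
      (fun m n h => inter_subset_inter_left _ (run_anti st0 x b h))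
      (fun n => (hgood n b).1.1.inter hK) (fun n => by
        by_contra hc
        have hd : run st0 x n b \ K = run st0 x n b := by
          rw [sdiff_eq_left, disjoint_iff_inter_eq_empty]
          exact not_nonempty_iff_eq_empty.1 hc
        have hn : ∀ A : Set X, 0 ≤ mu.real A := fun A => measureReal_nonneg
        obtain ⟨i1, i2⟩ := hinv n
        have j1 := hn (run st0 x n false \ K)
        have j2 := hn (run st0 x n true \ K)
        cases b <;> rw [hd] at i1 i2 <;> linarith)
    rw [lim_eq (hshrink b) (fun n => (hp n).1)]
    exact (hp 0).2
  exact hxW ⟨hshrink, hKS _ (hlimK false) _ (hlimK true)⟩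

end SFG

namespace SFG

theorem glue {S : Set X} {D E : ℕ → Set X} (hD : ∀ n, IsClopen (D n)) (hE : ∀ n, IsClopen (E n))
    (dD : ∀ m n x, x ∈ D m → x ∈ D n → m = n) (dE : ∀ m n x, x ∈ E m → x ∈ E n → m = n)
    (h : ∀ n, Sim S (D n) (E n)) : Sim S (⋃ n, D n) (⋃ n, E n) := by
  classical
  choose f g hf hg hgf hfg hfc hgc hfS using h
  let G : (ℕ → Set X) → (ℕ → X → X) → X → X := fun D f x =>
    if h : ∃ n, x ∈ D n then f h.choose x else x
  have hG : ∀ (D : ℕ → Set X) (f : ℕ → X → X), (∀ m n x, x ∈ D m → x ∈ D n → m = n) →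
      ∀ n, ∀ x ∈ D n, G D f x = f n x := by
    intro D f hd n x hx
    have hex : ∃ n, x ∈ D n := ⟨n, hx⟩
    simp only [G, dif_pos hex]
    rw [hd _ _ x hex.choose_spec hx]
  have hc : ∀ (D : ℕ → Set X) (f : ℕ → X → X), (∀ n, IsClopen (D n)) →
      (∀ m n x, x ∈ D m → x ∈ D n → m = n) → (∀ n, ContinuousOn (f n) (D n)) →
      ContinuousOn (G D f) (⋃ n, D n) := by
    intro D f ho hd hf x hx
    obtain ⟨n, hn⟩ := mem_iUnion.1 hx
    have h1 : ContinuousOn (G D f) (D n) := (hf n).congr (hG D f hd n)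
    exact (h1.continuousAt ((ho n).2.mem_nhds hn)).continuousWithinAt
  refine ⟨G D f, G E g, ?_, ?_, ?_, ?_, hc D f hD dD hfc, hc E g hE dE hgc, ?_⟩
  · intro x hx
    obtain ⟨n, hn⟩ := mem_iUnion.1 hx
    rw [hG D f dD n x hn]
    exact mem_iUnion.2 ⟨n, hf n hn⟩
  · intro x hx
    obtain ⟨n, hn⟩ := mem_iUnion.1 hx
    rw [hG E g dE n x hn]
    exact mem_iUnion.2 ⟨n, hg n hn⟩
  · intro x hx
    obtain ⟨n, hn⟩ := mem_iUnion.1 hx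
    rw [hG D f dD n x hn, hG E g dE n _ (hf n hn), hgf n x hn]
  · intro x hx
    obtain ⟨n, hn⟩ := mem_iUnion.1 hx
    rw [hG E g dE n x hn, hG D f dD n _ (hg n hn), hfg n x hn]
  · intro x hx
    obtain ⟨n, hn⟩ := mem_iUnion.1 hx
    rw [hG D f dD n x hn]
    exact hfS n x hn

theorem exists_decomp {O : Set X} (hO : IsOpen O) {p : X} (hp : p ∈ O) :
    ∃ D : ℕ → Set X, (∀ n, IsClopen (D n)) ∧ (∀ n, (D n).Nonempty) ∧
      (∀ m n x, x ∈ D m → x ∈ D n → m = n) ∧ (⋃ n, D n) = O \ {p} := by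
  classical
  obtain ⟨M, hM⟩ := open_pre hO hp
  let B : ℕ → Set X := fun m => {x | pre m x = pre m p}
  have hB : ∀ m, IsClopen (B m) := fun m => isClopen_pre m {pre m p}
  have hBanti : Antitone B := fun m n h x hx => pre_eq_iff.2 fun i hi => pre_eq_iff.1 hx i (by omega)
  let A : ℕ → Set X := fun m => {x | ∀ y, pre m y = pre m x → y ∈ O}
  have hA : ∀ m, IsClopen (A m) := fun m => isClopen_pre m {w | ∀ y, pre m y = w → y ∈ O}
  have hAmono : Monotone A := fun m n h x hx y hy =>
    hx y (pre_eq_iff.2 fun i hi => pre_eq_iff.1 hy i (by omega))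
  let A' : ℕ → Set X := fun m => match m with
    | 0 => A 0
    | m+1 => A (m+1) \ A m
  have hA' : ∀ m, IsClopen (A' m) := by
    intro m
    cases m with
    | zero => exact hA 0
    | succ m => exact (hA (m+1)).diff (hA m)
  have hA'sub : ∀ m, A' m ⊆ A m := by
    intro m
    cases m with
    | zero => exact subset_rfl
    | succ m => exact diff_subset
  have hA'lt : ∀ m n, m < n → ∀ x ∈ A' m, x ∉ A' n := by
    intro m n h x hx hx'
    cases n with
    | zero => omega
    | succ n => exact hx'.2 (hAmono (by omega) (hA'sub m hx))
  have hA'd : ∀ m n x, x ∈ A' m → x ∈ A' n → m = n := by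
    intro m n x h1 h2
    rcases lt_trichotomy m n with h | h | h
    · exact absurd h2 (hA'lt m n h x h1)
    · exact h
    · exact absurd h1 (hA'lt n m h x h2)
  have hA'ex : ∀ x ∈ O, ∃ m, x ∈ A' m := by
    intro x hx
    have hex : ∃ m, x ∈ A m := by
      obtain ⟨m, hm⟩ := open_pre hO hx
      exact ⟨m, hm⟩
    refine ⟨Nat.find hex, ?_⟩
    have h1 := Nat.find_spec hex
    have h2 := fun m => @Nat.find_min _ _ hex m
    revert h1 h2
    generalize Nat.find hex = m
    intro h1 h2
    cases m with
    | zero => exact h1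
    | succ m => exact ⟨h1, h2 m (by omega)⟩
  have hBlt : ∀ m n, m < n → ∀ x, x ∈ B (M+m) \ B (M+m+1) → x ∉ B (M+n) \ B (M+n+1) := by
    intro m n h x hx hx'
    exact hx.2 (hBanti (by omega) hx'.1)
  refine ⟨fun m => (A' m \ B M) ∪ (B (M+m) \ B (M+m+1)), fun m => ?_, fun m => ?_, ?_, ?_⟩
  · exact ((hA' m).diff (hB M)).union ((hB _).diff (hB _))
  · refine ⟨fun i => if i = M + m then !p i else p i, Or.inr ⟨?_, ?_⟩⟩
    · refine pre_eq_iff.2 fun i hi => ?_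
      have : i ≠ M + m := by omega
      simp [this]
    · intro hc
      have := pre_eq_iff.1 hc (M+m) (by omega)
      simp at this
  · intro m n x h1 h2
    have hBM : ∀ m, x ∈ B (M+m) \ B (M+m+1) → x ∈ B M := fun m h => hBanti (by omega) h.1
    rcases h1 with h1 | h1 <;> rcases h2 with h2 | h2
    · exact hA'd m n x h1.1 h2.1
    · exact absurd (hBM n h2) h1.2
    · exact absurd (hBM m h1) h2.2
    · rcases lt_trichotomy m n with h | h | h
      · exact absurd h2 (hBlt m n h x h1)
      · exact h
      · exact absurd h1 (hBlt n m h x h2)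
  · ext x
    rw [mem_iUnion]
    constructor
    · rintro ⟨m, h | h⟩
      · refine ⟨hA'sub m h.1 x rfl, ?_⟩
        rintro rfl
        exact h.2 rfl
      · refine ⟨hM x (hBanti (by omega : M ≤ M + m) h.1), ?_⟩
        rintro rfl
        exact h.2 rfl
    · rintro ⟨hx, hxp⟩
      by_cases hxB : x ∈ B M
      · have hex : ∃ m, x ∉ B (M+m+1) := by
          by_contra hc
          push Not at hc
          apply hxp
          funext i
          exact pre_eq_iff.1 (hc i) i (by omega)
        refine ⟨Nat.find hex, Or.inr ⟨?_, Nat.find_spec hex⟩⟩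
        have h2 := fun m => @Nat.find_min _ _ hex m
        revert h2
        generalize Nat.find hex = m
        intro h2
        cases m with
        | zero => exact hxB
        | succ m => exact not_not.1 (h2 m (by omega))
      · obtain ⟨m, hm⟩ := hA'ex x hx
        exact ⟨m, Or.inl ⟨hm, hxB⟩⟩

theorem main {S : Set X} (hm : @MeasurableSet X (borel X) S)
    (hS : ∀ x ∈ S, ∀ y : X, {n | x n ≠ y n}.Finite → y ∈ S) (h0 : (fun _ => false) ∉ S)
    (U : Set S) (hU : IsClopen U) (hne : U.Nonempty) : Nonempty (U ≃ₜ S) := by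
  obtain ⟨O, hO, rfl⟩ := isOpen_induced_iff.1 hU.2
  obtain ⟨z, hz⟩ := hne
  obtain ⟨M, hM⟩ := open_pre hO (x := z.1) hz
  have hns : ∀ p : X, (∀ i ≥ M, p i = false) → p ∉ S := by
    intro p hp hpS
    refine h0 (hS p hpS _ ((Set.finite_Iio M).subset fun i hi => ?_))
    by_contra hc
    exact hi (hp i (not_lt.1 hc))
  let p : X := fun i => if i < M then z.1 i else false
  have hpO : p ∈ O := hM p (pre_eq_iff.2 fun i hi => by simp [p, hi])
  have hpS : p ∉ S := hns p fun i hi => by simp [p, hi]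
  obtain ⟨D, d1, d2, d3, d4⟩ := exists_decomp hO hpO
  obtain ⟨E, e1, e2, e3, e4⟩ := exists_decomp isOpen_univ (mem_univ p)
  have hsim := glue d1 e1 d3 e3 fun n => all_sim hm hS (d1 n) (e1 n) (d2 n) (e2 n)
  rw [d4, e4] at hsim
  obtain ⟨f, g, hf, hg, hgf, hfg, hfc, hgc, hfS⟩ := hsim
  have hmem : ∀ u : (Subtype.val ⁻¹' O : Set S), u.1.1 ∈ O \ {p} := fun u =>
    ⟨u.2, fun h => hpS (by have h' : u.1.1 = p := h; rw [← h']; exact u.1.2)⟩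
  have hmem' : ∀ s : S, s.1 ∈ univ \ {p} := fun s =>
    ⟨mem_univ _, fun h => hpS (by have h' : s.1 = p := h; rw [← h']; exact s.2)⟩
  have hgS : ∀ y ∈ univ \ {p}, y ∈ S → g y ∈ S := fun y hy hyS =>
    (hfS _ (hg hy)).1 (by rw [hfg y hy]; exact hyS)
  exact ⟨{
    toFun := fun u => ⟨f u.1.1, (hfS _ (hmem u)).2 u.1.2⟩
    invFun := fun s => ⟨⟨g s.1, hgS _ (hmem' s) s.2⟩, (hg (hmem' s)).1⟩
    left_inv := fun u => Subtype.ext (Subtype.ext (hgf _ (hmem u)))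
    right_inv := fun s => Subtype.ext (hfg _ (hmem' s))
    continuous_toFun := Continuous.subtype_mk
      (hfc.comp_continuous (continuous_subtype_val.comp continuous_subtype_val) hmem) _
    continuous_invFun := Continuous.subtype_mk (Continuous.subtype_mk
      (hgc.comp_continuous continuous_subtype_val hmem') _) _ }⟩

end SFG

/-- Every Borel semifilter is strongly homogeneous. -/
theorem borel_semifilter_strongly_homogeneous (S : Set Cantor)
    (hB : @MeasurableSet Cantor (borel Cantor) S) (hS : IsSemifilter S) :
    ∀ U : Set S, IsClopen U → U.Nonempty → Nonempty (U ≃ₜ S) := by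
  exact fun U hU hne => SFG.main hB hS.2.2.2 hS.1 U hU hne
end

section
/- Let G be an infinite prefilter on ω, i.e., an infinite collection of subsets of ω that is upward-closed and closed under finite intersections. Then either G is homeomorphic to the Cantor space 2^ω, or G is homeomorphic to a filter on ω. -/
open Set

/-- Every infinite prefilter is homeomorphic to Cantor space or to a filter. -/
theorem infinite_prefilter_cantor_or_filter (G : Set Cantor) (hinf : G.Infinite)
    (hup : UpwardClosed G) (hint : ClosedUnderInter G) :
    Nonempty (G ≃ₜ Cantor) ∨ ∃ F : Set Cantor, IsFilterOnOmega F ∧ Nonempty (G ≃ₜ F) := by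
  classical
  let B : Set ℕ := {n | ∃ x ∈ G, x n = false}
  have hB : ∀ x ∈ G, ∀ n, n ∉ B → x n = true := by
    intro x hx n hn
    by_contra h
    exact hn ⟨x, hx, by simpa using h⟩
  have hBinf : B.Infinite := by
    intro hfin
    have : Finite B := hfin
    apply hinf
    have hinj : Function.Injective (fun (x : G) (b : B) => x.1 b.1) := by
      intro x y hxy
      apply Subtype.ext
      funext n
      by_cases hn : n ∈ B
      · exact congrFun hxy ⟨n, hn⟩
      · rw [hB x.1 x.2 n hn, hB y.1 y.2 n hn]
    have : Finite G := Finite.of_injective _ hinj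
    exact Set.toFinite G
  have : Infinite B := hBinf.to_subtype
  obtain ⟨e⟩ : Nonempty (ℕ ≃ B) := ⟨(Nat.Subtype.orderIsoOfNat B).toEquiv⟩
  let ext : Cantor → Cantor := fun z n => if h : n ∈ B then z (e.symm ⟨n, h⟩) else true
  let res : Cantor → Cantor := fun x k => x (e k)
  have hres : ∀ x ∈ G, ext (res x) = x := by
    intro x hx
    funext n
    by_cases hn : n ∈ B
    · simp [ext, res, hn]
    · simp [ext, hn, hB x hx n hn]
  have hext : ∀ z, res (ext z) = z := by
    intro z
    funext k
    simp [ext, res]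
  have cext : Continuous ext := by
    refine continuous_pi fun n => ?_
    by_cases hn : n ∈ B
    · simpa [ext, hn] using continuous_apply _
    · simpa [ext, hn] using continuous_const
  have cres : Continuous res := continuous_pi fun k => continuous_apply _
  let F : Set Cantor := ext ⁻¹' G
  have hresF : ∀ x : G, res x.1 ∈ F := by
    intro x
    change ext (res x.1) ∈ G
    rw [hres x.1 x.2]; exact x.2
  let H : G ≃ₜ F :=
    { toFun := fun x => ⟨res x.1, hresF x⟩
      invFun := fun z => ⟨ext z.1, z.2⟩
      left_inv := fun x => Subtype.ext (hres x.1 x.2)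
      right_inv := fun z => Subtype.ext (hext z.1)
      continuous_toFun := (cres.comp continuous_subtype_val).subtype_mk hresF
      continuous_invFun := (cext.comp continuous_subtype_val).subtype_mk (fun z : F => z.2) }
  have hmono : ∀ x y : Cantor, (∀ k, x k = true → y k = true) →
      ∀ n, ext x n = true → ext y n = true := by
    intro x y h n
    by_cases hn : n ∈ B
    · simpa [ext, hn] using h _
    · simp [ext, hn]
  have Fup : UpwardClosed F := fun x hx y h => hup _ hx _ (hmono x y h)
  have Fint : ClosedUnderInter F := by
    intro x hx y hy
    have := hint _ hx _ hy
    change ext (fun n => x n && y n) ∈ G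
    convert this using 1
    funext n
    by_cases hn : n ∈ B <;> simp [ext, hn]
  have Ftop : (fun _ => true) ∈ F := by
    obtain ⟨x, hx⟩ := hinf.nonempty
    exact Fup (res x) (H ⟨x, hx⟩).2 _ (fun _ _ => rfl)
  have Fcof : ∀ D : Finset ℕ, (fun k => decide (k ∉ D)) ∈ F := by
    intro D
    induction D using Finset.induction_on with
    | empty => simpa using Ftop
    | insert a D _ ih =>
      obtain ⟨x, hx, hxa⟩ := (e a).2
      refine Fup _ (Fint _ ih _ (H ⟨x, hx⟩).2) _ ?_
      intro k hk
      have hk' : (decide (k ∉ D) && x (e k)) = true := hk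
      simp only [Bool.and_eq_true, decide_eq_true_eq] at hk' ⊢
      rw [Finset.mem_insert]
      rintro (rfl | h)
      · rw [hxa] at hk'
        exact absurd hk'.2 (by simp)
      · exact hk'.1 h
  have Fmod : ClosedUnderFinMod F := by
    intro x hx y hfin
    refine Fup _ (Fint _ hx _ (Fcof hfin.toFinset)) _ ?_
    intro k hk
    simp at hk
    rw [← hk.2]; exact hk.1
  by_cases h0 : (fun _ => false) ∈ F
  · left
    have hF : F = Set.univ := Set.eq_univ_of_forall fun y => Fup _ h0 y (by simp)
    exact ⟨H.trans ((Homeomorph.setCongr hF).trans (Homeomorph.Set.univ Cantor))⟩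
  · exact Or.inr ⟨F, ⟨⟨h0, Ftop, Fup, Fmod⟩, Fint⟩, ⟨H⟩⟩
end

section
/- There exists a filter on ω that, as a subspace of the Cantor space 2^ω, is homeomorphic to the space ℚ of rational numbers, and there exists a filter on ω that, as a subspace of 2^ω, is homeomorphic to the product ℚ × 2^ω. -/
open Set

/-- Sequences that agree with the parity sequence only finitely often. -/
structure TwQ where
  val : Cantor
  fin : {n | val n = decide (Odd n)}.Finite

namespace TwQ

theorem val_injective : Function.Injective TwQ.val := by
  rintro ⟨a, _⟩ ⟨b, _⟩ h
  cases h
  rfl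

instance : TopologicalSpace TwQ := TopologicalSpace.induced TwQ.val inferInstance

noncomputable instance : LinearOrder TwQ :=
  LinearOrder.lift' (fun x => toLex x.val) (fun _ _ h => val_injective (toLex.injective h))

theorem lt_def (a b : TwQ) : a < b ↔ ∃ i, (∀ j < i, a.val j = b.val j) ∧ a.val i < b.val i :=
  Iff.rfl

theorem continuous_eval (n : ℕ) : Continuous (fun x : TwQ => x.val n) :=
  (continuous_apply n).comp continuous_induced_dom

def upd (x : TwQ) (m : ℕ) (b : Bool) : TwQ where
  val := Function.update x.val m b
  fin := by
    refine (x.fin.union (Set.finite_singleton m)).subset ?_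
    intro n hn
    by_cases h : n = m
    · right; exact h
    · left
      simpa [Function.update_of_ne h] using hn

theorem upd_same (x : TwQ) (m : ℕ) (b : Bool) : (upd x m b).val m = b := by simp [upd]

theorem upd_ne (x : TwQ) {m n : ℕ} (b : Bool) (h : n ≠ m) : (upd x m b).val n = x.val n := by
  simp [upd, h]

theorem exists_val (x : TwQ) (n : ℕ) (b : Bool) : ∃ m, n < m ∧ x.val m = b := by
  obtain ⟨N, hN⟩ := x.fin.bddAbove
  have key : ∀ m, N < m → x.val m = !decide (Odd m) := by
    intro m hm
    by_contra h
    have h2 : x.val m = decide (Odd m) := by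
      revert h; cases x.val m <;> cases decide (Odd m) <;> simp
    exact absurd (hN h2) (by omega)
  cases b
  · refine ⟨2 * (N + n) + 1, by omega, ?_⟩
    rw [key _ (by omega)]; simp
  · refine ⟨2 * (N + n + 1), by omega, ?_⟩
    rw [key _ (by omega)]; simp

theorem exists_lt_agree (x : TwQ) (n : ℕ) : ∃ a, a < x ∧ ∀ j ≤ n, a.val j = x.val j := by
  obtain ⟨m, hm, hx⟩ := exists_val x n true
  refine ⟨upd x m false, (lt_def _ _).2 ⟨m, fun j hj => upd_ne x _ (by omega), ?_⟩,
    fun j hj => upd_ne x _ (by omega)⟩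
  rw [upd_same, hx]; decide

theorem exists_gt_agree (x : TwQ) (n : ℕ) : ∃ a, x < a ∧ ∀ j ≤ n, a.val j = x.val j := by
  obtain ⟨m, hm, hx⟩ := exists_val x n false
  refine ⟨upd x m true, (lt_def _ _).2 ⟨m, fun j hj => (upd_ne x _ (by omega)).symm, ?_⟩,
    fun j hj => upd_ne x _ (by omega)⟩
  rw [upd_same, hx]; decide

instance : NoMinOrder TwQ := ⟨fun x => (exists_lt_agree x 0).imp fun _ h => h.1⟩
instance : NoMaxOrder TwQ := ⟨fun x => (exists_gt_agree x 0).imp fun _ h => h.1⟩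

instance : DenselyOrdered TwQ := ⟨fun x y h => by
  obtain ⟨i, hi, hlt⟩ := (lt_def _ _).1 h
  obtain ⟨a, ha, hag⟩ := exists_gt_agree x i
  refine ⟨a, ha, (lt_def _ _).2 ⟨i, fun j hj => ?_, ?_⟩⟩
  · rw [hag j hj.le, hi j hj]
  · rw [hag i le_rfl]; exact hlt⟩

instance : Nonempty TwQ := ⟨⟨fun n => !decide (Odd n), by simp⟩⟩

instance : Countable TwQ := by
  have : Function.Injective (fun x : TwQ => x.fin.toFinset) := by
    intro x y h
    apply val_injective
    funext n
    have h1 : n ∈ x.fin.toFinset ↔ n ∈ y.fin.toFinset := by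
      simp only at h; rw [h]
    simp only [Set.Finite.mem_toFinset, Set.mem_ofPred_eq] at h1
    revert h1
    cases x.val n <;> cases y.val n <;> cases decide (Odd n) <;> simp
  exact this.countable

theorem isOpen_lt_aux (R : Bool → Bool → Prop) (a : TwQ) :
    IsOpen {y : TwQ | ∃ i, (∀ j < i, a.val j = y.val j) ∧ R (a.val i) (y.val i)} := by
  rw [Set.ofPred_exists]
  refine isOpen_iUnion fun i => ?_
  have h1 : IsOpen {y : TwQ | ∀ j < i, a.val j = y.val j} := by
    have : {y : TwQ | ∀ j < i, a.val j = y.val j}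
        = ⋂ j ∈ Set.Iio i, (fun y : TwQ => y.val j) ⁻¹' {b | a.val j = b} := by
      ext y; simp [eq_comm]
    rw [this]
    exact (Set.finite_Iio i).isOpen_biInter fun j _ =>
      (isOpen_discrete _).preimage (continuous_eval j)
  exact h1.inter ((isOpen_discrete {b | R (a.val i) b}).preimage (continuous_eval i))

theorem between {a x c y : TwQ} {n : ℕ} (h1 : a < y) (h2 : y < c)
    (ha : ∀ j ≤ n, a.val j = x.val j) (hc : ∀ j ≤ n, c.val j = x.val j) :
    ∀ j ≤ n, y.val j = x.val j := by
  obtain ⟨i, hi, hil⟩ := (lt_def _ _).1 h1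
  obtain ⟨k, hk, hkl⟩ := (lt_def _ _).1 h2
  intro j hj
  by_cases hji : j < i
  · rw [← hi j hji, ha j hj]
  by_cases hjk : j < k
  · rw [hk j hjk, hc j hj]
  exfalso
  rcases lt_trichotomy i k with h | h | h
  · rw [hk i h, hc i (by omega), ha i (by omega)] at hil
    exact lt_irrefl _ hil
  · subst h
    rw [hc i (by omega), ← ha i (by omega)] at hkl
    exact lt_asymm hil hkl
  · rw [← hi k h, hc k (by omega), ha k (by omega)] at hkl
    exact lt_irrefl _ hkl

instance : OrderTopology TwQ := ⟨by
  apply le_antisymm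
  · apply le_generateFrom
    rintro s ⟨a, rfl | rfl⟩
    · exact isOpen_lt_aux (fun p q => p < q) a
    · convert isOpen_lt_aux (fun p q => q < p) a using 1
      ext y
      simp only [Set.mem_Iio, lt_def, Set.mem_ofPred_eq, eq_comm]
  · letI t : TopologicalSpace TwQ := Preorder.topology TwQ
    haveI : @OrderTopology TwQ t _ := ⟨rfl⟩
    change t ≤ TopologicalSpace.induced TwQ.val inferInstance
    rw [← continuous_iff_le_induced]
    refine continuous_pi fun n => ?_
    rw [continuous_discrete_rng]
    intro b
    rw [isOpen_iff_mem_nhds]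
    intro x hx
    obtain ⟨a, hax, ha⟩ := exists_lt_agree x n
    obtain ⟨c, hxc, hc⟩ := exists_gt_agree x n
    refine Filter.mem_of_superset (Ioo_mem_nhds hax hxc) ?_
    intro y hy
    have := between hy.1 hy.2 ha hc n le_rfl
    simp only [Set.mem_preimage, Set.mem_singleton_iff] at hx ⊢
    rw [this, hx]⟩

theorem nonempty_homeo_rat : Nonempty (TwQ ≃ₜ ℚ) := by
  obtain ⟨e⟩ := Order.iso_of_countable_dense TwQ ℚ
  exact ⟨e.toHomeomorph⟩

end TwQ

def CofF : Set Cantor := {x | {n | x n = false}.Finite}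

def cofHomeo : CofF ≃ₜ TwQ where
  toFun x := ⟨fun n => xor (x.1 n) (decide (Odd n)), by
    have : {n | xor (x.1 n) (decide (Odd n)) = decide (Odd n)} = {n | x.1 n = false} := by
      ext n
      change (xor (x.1 n) (decide (Odd n)) = decide (Odd n)) ↔ x.1 n = false
      cases x.1 n <;> cases decide (Odd n) <;> simp
    rw [this]; exact x.2⟩
  invFun y := ⟨fun n => xor (y.val n) (decide (Odd n)), by
    have : {n | xor (y.val n) (decide (Odd n)) = false} = {n | y.val n = decide (Odd n)} := by
      ext n; simp
    change Set.Finite _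
    rw [this]; exact y.fin⟩
  left_inv x := by ext n; simp
  right_inv y := by apply TwQ.val_injective; funext n; simp
  continuous_toFun := by
    refine continuous_induced_rng.2 (continuous_pi fun n => ?_)
    exact (continuous_of_discreteTopology (f := fun b => xor b (decide (Odd n)))).comp
      ((continuous_apply n).comp continuous_subtype_val)
  continuous_invFun := by
    refine Continuous.subtype_mk (continuous_pi fun n => ?_) _
    exact (continuous_of_discreteTopology (f := fun b => xor b (decide (Odd n)))).comp
      (TwQ.continuous_eval n)

/-- Sets whose even part is cofinite. -/
def EvF : Set Cantor := {x | {n | x (2 * n) = false}.Finite}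

def evHomeo : EvF ≃ₜ CofF × Cantor where
  toFun x := (⟨fun n => x.1 (2 * n), x.2⟩, fun n => x.1 (2 * n + 1))
  invFun p := ⟨fun n => if Even n then p.1.1 (n / 2) else p.2 (n / 2), by
    have := p.1.2
    change Set.Finite _ at this
    change Set.Finite _
    simpa using this⟩
  left_inv x := by
    ext n
    rcases Nat.even_or_odd n with h | h
    · simp [h, Nat.two_mul_div_two_of_even h]
    · simp [h, Nat.two_mul_div_two_add_one_of_odd h]
  right_inv p := by
    ext n
    · simp
    · have h : (2 * n + 1) / 2 = n := by omega
      simp [h]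
  continuous_toFun := by
    refine Continuous.prodMk (Continuous.subtype_mk (continuous_pi fun n => ?_) _)
      (continuous_pi fun n => ?_)
    · exact (continuous_apply (2 * n)).comp continuous_subtype_val
    · exact (continuous_apply (2 * n + 1)).comp continuous_subtype_val
  continuous_invFun := by
    refine Continuous.subtype_mk (continuous_pi fun n => ?_) _
    split_ifs
    · exact (continuous_apply (n / 2)).comp (continuous_subtype_val.comp continuous_fst)
    · exact (continuous_apply (n / 2)).comp continuous_snd

theorem isFilter_pull (f : ℕ → ℕ) (hf : Function.Injective f) :
    IsFilterOnOmega {x : Cantor | {n | x (f n) = false}.Finite} := by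
  refine ⟨⟨?_, ?_, ?_, ?_⟩, ?_⟩
  · simpa using Set.infinite_univ (α := ℕ)
  · simp
  · intro x hx y hxy
    refine Set.Finite.subset hx fun n hn => ?_
    have := hxy (f n)
    simp only [Set.mem_ofPred_eq] at hn ⊢
    rw [hn] at this
    simpa using this
  · intro x hx y hxy
    refine Set.Finite.subset (Set.Finite.union hx (hxy.preimage hf.injOn)) fun n hn => ?_
    simp only [Set.mem_ofPred_eq] at hn
    simp only [Set.mem_union, Set.mem_ofPred_eq, Set.mem_preimage, hn]
    cases x (f n) <;> simp
  · intro x hx y hy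
    refine Set.Finite.subset (Set.Finite.union hx hy) fun n hn => ?_
    change (x (f n) && y (f n)) = false at hn
    change x (f n) = false ∨ y (f n) = false
    revert hn
    cases x (f n) <;> simp

/-- There exist filters homeomorphic to ℚ and to ℚ × 2^ω. -/
theorem exists_filter_homeomorphic_rat_and_rat_cantor :
    (∃ F : Set Cantor, IsFilterOnOmega F ∧ Nonempty (F ≃ₜ ℚ)) ∧
      (∃ F : Set Cantor, IsFilterOnOmega F ∧ Nonempty (F ≃ₜ (ℚ × Cantor))) := by
  obtain ⟨e⟩ := TwQ.nonempty_homeo_rat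
  refine ⟨⟨CofF, isFilter_pull id Function.injective_id, ⟨cofHomeo.trans e⟩⟩,
    ⟨EvF, isFilter_pull (fun n => 2 * n) (fun a b h => by simpa using h),
      ⟨evHomeo.trans ((cofHomeo.trans e).prodCongr (Homeomorph.refl _))⟩⟩⟩
end

section
/- There exists a semifilter S on ω such that, as a subspace of the Cantor space 2^ω: (i) S is the union of a completely metrizable subspace and a σ-compact subspace; (ii) no nonempty relatively open subset of S is σ-compact; and (iii) no nonempty relatively open subset of S is the union of a completely metrizable subspace and a countable subspace. (Consequently S is homeomorphic to van Mill's space 𝐒.) -/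
open Set

open Filter Topology

lemma aux_completelyMetrizable_of_isGδ {A : Set Cantor} (hA : IsGδ A) :
    CompletelyMetrizable A := by
  obtain ⟨U, hU, rfl⟩ := hA.eq_iInter_nat
  have hb : PolishSpace Bool := by
    have : TopologicalSpace.IsCompletelyMetrizableSpace Bool :=
      TopologicalSpace.IsCompletelyMetrizableSpace.discrete
    infer_instance
  have hC : PolishSpace Cantor := by
    have : TopologicalSpace.IsCompletelyMetrizableSpace Cantor :=
      TopologicalSpace.IsCompletelyMetrizableSpace.pi_countable
    infer_instance
  have hP : ∀ n, PolishSpace (U n) := fun n => (hU n).polishSpace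
  let f : (⋂ n, U n : Set Cantor) → (∀ n, U n) := fun x n => ⟨x.1, Set.mem_iInter.1 x.2 n⟩
  have hf : Continuous f := by
    refine continuous_pi fun n => ?_
    exact Continuous.subtype_mk continuous_subtype_val _
  have hg : Continuous (fun y : (∀ n, U n) => (y 0).1) :=
    continuous_subtype_val.comp (continuous_apply 0)
  have he : IsEmbedding f :=
    IsEmbedding.of_comp hf hg (IsEmbedding.subtypeVal)
  have hr : Set.range f = ⋂ n, {y | (y n).1 = (y 0).1} := by
    ext y
    simp only [Set.mem_range, Set.mem_iInter, Set.mem_ofPred_eq]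
    constructor
    · rintro ⟨x, rfl⟩ n
      rfl
    · intro h
      refine ⟨⟨(y 0).1, Set.mem_iInter.2 fun n => h n ▸ (y n).2⟩, ?_⟩
      funext n
      exact Subtype.ext (h n).symm
  have hc : IsClosed (Set.range f) := by
    rw [hr]
    exact isClosed_iInter fun n =>
      isClosed_eq (continuous_subtype_val.comp (continuous_apply n)) hg
  have : TopologicalSpace.IsCompletelyMetrizableSpace (⋂ n, U n : Set Cantor) :=
    IsClosedEmbedding.IsCompletelyMetrizableSpace (f := f) ⟨he, hc⟩
  exact this.complete

def auxFin : Set Cantor := {z | ∀ᶠ k in atTop, z k = false}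

lemma auxFin_countable : auxFin.Countable := by
  refine (Set.countable_range (fun s : Finset ℕ => (fun k => decide (k ∈ s) : Cantor))).mono ?_
  intro z hz
  obtain ⟨N, hN⟩ := eventually_atTop.1 (show ∀ᶠ k in atTop, z k = false from hz)
  refine ⟨(Finset.range N).filter (fun k => z k = true), ?_⟩
  funext k
  by_cases hk : k < N
  · simp [hk]
  · simp [hk, hN k (not_lt.1 hk)]

lemma auxFin_not_completelyMetrizable : ¬ CompletelyMetrizable auxFin := by
  rintro ⟨m, hm, hc⟩
  have hcm : TopologicalSpace.IsCompletelyMetrizableSpace auxFin := ⟨⟨m, hm, hc⟩⟩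
  have hB : BaireSpace auxFin := by
    let := TopologicalSpace.upgradeIsCompletelyMetrizable auxFin
    infer_instance
  have hcount : Countable auxFin := auxFin_countable.to_subtype
  have hd : ∀ q : auxFin, Dense ({q}ᶜ : Set auxFin) := by
    intro q p
    by_cases hpq : p = q
    · subst hpq
      have hmem : ∀ n, Function.update p.1 n (!p.1 n) ∈ auxFin := by
        intro n
        have h : ∀ᶠ k in atTop, p.1 k = false := p.2
        show ∀ᶠ k in atTop, Function.update p.1 n (!p.1 n) k = false
        filter_upwards [h, eventually_gt_atTop n] with k hk hn
        rw [Function.update_of_ne (by omega), hk]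
      refine mem_closure_of_tendsto (f := fun n : ℕ => (⟨_, hmem n⟩ : auxFin)) (b := atTop) ?_ ?_
      · rw [tendsto_subtype_rng, tendsto_pi_nhds]
        intro k
        refine tendsto_const_nhds.congr' ?_
        filter_upwards [eventually_gt_atTop k] with n hn
        rw [Function.update_of_ne (by omega)]
      · refine Eventually.of_forall fun n => ?_
        intro h
        have h2 := congrFun (congrArg Subtype.val (Set.mem_singleton_iff.1 h)) n
        simp at h2
    · exact subset_closure hpq
  have hD := dense_iInter_of_isOpen (f := fun q : auxFin => ({q}ᶜ : Set auxFin))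
    (fun q => isOpen_compl_singleton) hd
  have : Nonempty auxFin := ⟨⟨fun _ => false, Eventually.of_forall fun _ => rfl⟩⟩
  obtain ⟨x, hx⟩ := hD.nonempty
  exact Set.mem_iInter.1 hx x rfl

def auxA : Set Cantor := {x | ∃ᶠ k in atTop, x (3 * k) = true}

def auxB : Set Cantor := {x | ∀ᶠ k in atTop, x (3 * k + 1) = true}

lemma auxA_isGδ : IsGδ auxA := by
  have : auxA = ⋂ n : ℕ, ⋃ k : ℕ, ⋃ _ : n ≤ k, {x : Cantor | x (3 * k) = true} := by
    ext x
    simp [auxA, frequently_atTop]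
  rw [this]
  refine IsGδ.iInter_of_isOpen fun n => isOpen_iUnion fun k => isOpen_iUnion fun _ => ?_
  exact (isOpen_discrete ({true} : Set Bool)).preimage
    (continuous_apply (3 * k) : Continuous fun x : Cantor => x (3 * k))

lemma auxB_sigma : SigmaCompactSpace auxB := by
  rw [← isSigmaCompact_iff_sigmaCompactSpace]
  have : auxB = ⋃ n : ℕ, ⋂ k : ℕ, ⋂ _ : n ≤ k, {x : Cantor | x (3 * k + 1) = true} := by
    ext x
    simp [auxB, eventually_atTop]
  rw [this]
  refine isSigmaCompact_iUnion_of_isCompact _ fun n => IsClosed.isCompact ?_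
  refine isClosed_iInter fun k => isClosed_iInter fun _ => ?_
  exact (isClosed_discrete ({true} : Set Bool)).preimage
    (continuous_apply (3 * k + 1) : Continuous fun x : Cantor => x (3 * k + 1))

lemma aux_semifilter : IsSemifilter (auxA ∪ auxB) := by
  refine ⟨?_, ?_, ?_, ?_⟩
  · simp only [auxA, auxB, Set.mem_union, Set.mem_ofPred_eq]
    simp [-eventually_atTop, (atTop_neBot (α := ℕ)).ne]
  · right
    exact Eventually.of_forall fun _ => rfl
  · rintro x (hx | hx) y hxy
    · exact Or.inl (Frequently.mono hx fun k hk => hxy _ hk)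
    · exact Or.inr (Eventually.mono hx fun k hk => hxy _ hk)
  · intro x hx y hxy
    have h : ∀ᶠ n in atTop, x n = y n := by
      rw [← Nat.cofinite_eq_atTop, eventually_cofinite]
      exact hxy
    have t0 : Tendsto (fun k : ℕ => 3 * k) atTop atTop :=
      tendsto_atTop_mono (fun k => by simp only [id]; omega) tendsto_id
    have t1 : Tendsto (fun k : ℕ => 3 * k + 1) atTop atTop :=
      tendsto_atTop_mono (fun k => by simp only [id]; omega) tendsto_id
    rcases hx with hx | hx
    · left
      refine (Frequently.and_eventually hx (t0.eventually h)).mono ?_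
      rintro k ⟨h1, h2⟩
      rw [← h2, h1]
    · right
      refine (Eventually.and hx (t1.eventually h)).mono ?_
      rintro k ⟨h1, h2⟩
      rw [← h2, h1]

/-- Splicing: copy `u` below `3 * N`, then interleave three sequences. -/
def auxG (u : Cantor) (N : ℕ) (a b c : Cantor) : Cantor := fun n =>
  if n < 3 * N then u n else
    if n % 3 = 0 then a (n / 3 - N) else if n % 3 = 1 then b (n / 3 - N) else c (n / 3 - N)

lemma auxG_zero (u : Cantor) (N : ℕ) (a b c : Cantor) (k : ℕ) (hk : N ≤ k) :
    auxG u N a b c (3 * k) = a (k - N) := by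
  have h1 : ¬ 3 * k < 3 * N := by omega
  have h2 : 3 * k % 3 = 0 := by omega
  have h3 : 3 * k / 3 = k := by omega
  simp only [auxG, if_neg h1, if_pos h2, h3]

lemma auxG_one (u : Cantor) (N : ℕ) (a b c : Cantor) (k : ℕ) (hk : N ≤ k) :
    auxG u N a b c (3 * k + 1) = b (k - N) := by
  have h1 : ¬ 3 * k + 1 < 3 * N := by omega
  have h2 : ¬ (3 * k + 1) % 3 = 0 := by omega
  have h2' : (3 * k + 1) % 3 = 1 := by omega
  have h3 : (3 * k + 1) / 3 = k := by omega
  simp only [auxG, if_neg h1, if_neg h2, if_pos h2', h3]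

lemma auxG_two (u : Cantor) (N : ℕ) (a b c : Cantor) (k : ℕ) (hk : N ≤ k) :
    auxG u N a b c (3 * k + 2) = c (k - N) := by
  have h1 : ¬ 3 * k + 2 < 3 * N := by omega
  have h2 : ¬ (3 * k + 2) % 3 = 0 := by omega
  have h2' : ¬ (3 * k + 2) % 3 = 1 := by omega
  have h3 : (3 * k + 2) / 3 = k := by omega
  simp only [auxG, if_neg h1, if_neg h2, if_neg h2', h3]

lemma aux_eventually_sub (N : ℕ) (P : ℕ → Prop) :
    (∀ᶠ k in atTop, P (k - N)) ↔ ∀ᶠ k in atTop, P k := by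
  rw [← eventually_map (m := fun k => k - N) (P := P), map_sub_atTop_eq_nat]

lemma auxG_mem_A (u : Cantor) (N : ℕ) (a b c : Cantor) :
    auxG u N a b c ∈ auxA ↔ a ∉ auxFin := by
  have : (∀ᶠ k in atTop, auxG u N a b c (3 * k) = false) ↔ ∀ᶠ k in atTop, a k = false := by
    rw [← aux_eventually_sub N (fun k => a k = false)]
    refine eventually_congr ?_
    filter_upwards [eventually_ge_atTop N] with k hk
    rw [auxG_zero _ _ _ _ _ _ hk]
  show (∃ᶠ k in atTop, auxG u N a b c (3 * k) = true) ↔ ¬ (∀ᶠ k in atTop, a k = false)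
  rw [← this]
  simp [Filter.Frequently]

lemma auxG_mem_B (u : Cantor) (N : ℕ) (a b c : Cantor) :
    auxG u N a b c ∈ auxB ↔ ∀ᶠ k in atTop, b k = true := by
  rw [← aux_eventually_sub N (fun k => b k = true)]
  refine eventually_congr ?_
  filter_upwards [eventually_ge_atTop N] with k hk
  rw [auxG_one _ _ _ _ _ _ hk]

lemma auxG_continuous (u : Cantor) (N : ℕ) (a b c : Cantor → Cantor)
    (ha : Continuous a) (hb : Continuous b) (hc : Continuous c) :
    Continuous (fun z => auxG u N (a z) (b z) (c z)) := by
  refine continuous_pi fun n => ?_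
  unfold auxG
  split_ifs
  · exact continuous_const
  · exact (continuous_apply _).comp ha
  · exact (continuous_apply _).comp hb
  · exact (continuous_apply _).comp hc

lemma aux_open {V : Set Cantor} (hV : IsOpen V) {u : Cantor} (hu : u ∈ V) :
    ∃ N, ∀ a b c, auxG u N a b c ∈ V := by
  obtain ⟨I, w, hw, hI⟩ := isOpen_pi_iff.1 hV u hu
  refine ⟨I.sup id + 1, fun a b c => hI fun i hi => ?_⟩
  have : i ≤ I.sup id := Finset.le_sup (f := id) hi
  have h : i < 3 * (I.sup id + 1) := by omega
  simp only [auxG, if_pos h]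
  exact (hw i hi).2

lemma aux_part_two (V : Set Cantor) (hV : IsOpen V)
    (hne : ((auxA ∪ auxB) ∩ V).Nonempty) : ¬ SigmaCompactSpace ↥((auxA ∪ auxB) ∩ V) := by
  intro hs
  rw [← isSigmaCompact_iff_sigmaCompactSpace] at hs
  obtain ⟨K, hK, hKU⟩ := hs
  obtain ⟨u, -, hu⟩ := hne
  obtain ⟨N, hN⟩ := aux_open hV hu
  let f : Cantor → Cantor := fun z => auxG u N z (fun _ => false) (fun _ => false)
  have hf : Continuous f :=
    auxG_continuous u N _ _ _ continuous_id continuous_const continuous_const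
  apply auxFin_not_completelyMetrizable
  apply aux_completelyMetrizable_of_isGδ
  have : auxFin = ⋂ n, (f ⁻¹' (K n))ᶜ := by
    rw [← Set.compl_iUnion, ← Set.preimage_iUnion, hKU]
    ext z
    have h1 : f z ∈ auxA ↔ z ∉ auxFin := auxG_mem_A _ _ _ _ _
    have h2 : f z ∉ auxB := by
      show auxG _ _ _ _ _ ∉ auxB
      rw [auxG_mem_B]
      simp [-eventually_atTop, (atTop_neBot (α := ℕ)).ne]
    have h3 : f z ∈ V := hN _ _ _
    simp [h1, h2, h3]
  rw [this]
  exact IsGδ.iInter_of_isOpen fun n => ((hK n).isClosed.preimage hf).isOpen_compl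

lemma aux_part_three (V : Set Cantor) (hV : IsOpen V)
    (hne : ((auxA ∪ auxB) ∩ V).Nonempty) (A B : Set Cantor)
    (hAB : (auxA ∪ auxB) ∩ V = A ∪ B) (hA : CompletelyMetrizable A) (hB : B.Countable) :
    False := by
  obtain ⟨u, -, hu⟩ := hne
  obtain ⟨N, hN⟩ := aux_open hV hu
  have hunc : ∃ y : Cantor, y ∉ (fun b : Cantor => (fun k => b (3 * (k + N) + 2) : Cantor)) '' B := by
    by_contra! h
    have : (Set.univ : Set Cantor).Countable := (hB.image _).mono fun y _ => h y
    have hc : Countable Cantor := Set.countable_univ_iff.1 this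
    obtain ⟨e, he⟩ := exists_surjective_nat Cantor
    obtain ⟨n, hn⟩ := he (fun k => !e k k)
    have := congrFun hn n
    simp at this
  obtain ⟨y, hy⟩ := hunc
  let f : Cantor → Cantor := fun z => auxG u N (fun _ => false) (fun k => !z k) y
  have hf : Continuous f := by
    refine auxG_continuous u N _ _ _ continuous_const ?_ continuous_const
    exact continuous_pi fun k => (continuous_of_discreteTopology (f := not)).comp (continuous_apply k)
  have hinj : Function.Injective f := by
    intro z z' h
    funext k
    have := congrFun h (3 * (k + N) + 1)
    simp only [f] at this
    rw [auxG_one _ _ _ _ _ _ (by omega), auxG_one _ _ _ _ _ _ (by omega)] at this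
    simpa using this
  have hfc : IsClosedEmbedding f := hf.isClosedEmbedding hinj
  have hnB : ∀ z, f z ∉ B := by
    intro z hz
    refine hy ⟨f z, hz, ?_⟩
    funext k
    show auxG _ _ _ _ _ _ = _
    rw [auxG_two _ _ _ _ _ _ (by omega)]
    congr 1
    omega
  have hpre : f ⁻¹' A = auxFin := by
    ext z
    have h1 : f z ∉ auxA := by
      show auxG _ _ _ _ _ ∉ auxA
      rw [auxG_mem_A]
      simp [auxFin]
    have h2 : f z ∈ auxB ↔ z ∈ auxFin := by
      show auxG _ _ _ _ _ ∈ auxB ↔ _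
      rw [auxG_mem_B]
      simp [auxFin]
    have h3 : f z ∈ V := hN _ _ _
    have h4 : f z ∈ (auxA ∪ auxB) ∩ V ↔ f z ∈ A ∪ B := by rw [hAB]
    simp only [Set.mem_inter_iff, Set.mem_union, h1, h2, h3, hnB z] at h4
    simp only [Set.mem_preimage]
    tauto
  apply auxFin_not_completelyMetrizable
  rw [← hpre]
  have hA' : TopologicalSpace.IsCompletelyMetrizableSpace A := ⟨hA⟩
  have he : IsClosedEmbedding (A.restrictPreimage f) := hfc.restrictPreimage A
  exact he.IsCompletelyMetrizableSpace.complete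

/-- There is a semifilter homeomorphic to van Mill's space 𝐒. -/
theorem exists_semifilter_vanMill_S :
    ∃ S : Set Cantor, IsSemifilter S ∧
      (∃ A B : Set Cantor, S = A ∪ B ∧ CompletelyMetrizable A ∧ SigmaCompactSpace B) ∧
      (∀ U : Set Cantor, (∃ V : Set Cantor, IsOpen V ∧ U = S ∩ V) → U.Nonempty →
        ¬ SigmaCompactSpace U) ∧
      (∀ U : Set Cantor, (∃ V : Set Cantor, IsOpen V ∧ U = S ∩ V) → U.Nonempty →
        ¬ ∃ A B : Set Cantor, U = A ∪ B ∧ CompletelyMetrizable A ∧ B.Countable) := by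
  refine ⟨auxA ∪ auxB, aux_semifilter,
    ⟨auxA, auxB, rfl, aux_completelyMetrizable_of_isGδ auxA_isGδ, auxB_sigma⟩, ?_, ?_⟩
  · rintro U ⟨V, hV, rfl⟩ hne
    exact aux_part_two V hV hne
  · rintro U ⟨V, hV, rfl⟩ hne ⟨A, B, hAB, hA, hB⟩
    exact aux_part_three V hV hne A B hAB hA hB
end
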